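/- Let 0 < α ≤ 1 and 0 < d < π, assume hypotheses (H_SE,α,d), and for each positive integer N let h = √(πd/(αN)). Let u ∈ C([a,b]) satisfy u(t) = g(t) + ∫_a^t k(t,s)u(s) ds for all t ∈ [a,b]. Then there exists a positive integer N₀ such that for every N ≥ N₀ the coefficient matrix E_n^RZ − V_n^RZ is invertible, and there exists a constant C independent of N such that for all N ≥ N₀, max_{t∈[a,b]} |u(t) − w_N^RZ(t)| ≤ C·√N·e^{−√(πdαN)}, where w_N^RZ is the Rashidinia–Zarebnia SE-Sinc-collocation solution. -/

import Mathlib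

/-!
Convergence of the Rashidinia–Zarebnia SE-Sinc-collocation method for Volterra equations.

The Volterra equation is transplanted by the SE transformation to the strip `D_d`, where the integral
runs along horizontal rays. Its Picard series converges to a bounded holomorphic function `U` on the
strip (`VoltData.exists_solution`), which on the real axis is `u ∘ ψ` by uniqueness
(`VoltData.unique_real`). The Hölder conditions at the end points, together with the independence of
line integrals of the height of the line (`StripDecay.integral_line_eq`), show that `U` approaches
`u a` and `u b` at the two ends like `e^{-α|Re ζ|}` (`VoltData.norm_solution_sub_left`,
`VoltData.norm_solution_sub_right`). Hence `U` minus the interpolant of its end values is holomorphic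
with exponential decay (`stripDecay_remainder`).

For such functions Cauchy's formula on the strip and the partial fractions of the cosecant express
the error of the cardinal series as a contour integral with the factor `1/sin(πz/h)`
(`StripDecay.hasSum_cardinal`). Letting the contour tend to the boundary of the strip gives errors of
order `e^{-πd/h}` for sinc interpolation (`StripDecay.norm_cardinal_error_le`) and, after one
integration by parts, for sinc indefinite integration (`StripDecay.norm_indef_error_le`). With
`h = √(πd/(αN))` the truncation errors are of the order `e^{-√(πdαN)}` too, up to a factor `√N` for
interpolation.

On the discrete side, `E - V^RZ = (I - V^SE) E` (`RZ_factor`), so the node values of the collocation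
solution solve the Nyström system with matrix `I - V^SE`. This system is stable uniformly in `N`
(`exists_stability`): `δ_m^{(-1)}` is a square-summable perturbation of the Heaviside sequence, the
Heaviside part is controlled by a discrete Gronwall inequality, and the perturbation is absorbed for
small `h` (`heaviside_stability`). The node errors are thus of order `e^{-√(πdαN)}`; passing from the
nodes to all of `[a, b]` costs the sum `Σ_j |S(j,h)|`, which is at most a constant times `√N` by
Cauchy–Schwarz (`sum_abs_sincF_le`). The estimates are combined in `convergence_of_strip`.
-/

namespace SincVolterra

noncomputable section

/-- The sine integral `Si(x) = ∫₀ˣ (sin τ)/τ dτ`. -/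
def Si (x : ℝ) : ℝ := ∫ τ in (0:ℝ)..x, Real.sin τ / τ

/-- The Sinc function `S(j,h)(x)`. -/
def sincF (j : ℤ) (h x : ℝ) : ℝ :=
  if x = (j : ℝ) * h then 1
  else Real.sin (Real.pi * (x - (j : ℝ) * h) / h) / (Real.pi * (x - (j : ℝ) * h) / h)

/-- `J(j,h)(x) = h (1/2 + (1/π) Si(π(x - jh)/h))`. -/
def Jfun (j : ℤ) (h x : ℝ) : ℝ :=
  h * (1/2 + (1/Real.pi) * Si (Real.pi * (x - (j : ℝ) * h) / h))

/-- The tanh (SE) transformation. -/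
def psiSE (a b x : ℝ) : ℝ := (b - a)/2 * Real.tanh (x/2) + (b + a)/2

/-- The inverse of the SE transformation. -/
def phiSE (a b t : ℝ) : ℝ := Real.log ((t - a)/(b - t))

/-- The double-exponential (DE) transformation. -/
def psiDE (a b x : ℝ) : ℝ := (b - a)/2 * Real.tanh (Real.pi/2 * Real.sinh x) + (b + a)/2

/-- The inverse of the DE transformation. -/
def phiDE (a b t : ℝ) : ℝ := Real.arsinh (1/Real.pi * Real.log ((t - a)/(b - t)))

/-- The SE transformation as a complex map. -/
def psiSEC (a b : ℝ) (z : ℂ) : ℂ :=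
  (((b : ℂ) - (a : ℂ))/2) * Complex.tanh (z/2) + ((b : ℂ) + (a : ℂ))/2

/-- The DE transformation as a complex map. -/
def psiDEC (a b : ℝ) (z : ℂ) : ℂ :=
  (((b : ℂ) - (a : ℂ))/2) * Complex.tanh (((Real.pi : ℂ))/2 * Complex.sinh z) + ((b : ℂ) + (a : ℂ))/2

/-- The strip `D_d = {ζ : |Im ζ| < d}`. -/
def Dstrip (d : ℝ) : Set ℂ := {z : ℂ | |z.im| < d}

/-- `D = ψ^SE(D_d)`. -/
def DSE (a b d : ℝ) : Set ℂ := psiSEC a b '' Dstrip d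

def omA (a b t : ℝ) : ℝ := (b - t)/(b - a)

def omB (a b t : ℝ) : ℝ := (t - a)/(b - a)

/-- The SE collocation points `t_j^SE = ψ^SE(jh)`. -/
def tSE (a b h : ℝ) (j : ℤ) : ℝ := psiSE a b ((j : ℝ) * h)

/-- The DE collocation points `t_j^DE = ψ^DE(jh)`. -/
def tDE (a b h : ℝ) (j : ℤ) : ℝ := psiDE a b ((j : ℝ) * h)

/-- `δ_m^{(-1)} = 1/2 + (1/π) Si(π m)`. -/
def deltaM (m : ℤ) : ℝ := 1/2 + (1/Real.pi) * Si (Real.pi * (m : ℝ))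

/-- `J(j,h)(φ^SE(t))`, extended continuously to `t = a` (value 0) and `t = b` (value h). -/
def JSEext (a b h : ℝ) (j : ℤ) (t : ℝ) : ℝ :=
  if t ≤ a then 0 else if b ≤ t then h else Jfun j h (phiSE a b t)

/-- `J(j,h)(φ^DE(t))`, extended continuously to `t = a` (value 0) and `t = b` (value h). -/
def JDEext (a b h : ℝ) (j : ℤ) (t : ℝ) : ℝ :=
  if t ≤ a then 0 else if b ≤ t then h else Jfun j h (phiDE a b t)

/-- The operator `V_N^SE`, with the continuous extension to `t = a, b` built in. -/
def VNSE (a b h : ℝ) (N : ℕ) (k : ℝ → ℝ → ℂ) (f : ℝ → ℂ) (t : ℝ) : ℂ :=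
  ∑ j ∈ Finset.Icc (-(N:ℤ)) (N:ℤ),
    k t (tSE a b h j) * f (tSE a b h j) * ((deriv (psiSE a b) ((j : ℝ) * h) : ℝ) : ℂ)
      * ((JSEext a b h j t : ℝ) : ℂ)

/-- The operator `V_N^DE`, with the continuous extension to `t = a, b` built in. -/
def VNDE (a b h : ℝ) (N : ℕ) (k : ℝ → ℝ → ℂ) (f : ℝ → ℂ) (t : ℝ) : ℂ :=
  ∑ j ∈ Finset.Icc (-(N:ℤ)) (N:ℤ),
    k t (tDE a b h j) * f (tDE a b h j) * ((deriv (psiDE a b) ((j : ℝ) * h) : ℝ) : ℂ)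
      * ((JDEext a b h j t : ℝ) : ℂ)

/-- The generalized SE-Sinc approximation operator `P_N^SE`. -/
def PNSE (a b h : ℝ) (N : ℕ) (f : ℝ → ℂ) (t : ℝ) : ℂ :=
  if t ≤ a then f (tSE a b h (-(N:ℤ)))
  else if b ≤ t then f (tSE a b h (N:ℤ))
  else f (tSE a b h (-(N:ℤ))) * ((omA a b t : ℝ) : ℂ) + f (tSE a b h (N:ℤ)) * ((omB a b t : ℝ) : ℂ)
    + ∑ j ∈ Finset.Icc (-(N:ℤ)) (N:ℤ),
        (f (tSE a b h j) - f (tSE a b h (-(N:ℤ))) * ((omA a b (tSE a b h j) : ℝ) : ℂ)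
          - f (tSE a b h (N:ℤ)) * ((omB a b (tSE a b h j) : ℝ) : ℂ))
          * ((sincF j h (phiSE a b t) : ℝ) : ℂ)

/-- The generalized DE-Sinc approximation operator `P_N^DE`. -/
def PNDE (a b h : ℝ) (N : ℕ) (f : ℝ → ℂ) (t : ℝ) : ℂ :=
  if t ≤ a then f (tDE a b h (-(N:ℤ)))
  else if b ≤ t then f (tDE a b h (N:ℤ))
  else f (tDE a b h (-(N:ℤ))) * ((omA a b t : ℝ) : ℂ) + f (tDE a b h (N:ℤ)) * ((omB a b t : ℝ) : ℂ)
    + ∑ j ∈ Finset.Icc (-(N:ℤ)) (N:ℤ),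
        (f (tDE a b h j) - f (tDE a b h (-(N:ℤ))) * ((omA a b (tDE a b h j) : ℝ) : ℂ)
          - f (tDE a b h (N:ℤ)) * ((omB a b (tDE a b h j) : ℝ) : ℂ))
          * ((sincF j h (phiDE a b t) : ℝ) : ℂ)

/-- `Δ_N = ω_a(t_{-N})ω_b(t_N) - ω_b(t_{-N})ω_a(t_N)`. -/
def DeltaN (a b h : ℝ) (N : ℕ) : ℝ :=
  omA a b (tSE a b h (-(N:ℤ))) * omB a b (tSE a b h (N:ℤ))
    - omB a b (tSE a b h (-(N:ℤ))) * omA a b (tSE a b h (N:ℤ))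

def betaN (a b h : ℝ) (N : ℕ) (f : ℝ → ℂ) : ℂ :=
  (f (tSE a b h (-(N:ℤ))) * ((omB a b (tSE a b h (N:ℤ)) : ℝ) : ℂ)
    - f (tSE a b h (N:ℤ)) * ((omB a b (tSE a b h (-(N:ℤ))) : ℝ) : ℂ)) / ((DeltaN a b h N : ℝ) : ℂ)

def gammaN (a b h : ℝ) (N : ℕ) (f : ℝ → ℂ) : ℂ :=
  (f (tSE a b h (N:ℤ)) * ((omA a b (tSE a b h (-(N:ℤ))) : ℝ) : ℂ)
    - f (tSE a b h (-(N:ℤ))) * ((omA a b (tSE a b h (N:ℤ)) : ℝ) : ℂ)) / ((DeltaN a b h N : ℝ) : ℂ)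

/-- The Rashidinia–Zarebnia interpolation operator `P_N^RZ`. -/
def PNRZ (a b h : ℝ) (N : ℕ) (f : ℝ → ℂ) (t : ℝ) : ℂ :=
  if t ≤ a then betaN a b h N f
  else if b ≤ t then gammaN a b h N f
  else betaN a b h N f * ((omA a b t : ℝ) : ℂ) + gammaN a b h N f * ((omB a b t : ℝ) : ℂ)
    + ∑ j ∈ Finset.Icc (-(N:ℤ)+1) ((N:ℤ)-1),
        (f (tSE a b h j) - betaN a b h N f * ((omA a b (tSE a b h j) : ℝ) : ℂ)
          - gammaN a b h N f * ((omB a b (tSE a b h j) : ℝ) : ℂ))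
          * ((sincF j h (phiSE a b t) : ℝ) : ℂ)

/-- Reindexing `Fin (2N+1)` as `{-N, …, N}`. -/
def zidx (N : ℕ) (i : Fin (2*N+1)) : ℤ := ((i : ℕ) : ℤ) - (N : ℤ)

/-- The matrix `V_n^SE`. -/
def VnSE (a b h : ℝ) (N : ℕ) (k : ℝ → ℝ → ℂ) : Matrix (Fin (2*N+1)) (Fin (2*N+1)) ℂ :=
  Matrix.of fun i j =>
    k (tSE a b h (zidx N i)) (tSE a b h (zidx N j))
      * ((deriv (psiSE a b) ((zidx N j : ℝ) * h) : ℝ) : ℂ) * ((h : ℝ) : ℂ)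
      * ((deltaM (zidx N i - zidx N j) : ℝ) : ℂ)

/-- The matrix `V_n^DE`. -/
def VnDE (a b h : ℝ) (N : ℕ) (k : ℝ → ℝ → ℂ) : Matrix (Fin (2*N+1)) (Fin (2*N+1)) ℂ :=
  Matrix.of fun i j =>
    k (tDE a b h (zidx N i)) (tDE a b h (zidx N j))
      * ((deriv (psiDE a b) ((zidx N j : ℝ) * h) : ℝ) : ℂ) * ((h : ℝ) : ℂ)
      * ((deltaM (zidx N i - zidx N j) : ℝ) : ℂ)

/-- The right-hand-side vector `g_n^SE`. -/
def gnSE (a b h : ℝ) (N : ℕ) (g : ℝ → ℂ) : Fin (2*N+1) → ℂ := fun i => g (tSE a b h (zidx N i))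

/-- The right-hand-side vector `g_n^DE`. -/
def gnDE (a b h : ℝ) (N : ℕ) (g : ℝ → ℂ) : Fin (2*N+1) → ℂ := fun i => g (tDE a b h (zidx N i))

/-- The matrix `E_n^RZ`. -/
def EnRZ (a b h : ℝ) (N : ℕ) : Matrix (Fin (2*N+1)) (Fin (2*N+1)) ℂ :=
  Matrix.of fun i j =>
    if (j : ℕ) = 0 then ((omA a b (tSE a b h (zidx N i)) : ℝ) : ℂ)
    else if (j : ℕ) = 2*N then ((omB a b (tSE a b h (zidx N i)) : ℝ) : ℂ)
    else if i = j then 1 else 0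

/-- The matrix `V_n^RZ`. -/
def VnRZ (a b h : ℝ) (N : ℕ) (k : ℝ → ℝ → ℂ) : Matrix (Fin (2*N+1)) (Fin (2*N+1)) ℂ :=
  Matrix.of fun i j =>
    if (j : ℕ) = 0 then VNSE a b h N k (fun t => ((omA a b t : ℝ) : ℂ)) (tSE a b h (zidx N i))
    else if (j : ℕ) = 2*N then VNSE a b h N k (fun t => ((omB a b t : ℝ) : ℂ)) (tSE a b h (zidx N i))
    else k (tSE a b h (zidx N i)) (tSE a b h (zidx N j))
      * ((deriv (psiSE a b) ((zidx N j : ℝ) * h) : ℝ) : ℂ) * ((h : ℝ) : ℂ)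
      * ((deltaM (zidx N i - zidx N j) : ℝ) : ℂ)

/-- The SE-Sinc-Nyström solution `u_N^SE` built from a solution vector `u` of the
linear system, with the continuous extension to the endpoints built in. -/
def uNSEf (a b h : ℝ) (N : ℕ) (k : ℝ → ℝ → ℂ) (g : ℝ → ℂ) (u : Fin (2*N+1) → ℂ) (t : ℝ) : ℂ :=
  g t + ∑ i : Fin (2*N+1),
    k t (tSE a b h (zidx N i)) * u i * ((deriv (psiSE a b) ((zidx N i : ℝ) * h) : ℝ) : ℂ)
      * ((JSEext a b h (zidx N i) t : ℝ) : ℂ)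

/-- The DE-Sinc-Nyström solution `u_N^DE` built from a solution vector `u` of the
linear system, with the continuous extension to the endpoints built in. -/
def uNDEf (a b h : ℝ) (N : ℕ) (k : ℝ → ℝ → ℂ) (g : ℝ → ℂ) (u : Fin (2*N+1) → ℂ) (t : ℝ) : ℂ :=
  g t + ∑ i : Fin (2*N+1),
    k t (tDE a b h (zidx N i)) * u i * ((deriv (psiDE a b) ((zidx N i : ℝ) * h) : ℝ) : ℂ)
      * ((JDEext a b h (zidx N i) t : ℝ) : ℂ)

/-- The Rashidinia–Zarebnia SE-Sinc-collocation solution `w_N^RZ` built from a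
coefficient vector `c`, with the continuous extension to the endpoints built in. -/
def wRZf (a b h : ℝ) (N : ℕ) (c : Fin (2*N+1) → ℂ) (t : ℝ) : ℂ :=
  if t ≤ a then c ⟨0, by omega⟩
  else if b ≤ t then c ⟨2*N, by omega⟩
  else c ⟨0, by omega⟩ * ((omA a b t : ℝ) : ℂ) + c ⟨2*N, by omega⟩ * ((omB a b t : ℝ) : ℂ)
    + ∑ j ∈ Finset.univ.filter (fun j : Fin (2*N+1) => (j : ℕ) ≠ 0 ∧ (j : ℕ) ≠ 2*N),
        c j * ((sincF (zidx N j) h (phiSE a b t) : ℝ) : ℂ)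

/-- The SE mesh size `h = √(πd/(αN))`. -/
def hstepSE (α d : ℝ) (N : ℕ) : ℝ := Real.sqrt (Real.pi * d / (α * N))

/-- The DE mesh size `h = log(2dN/α)/N`. -/
def hstepDE (α d : ℝ) (N : ℕ) : ℝ := Real.log (2*d*N/α) / N

section

open MeasureTheory Set Filter Topology

/-! ### The sine integral and the sinc functions -/

theorem Si_eq_integral_sinc (x : ℝ) : Si x = ∫ τ in (0:ℝ)..x, Real.sinc τ := by
  unfold Si
  refine intervalIntegral.integral_congr_ae ?_
  have : ∀ᵐ τ : ℝ, τ ≠ 0 := by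
    simp [ae_iff]
  filter_upwards [this] with τ hτ _
  rw [Real.sinc_of_ne_zero hτ]

theorem Si_neg (x : ℝ) : Si (-x) = -Si x := by
  rw [Si_eq_integral_sinc, Si_eq_integral_sinc]
  have := intervalIntegral.integral_comp_neg (f := Real.sinc) (a := 0) (b := x)
  simp only [Real.sinc_neg, neg_zero] at this
  rw [this, ← intervalIntegral.integral_symm]

theorem Si_sub (x y : ℝ) : Si x - Si y = ∫ τ in y..x, Real.sinc τ := by
  rw [Si_eq_integral_sinc, Si_eq_integral_sinc]
  exact intervalIntegral.integral_interval_sub_left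
    (Real.continuous_sinc.intervalIntegrable _ _) (Real.continuous_sinc.intervalIntegrable _ _)

/-- For fixed `s`, the truncated Laplace transform of `sin`. -/
theorem integral_exp_mul_sin (s R : ℝ) :
    ∫ x in (0:ℝ)..R, Real.exp (-(x * s)) * Real.sin x
      = (1 - Real.exp (-(R * s)) * (Real.cos R + s * Real.sin R)) / (1 + s ^ 2) := by
  have hs : (1 + s ^ 2) ≠ 0 := by positivity
  have hd : ∀ x ∈ uIcc 0 R, HasDerivAt
      (fun x => -(Real.exp (-(x * s)) * (Real.cos x + s * Real.sin x)) / (1 + s ^ 2))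
      (Real.exp (-(x * s)) * Real.sin x) x := by
    intro x _
    have h1 : HasDerivAt (fun x : ℝ => Real.exp (-(x * s))) (Real.exp (-(x * s)) * (-s)) x := by
      have := ((hasDerivAt_id x).mul_const s).neg.exp
      simpa using this
    have h2 : HasDerivAt (fun x : ℝ => Real.cos x + s * Real.sin x)
        (-Real.sin x + s * Real.cos x) x :=
      (Real.hasDerivAt_cos x).add ((Real.hasDerivAt_sin x).const_mul s)
    refine ((h1.mul h2).neg.div_const (1 + s ^ 2)).congr_deriv ?_
    rw [div_eq_iff hs]
    ring
  rw [intervalIntegral.integral_eq_sub_of_hasDerivAt hd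
    (Continuous.intervalIntegrable (by fun_prop) _ _)]
  simp
  field_simp
  ring

/-- The sine integral approaches `π/2` at rate `1/x`: writing `1/x = ∫₀^∞ e^{-xs} ds` and exchanging
the integrals leaves `π/2` minus an integral dominated by `∫₀^∞ e^{-xs} ds`. -/
theorem abs_Si_sub_le {R : ℝ} (hR : 0 < R) : |Si R - Real.pi / 2| ≤ 1 / R := by
  have hexp : ∀ x : ℝ, 0 < x → IntegrableOn (fun s => Real.exp (-(x * s))) (Ioi 0) := by
    intro x hx
    have := integrableOn_exp_mul_Ioi (a := -x) (by linarith) 0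
    simpa [neg_mul] using this
  have hexpv : ∀ x : ℝ, 0 < x → ∫ s in Ioi (0:ℝ), Real.exp (-(x * s)) = 1 / x := by
    intro x hx
    have := integral_exp_mul_Ioi (a := -x) (by linarith) 0
    simp only [neg_mul] at this
    rw [this]; simp
  have hIntg : Integrable (Function.uncurry fun x s : ℝ => Real.exp (-(x * s)) * Real.sin x)
      ((volume.restrict (Ioc 0 R)).prod (volume.restrict (Ioi 0))) := by
    rw [integrable_prod_iff (by
      apply Continuous.aestronglyMeasurable; unfold Function.uncurry; fun_prop)]
    constructor
    · refine (ae_restrict_iff' measurableSet_Ioc).2 (ae_of_all _ fun x hx => ?_)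
      exact (hexp x hx.1).mul_const (Real.sin x)
    · have : ∀ x ∈ Ioc 0 R, ∫ s in Ioi (0:ℝ), ‖Real.exp (-(x * s)) * Real.sin x‖ = |Real.sinc x| := by
        intro x hx
        simp_rw [norm_mul, Real.norm_eq_abs, abs_of_pos (Real.exp_pos _)]
        rw [integral_mul_const, hexpv x hx.1, Real.sinc_of_ne_zero hx.1.ne', abs_div,
          abs_of_pos hx.1]
        ring
      refine Integrable.congr (f := fun x => |Real.sinc x|)
        ((Real.continuous_sinc.abs.intervalIntegrable 0 R).1) ?_
      exact (ae_restrict_iff' measurableSet_Ioc).2 (ae_of_all _ fun x hx => (this x hx).symm)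
  have hswap := integral_integral_swap hIntg
  have h1 : Si R = ∫ x in Ioc 0 R, ∫ s in Ioi (0:ℝ), Real.exp (-(x * s)) * Real.sin x := by
    unfold Si
    rw [intervalIntegral.integral_of_le hR.le]
    refine setIntegral_congr_fun measurableSet_Ioc fun x hx => ?_
    rw [integral_mul_const, hexpv x hx.1]
    ring
  have hbd : ∀ s : ℝ, ‖Real.exp (-(R * s)) * (Real.cos R + s * Real.sin R) / (1 + s ^ 2)‖
      ≤ Real.exp (-(R * s)) := by
    intro s
    rw [norm_div, norm_mul, Real.norm_eq_abs, abs_of_pos (Real.exp_pos _), Real.norm_eq_abs,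
      Real.norm_eq_abs, abs_of_pos (by positivity : 0 < 1 + s ^ 2), div_le_iff₀ (by positivity)]
    refine mul_le_mul_of_nonneg_left ?_ (Real.exp_pos _).le
    have hsc := Real.sin_sq_add_cos_sq R
    rw [abs_le]
    constructor <;> nlinarith [sq_nonneg (s * Real.cos R - Real.sin R), sq_nonneg s,
      sq_nonneg (s * Real.sin R + 1), sq_nonneg (s * Real.sin R - 1), sq_nonneg (Real.cos R - 1),
      sq_nonneg (Real.cos R + 1), sq_nonneg (s - Real.sin R), sq_nonneg (s + Real.sin R),
      sq_nonneg (s * Real.cos R)]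
  have hrem : IntegrableOn (fun s : ℝ => Real.exp (-(R * s)) * (Real.cos R + s * Real.sin R)
      / (1 + s ^ 2)) (Ioi 0) := by
    refine Integrable.mono' (hexp R hR) ?_ ?_
    · apply Continuous.aestronglyMeasurable
      refine Continuous.div (by fun_prop) (by fun_prop) fun s => by positivity
    · exact ae_of_all _ hbd
  have h2 : Si R = Real.pi / 2 - ∫ s in Ioi (0:ℝ), Real.exp (-(R * s)) *
      (Real.cos R + s * Real.sin R) / (1 + s ^ 2) := by
    have hpi : Real.pi / 2 = ∫ s in Ioi (0:ℝ), (1 + s ^ 2)⁻¹ := by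
      rw [integral_Ioi_inv_one_add_sq, Real.arctan_zero, sub_zero]
    rw [h1, hswap, hpi, ← integral_sub ?_ hrem]
    · refine setIntegral_congr_fun measurableSet_Ioi fun s _ => ?_
      rw [← intervalIntegral.integral_of_le hR.le, integral_exp_mul_sin]
      ring
    · exact integrable_inv_one_add_sq.integrableOn
  rw [h2, sub_sub_cancel_left, abs_neg, ← Real.norm_eq_abs, ← hexpv R hR]
  exact norm_integral_le_of_norm_le (hexp R hR) (ae_of_all _ hbd)

theorem abs_Si_le (x : ℝ) : |Si x| ≤ 3 := by
  have key : ∀ x : ℝ, 0 ≤ x → |Si x| ≤ 3 := by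
    intro x hx
    rcases le_total x 1 with h1 | h1
    · rw [Si_eq_integral_sinc, ← Real.norm_eq_abs]
      refine (intervalIntegral.norm_integral_le_of_norm_le_const (C := 1) ?_).trans ?_
      · intro y _; exact Real.abs_sinc_le_one y
      · rw [sub_zero, abs_of_nonneg hx]; linarith
    · have h2 := abs_Si_sub_le (R := x) (by linarith)
      have h3 : 1 / x ≤ 1 := by rw [div_le_one (by linarith)]; exact h1
      have := Real.pi_lt_d2
      have := Real.pi_pos
      rw [abs_le] at h2 ⊢
      constructor <;> linarith [h2.1, h2.2]
  rcases le_total 0 x with h | h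
  · exact key x h
  · have := key (-x) (by linarith)
    rwa [Si_neg, abs_neg] at this

theorem sincF_eq (j : ℤ) {h : ℝ} (hh : 0 < h) (x : ℝ) :
    sincF j h x = Real.sinc (Real.pi * (x - j * h) / h) := by
  unfold sincF
  have hp := Real.pi_pos
  split_ifs with hx
  · simp [hx]
  · rw [Real.sinc_of_ne_zero]
    have : x - j * h ≠ 0 := sub_ne_zero.2 hx
    positivity

theorem continuous_sincF (j : ℤ) {h : ℝ} (hh : 0 < h) : Continuous (sincF j h) := by
  have : sincF j h = fun x => Real.sinc (Real.pi * (x - j * h) / h) :=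
    funext fun x => sincF_eq j hh x
  rw [this]
  exact Real.continuous_sinc.comp (by fun_prop)

theorem sinc_pi_sq_le (y : ℝ) : Real.sinc (Real.pi * y) ^ 2 ≤ 2 / (1 + y ^ 2) := by
  have hp : 1 < Real.pi := by linarith [Real.pi_gt_three]
  rcases le_total (y ^ 2) 1 with h | h
  · have h1 : Real.sinc (Real.pi * y) ^ 2 ≤ 1 := by
      rw [sq_le_one_iff_abs_le_one]; exact Real.abs_sinc_le_one _
    refine h1.trans ?_
    rw [le_div_iff₀ (by positivity)]; linarith
  · have hy : y ≠ 0 := by rintro rfl; norm_num at h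
    rw [Real.sinc_of_ne_zero (by positivity), div_pow, div_le_div_iff₀ (by positivity) (by positivity)]
    have h2 := Real.sin_sq_le_one (Real.pi * y)
    have h3 : (1 : ℝ) ≤ Real.pi ^ 2 := by nlinarith
    have h4 : (Real.pi * y) ^ 2 = Real.pi ^ 2 * y ^ 2 := by ring
    rw [h4]
    nlinarith [mul_le_mul h3 h (by norm_num) (by positivity), sq_nonneg y]

theorem sincF_sq_le (j : ℤ) {h : ℝ} (hh : 0 < h) (x : ℝ) :
    sincF j h x ^ 2 ≤ 2 / (1 + (x / h - j) ^ 2) := by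
  rw [sincF_eq j hh, show Real.pi * (x - j * h) / h = Real.pi * (x / h - j) by field_simp]
  exact sinc_pi_sq_le _

theorem abs_sincF_le_one (j : ℤ) {h : ℝ} (hh : 0 < h) (x : ℝ) : |sincF j h x| ≤ 1 := by
  rw [sincF_eq j hh]; exact Real.abs_sinc_le_one _

theorem sincF_node (i j : ℤ) {h : ℝ} (hh : 0 < h) :
    sincF j h (i * h) = if i = j then 1 else 0 := by
  rw [sincF_eq j hh, show Real.pi * (i * h - j * h) / h = ((i - j : ℤ) : ℝ) * Real.pi by
    push_cast; field_simp]
  split_ifs with hij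
  · simp [hij]
  · have : ((i - j : ℤ) : ℝ) ≠ 0 := by exact_mod_cast sub_ne_zero.2 hij
    rw [Real.sinc_of_ne_zero (by positivity), Real.sin_int_mul_pi, zero_div]

theorem Jfun_sub (j : ℤ) {h : ℝ} (hh : 0 < h) (x y : ℝ) :
    Jfun j h x - Jfun j h y = ∫ s in y..x, sincF j h s := by
  unfold Jfun
  have hp := Real.pi_pos
  have h1 : (∫ s in y..x, sincF j h s)
      = (h / Real.pi) * ∫ τ in (Real.pi * (y - j * h) / h)..(Real.pi * (x - j * h) / h),
        Real.sinc τ := by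
    have h2 := intervalIntegral.integral_comp_mul_sub (a := y) (b := x) Real.sinc
      (c := Real.pi / h) (by positivity) (Real.pi * j)
    have e : ∀ s : ℝ, Real.pi / h * s - Real.pi * j = Real.pi * (s - j * h) / h := by
      intro s; field_simp
    simp only [e, ← sincF_eq j hh] at h2
    rw [h2, smul_eq_mul, inv_div]
  rw [h1, ← Si_sub]
  field_simp
  ring

theorem abs_Jfun_le (j : ℤ) {h : ℝ} (hh : 0 < h) (x : ℝ) : |Jfun j h x| ≤ 2 * h := by
  unfold Jfun
  have hp := Real.pi_gt_three
  have h1 := abs_Si_le (Real.pi * (x - j * h) / h)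
  set S := Si (Real.pi * (x - j * h) / h)
  rw [abs_mul, abs_of_pos hh, mul_comm]
  refine mul_le_mul_of_nonneg_right ?_ hh.le
  have h2 : |1 / Real.pi * S| ≤ 1 := by
    rw [abs_mul, abs_of_pos (by positivity), div_mul_eq_mul_div, one_mul, div_le_one (by linarith)]
    linarith
  calc _ ≤ |(1:ℝ)/2| + |1 / Real.pi * S| := abs_add_le _ _
    _ ≤ 2 := by rw [abs_of_pos (by norm_num)]; linarith

theorem tendsto_Si_atBot : Tendsto Si atBot (𝓝 (-(Real.pi / 2))) := by
  have h1 : Tendsto Si atTop (𝓝 (Real.pi / 2)) := by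
    rw [tendsto_iff_norm_sub_tendsto_zero]
    refine squeeze_zero' (Eventually.of_forall fun _ => norm_nonneg _) ?_
      (tendsto_const_nhds.div_atTop tendsto_id : Tendsto (fun x : ℝ => 1 / x) atTop (𝓝 0))
    filter_upwards [eventually_gt_atTop 0] with x hx
    exact abs_Si_sub_le hx
  have h2 := (h1.comp tendsto_neg_atBot_atTop).neg
  refine h2.congr fun x => ?_
  simp [Si_neg]

theorem tendsto_Jfun_atBot (j : ℤ) {h : ℝ} (hh : 0 < h) :
    Tendsto (Jfun j h) atBot (𝓝 0) := by
  have hp := Real.pi_pos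
  have h1 : Tendsto (fun x : ℝ => Real.pi * (x - j * h) / h) atBot atBot := by
    have : Tendsto (fun x : ℝ => (Real.pi / h) * (x + (-(j * h)))) atBot atBot :=
      (tendsto_atBot_add_const_right atBot (-(j * h)) tendsto_id).const_mul_atBot (by positivity)
    refine this.congr fun x => ?_
    ring
  have h2 := ((((tendsto_Si_atBot.comp h1).const_mul (1 / Real.pi)).const_add (1/2)).const_mul h)
  have h3 : h * (1 / 2 + 1 / Real.pi * -(Real.pi / 2)) = 0 := by field_simp; ring
  rw [h3] at h2
  exact h2

theorem Jfun_node (i j : ℤ) {h : ℝ} (hh : 0 < h) :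
    Jfun j h (i * h) = h * deltaM (i - j) := by
  unfold Jfun deltaM
  rw [show Real.pi * (i * h - j * h) / h = Real.pi * ((i - j : ℤ) : ℝ) by push_cast; field_simp]

/-- The Heaviside sequence, the limit of `δ_m^{(-1)}` away from `m = 0`. -/
def heav (m : ℤ) : ℝ := if 0 < m then 1 else if m = 0 then 1 / 2 else 0

theorem deltaM_sub_heav_sq_le (m : ℤ) : (deltaM m - heav m) ^ 2 ≤ 1 / (1 + (m : ℝ) ^ 2) := by
  have hp := Real.pi_gt_three
  have key : ∀ m : ℤ, 0 < m → |Si (Real.pi * m) / Real.pi - 1 / 2| ≤ 1 / (2 * m) := by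
    intro m hm
    have hm' : (0:ℝ) < m := by exact_mod_cast hm
    have h1 := abs_Si_sub_le (R := Real.pi * m) (by positivity)
    rw [show Si (Real.pi * m) / Real.pi - 1 / 2 = (Si (Real.pi * m) - Real.pi / 2) / Real.pi by
      field_simp, abs_div, abs_of_pos (by linarith : 0 < Real.pi), div_le_iff₀ (by linarith)]
    refine h1.trans ?_
    rw [div_mul_eq_mul_div, one_mul, div_le_div_iff₀ (by positivity) (by positivity)]
    nlinarith [mul_pos hm' hm', mul_pos (mul_pos hm' hm') (by linarith : 0 < Real.pi)]
  have key2 : ∀ (m x : ℝ), 1 ≤ m → |x| ≤ 1 / (2 * m) → x ^ 2 ≤ 1 / (1 + m ^ 2) := by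
    intro m x hm hx
    have : x ^ 2 ≤ (1 / (2 * m)) ^ 2 := by rw [← sq_abs]; gcongr
    refine this.trans ?_
    rw [div_pow, one_pow, div_le_div_iff₀ (by positivity) (by positivity)]
    nlinarith
  rcases lt_trichotomy m 0 with hm | hm | hm
  · have h1 := key (-m) (by omega)
    have hm' : (1:ℝ) ≤ ((-m : ℤ) : ℝ) := by exact_mod_cast (by omega : (1:ℤ) ≤ -m)
    have h2 := key2 _ _ hm' h1
    have e : deltaM m - heav m = -(Si (Real.pi * ((-m : ℤ) : ℝ)) / Real.pi - 1 / 2) := by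
      unfold deltaM heav
      rw [if_neg (by omega), if_neg (by omega)]
      push_cast
      rw [mul_neg, Si_neg]; ring
    rw [e, neg_sq]
    simpa using h2
  · subst hm
    have : Si 0 = 0 := by simp [Si]
    simp [deltaM, heav, this]
  · have h1 := key m hm
    have hm' : (1:ℝ) ≤ (m : ℝ) := by exact_mod_cast (by omega : (1:ℤ) ≤ m)
    have h2 := key2 _ _ hm' h1
    have e : deltaM m - heav m = Si (Real.pi * m) / Real.pi - 1 / 2 := by
      unfold deltaM heav
      rw [if_pos hm]; ring
    rw [e]; exact h2

theorem abs_heav_le (m : ℤ) : |heav m| ≤ 1 := by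
  unfold heav; split_ifs <;> norm_num

/-- Three times `Σ_{l ∈ ℤ} 1/(1+l²)`, a bound for all shifted sums `Σ_j 1/(1+(y-j)²)`. -/
def sqSum : ℝ := 3 * ∑' l : ℤ, 1 / (1 + (l : ℝ) ^ 2)

theorem summable_one_div_one_add_sq : Summable fun l : ℤ => 1 / (1 + (l : ℝ) ^ 2) := by
  have h := Real.summable_one_div_int_pow (p := 2) |>.2 (by norm_num)
  have h2 : Summable fun l : ℤ => (if l = 0 then (1:ℝ) else 0) + 1 / (l : ℝ) ^ 2 :=
    (summable_of_ne_finset_zero (s := {0}) (by intro b hb; simp at hb; simp [hb])).add h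
  refine Summable.of_nonneg_of_le (fun l => by positivity) (fun l => ?_) h2
  by_cases hl : l = 0
  · simp [hl]
  · rw [if_neg hl, zero_add]
    have : (l : ℝ) ≠ 0 := by exact_mod_cast hl
    exact one_div_le_one_div_of_le (by positivity) (by linarith)

theorem sum_one_div_le (s : Finset ℤ) (y : ℝ) :
    ∑ j ∈ s, 1 / (1 + (y - j) ^ 2) ≤ sqSum := by
  set m := ⌊y⌋
  have hθ0 := Int.floor_le y
  have hθ1 := Int.lt_floor_add_one y
  have h1 : ∀ j ∈ s, 1 / (1 + (y - j) ^ 2) ≤ 3 * (1 / (1 + ((j - m : ℤ) : ℝ) ^ 2)) := by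
    intro j _
    rw [mul_one_div, div_le_div_iff₀ (by positivity) (by positivity)]
    push_cast
    have e1 : (0:ℝ) ≤ y - m := by linarith
    have e2 : y - m ≤ 1 := by linarith
    nlinarith [sq_nonneg ((y - j) + (y - m)), sq_nonneg (y - j), sq_nonneg (y - m)]
  refine (Finset.sum_le_sum h1).trans ?_
  rw [← Finset.mul_sum, sqSum]
  refine mul_le_mul_of_nonneg_left ?_ (by norm_num)
  have h2 : Summable fun j : ℤ => 1 / (1 + ((j - m : ℤ) : ℝ) ^ 2) :=
    ((Equiv.subRight m).summable_iff (f := fun l : ℤ => 1 / (1 + (l : ℝ) ^ 2))).2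
      summable_one_div_one_add_sq
  refine (h2.sum_le_tsum s fun _ _ => by positivity).trans (le_of_eq ?_)
  exact (Equiv.subRight m).tsum_eq (f := fun l : ℤ => 1 / (1 + (l : ℝ) ^ 2))

theorem sqSum_pos : 0 < sqSum := by
  have := sum_one_div_le {0} 0
  simp at this
  linarith

end

section

open MeasureTheory Set Filter Topology

/-! ### Partial fractions of the cosecant -/

/-- Mittag-Leffler expansion of `π / sin(πx)`, obtained from that of the cotangent through
`1 / sin x = cot (x/2) - cot x`. -/
theorem hasSum_csc {x : ℂ} (hx : x ∈ Complex.integerComplement) :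
    HasSum (fun n : ℕ => (-1 : ℂ) ^ (n + 1) * cotTerm x n)
      (Real.pi / Complex.sin (Real.pi * x) - 1 / x) := by
  have hx2 : x / 2 ∈ Complex.integerComplement := by
    rw [Complex.mem_integerComplement_iff] at hx ⊢
    rintro ⟨n, hn⟩
    exact hx ⟨2 * n, by push_cast; rw [hn]; ring⟩
  have hx0 : x ≠ 0 := Complex.integerComplement.ne_zero hx
  have hsum := summable_cotTerm hx
  have hev : Summable fun k => cotTerm x (2 * k) :=
    hsum.comp_injective (i := fun k : ℕ => 2 * k) (fun a b h => by simpa using h)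
  have hod : Summable fun k => cotTerm x (2 * k + 1) :=
    hsum.comp_injective (i := fun k : ℕ => 2 * k + 1) (fun a b h => by simpa using h)
  have hod' : ∀ k, cotTerm x (2 * k + 1) = (1 / 2) * cotTerm (x / 2) k := by
    intro k
    unfold cotTerm
    push_cast
    rw [show x - (2 * (k : ℂ) + 1 + 1) = 2 * (x / 2 - (k + 1)) by ring,
      show x + (2 * (k : ℂ) + 1 + 1) = 2 * (x / 2 + (k + 1)) by ring]
    simp only [one_div, mul_inv]
    ring
  have hS : HasSum (fun n : ℕ => (-1 : ℂ) ^ (n + 1) * cotTerm x n)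
      (-(∑' k, cotTerm x (2 * k)) + ∑' k, cotTerm x (2 * k + 1)) := by
    refine HasSum.even_add_odd ?_ ?_
    · refine hev.hasSum.neg.congr_fun fun k => ?_
      rw [pow_succ, pow_mul]; norm_num
    · refine hod.hasSum.congr_fun fun k => ?_
      rw [show 2 * k + 1 + 1 = 2 * (k + 1) by ring, pow_mul]; norm_num
  have hall := tsum_even_add_odd hev hod
  have h1 : ∑' n, cotTerm x n = Real.pi * Complex.cot (Real.pi * x) - 1 / x :=
    (cot_series_rep' hx).symm
  have h2 : ∑' n, cotTerm x (2 * n + 1)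
      = (1 / 2) * (Real.pi * Complex.cot (Real.pi * (x / 2)) - 1 / (x / 2)) := by
    simp_rw [hod']
    rw [tsum_mul_left]
    congr 1
    exact (cot_series_rep' hx2).symm
  have hsin2 : Complex.sin (Real.pi * (x / 2)) ≠ 0 := by
    intro h
    rw [Complex.sin_eq_zero_iff] at h
    obtain ⟨m, hm⟩ := h
    rw [Complex.mem_integerComplement_iff] at hx2
    refine hx2 ⟨m, ?_⟩
    have : (Real.pi : ℂ) ≠ 0 := by exact_mod_cast Real.pi_ne_zero
    apply mul_left_cancel₀ this
    rw [hm]; ring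
  have hcos2 : Complex.sin (Real.pi * x) ≠ 0 := by
    intro h
    rw [Complex.sin_eq_zero_iff] at h
    obtain ⟨m, hm⟩ := h
    rw [Complex.mem_integerComplement_iff] at hx
    refine hx ⟨m, ?_⟩
    have : (Real.pi : ℂ) ≠ 0 := by exact_mod_cast Real.pi_ne_zero
    apply mul_left_cancel₀ this
    rw [hm]; ring
  convert hS using 1
  have h3 : -(∑' k, cotTerm x (2 * k)) + ∑' k, cotTerm x (2 * k + 1)
      = 2 * ∑' k, cotTerm x (2 * k + 1) - ∑' n, cotTerm x n := by rw [← hall]; ring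
  rw [h3, h1, h2, Complex.cot_eq_cos_div_sin, Complex.cot_eq_cos_div_sin]
  have hd : (Real.pi : ℂ) * x = 2 * (Real.pi * (x / 2)) := by ring
  have e1 : Complex.sin (Real.pi * x)
      = 2 * Complex.sin (Real.pi * (x / 2)) * Complex.cos (Real.pi * (x / 2)) := by
    rw [hd, Complex.sin_two_mul]
  have e2 : Complex.cos (Real.pi * x) = 2 * Complex.cos (Real.pi * (x / 2)) ^ 2 - 1 := by
    rw [hd, Complex.cos_two_mul]
  rw [e1] at hcos2 ⊢
  rw [e2]
  generalize Complex.sin (Real.pi * (x / 2)) = s at *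
  generalize Complex.cos (Real.pi * (x / 2)) = c at *
  have hc : c ≠ 0 := fun h => hcos2 (by simp [h])
  field_simp
  ring

theorem hasSum_csc_diff {y z : ℂ} (hy : y ∈ Complex.integerComplement)
    (hz : z ∈ Complex.integerComplement) :
    HasSum (fun j : ℤ => (-1 : ℂ) ^ j * (1 / (y - j) - 1 / (z - j)))
      (Real.pi / Complex.sin (Real.pi * y) - Real.pi / Complex.sin (Real.pi * z)) := by
  have hsub : ∀ {x : ℂ}, x ∈ Complex.integerComplement → ∀ j : ℤ, x - j ≠ 0 := by
    intro x hx j h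
    exact hx ⟨j, (sub_eq_zero.1 h).symm⟩
  have hsummable : Summable fun j : ℤ => (-1 : ℂ) ^ j * (1 / (y - j) - 1 / (z - j)) := by
    have h1 : ∀ x : ℂ, (fun d : ℤ => (x - d)⁻¹) =O[cofinite] fun n : ℤ => (n : ℝ)⁻¹ := by
      intro x
      have := (EisensteinSeries.linear_inv_isBigO_right 1 x).comp_neg_int
      simpa [sub_eq_add_neg] using! this
    have h2 : Summable fun n : ℤ => ((n : ℝ)⁻¹ * (n : ℝ)⁻¹) := by
      have h := Real.summable_one_div_int_pow (p := 2) |>.2 (by norm_num)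
      refine h.congr fun n => ?_
      rw [← mul_inv, ← sq, one_div]
    have h3 : Summable fun j : ℤ => (y - j)⁻¹ * (z - j)⁻¹ :=
      summable_of_isBigO h2 ((h1 y).mul (h1 z))
    refine Summable.of_norm ?_
    refine ((h3.norm).mul_left ‖z - y‖).congr fun j => ?_
    rw [norm_mul ((-1 : ℂ) ^ j), norm_zpow, norm_neg, norm_one, one_zpow, one_mul, ← norm_mul]
    congr 1
    have := hsub hy j
    have := hsub hz j
    field_simp
    ring
  have hS := hsummable.hasSum
  set S := ∑' j : ℤ, (-1 : ℂ) ^ j * (1 / (y - j) - 1 / (z - j))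
  have h1 := hS.nat_add_neg
  have h2 := (hasSum_nat_add_iff' 1).2 h1
  have h3 := (hasSum_csc hy).sub (hasSum_csc hz)
  have h4 := h2.unique (h3.congr_fun fun n => by
    have e : ((-1 : ℂ) ^ (-(↑(n + 1) : ℤ))) = (-1) ^ (n + 1) := by
      rw [zpow_neg, zpow_natCast, inv_eq_iff_eq_inv, ← inv_pow]; norm_num
    rw [e, zpow_natCast]
    simp only [cotTerm]
    push_cast
    ring)
  simp at h4
  have h5 : (Real.pi : ℂ) / Complex.sin (Real.pi * y) - Real.pi / Complex.sin (Real.pi * z) = S := by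
    linear_combination -h4
  rw [h5]
  exact hS

theorem sin_ne_zero_of_im {w : ℂ} (hw : w.im ≠ 0) : Complex.sin w ≠ 0 := by
  intro h
  rw [Complex.sin_eq_zero_iff] at h
  obtain ⟨m, hm⟩ := h
  apply hw
  rw [hm]
  have : ((m : ℂ) * (Real.pi : ℂ)) = (((m : ℝ) * Real.pi : ℝ) : ℂ) := by push_cast; ring
  rw [this]
  exact Complex.ofReal_im _

/-- Partial-fraction form of the cardinal series of `y ↦ 1/(z - y)`. -/
theorem hasSum_sincF_div {h : ℝ} (hh : 0 < h) (y : ℝ) {z : ℂ} (hz : z.im ≠ 0) :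
    HasSum (fun j : ℤ => (sincF j h y : ℂ) / (z - j * h))
      ((1 - Real.sin (Real.pi * y / h) / Complex.sin (Real.pi * z / h)) / (z - y)) := by
  have hhC : (h : ℂ) ≠ 0 := by exact_mod_cast hh.ne'
  have hpC : (Real.pi : ℂ) ≠ 0 := by exact_mod_cast Real.pi_ne_zero
  by_cases hy : ∃ n : ℤ, y = n * h
  · obtain ⟨n, rfl⟩ := hy
    have e1 : Real.sin (Real.pi * (n * h) / h) = 0 := by
      rw [show Real.pi * (n * h) / h = n * Real.pi by field_simp, Real.sin_int_mul_pi]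
    rw [e1]
    convert hasSum_single n ?_ using 1
    · rw [sincF_node n n hh]; simp
    · intro j hj
      rw [sincF_node n j hh, if_neg (Ne.symm hj)]; simp
  have hyC : ((y / h : ℝ) : ℂ) ∈ Complex.integerComplement := by
    rw [Complex.mem_integerComplement_iff]
    rintro ⟨n, hn⟩
    refine hy ⟨n, ?_⟩
    have : (n : ℝ) = y / h := by exact_mod_cast hn
    rw [this]; field_simp
  have him : (z / h).im ≠ 0 := by
    rw [Complex.div_ofReal_im]
    exact div_ne_zero hz hh.ne'
  have hzC : z / h ∈ Complex.integerComplement := by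
    rw [Complex.mem_integerComplement_iff]
    rintro ⟨n, hn⟩
    apply him
    rw [← hn]; exact Complex.intCast_im n
  have hzy : z - y ≠ 0 := by
    intro h0; apply hz
    rw [sub_eq_zero.1 h0]; exact Complex.ofReal_im y
  have h1 := (hasSum_csc_diff hyC hzC).mul_left
    ((Real.sin (Real.pi * y / h) : ℂ) / (Real.pi * (z - y)))
  have hsz : Complex.sin (Real.pi * z / h) ≠ 0 := by
    apply sin_ne_zero_of_im
    rw [mul_div_assoc, Complex.im_ofReal_mul]
    exact mul_ne_zero Real.pi_ne_zero him
  have hsy : Real.sin (Real.pi * y / h) ≠ 0 := by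
    intro h0
    rw [Real.sin_eq_zero_iff] at h0
    obtain ⟨m, hm⟩ := h0
    refine hy ⟨m, ?_⟩
    have := Real.pi_pos
    field_simp at hm
    nlinarith
  have hsyC : (Real.sin (Real.pi * y / h) : ℂ) ≠ 0 := by exact_mod_cast hsy
  have hval : (1 - Real.sin (Real.pi * y / h) / Complex.sin (Real.pi * z / h)) / (z - y)
      = (Real.sin (Real.pi * y / h) : ℂ) / (Real.pi * (z - y)) *
        (Real.pi / Complex.sin (Real.pi * ((y / h : ℝ) : ℂ))
          - Real.pi / Complex.sin (Real.pi * (z / h))) := by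
    have e5 : (Real.pi : ℂ) * ((y / h : ℝ) : ℂ) = ((Real.pi * y / h : ℝ) : ℂ) := by
      push_cast; ring
    rw [e5, ← Complex.ofReal_sin, ← mul_div_assoc (Real.pi : ℂ) z]
    field_simp
  rw [hval]
  refine h1.congr_fun fun j => ?_
  · have hyj : y - j * h ≠ 0 := fun h0 => hy ⟨j, by linarith⟩
    have hzj : z - j * h ≠ 0 := by
      intro h0; apply hz
      rw [sub_eq_zero.1 h0]
      have : ((j : ℂ) * (h : ℂ)) = (((j : ℝ) * h : ℝ) : ℂ) := by push_cast; ring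
      rw [this]; exact Complex.ofReal_im _
    have hyjC : (y : ℂ) - j * h ≠ 0 := by exact_mod_cast hyj
    have e2 : sincF j h y = (-1) ^ j * Real.sin (Real.pi * y / h) / (Real.pi * (y - j * h) / h) := by
      unfold sincF
      rw [if_neg (fun h0 => hy ⟨j, h0⟩), show Real.pi * (y - j * h) / h
        = Real.pi * y / h - j * Real.pi by field_simp, Real.sin_sub_int_mul_pi]
    rw [e2]
    push_cast
    have e3 : (y : ℂ) / h - j = (y - j * h) / h := by field_simp
    have e4 : z / h - j = (z - j * h) / h := by field_simp
    rw [e3, e4]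
    have e6 : z - y = (z - j * h) - (y - j * h) := by ring
    rw [e6] at hzy ⊢
    generalize z - (j : ℂ) * h = B at *
    generalize (y : ℂ) - (j : ℂ) * h = A at *
    generalize Complex.sin (Real.pi * y / h) = s
    field_simp

end

section

open MeasureTheory Set Filter Topology

/-! ### Cauchy's formula on a strip -/

/-- `F` is holomorphic on the strip `D_d` and decays like `A exp(-β |Re ζ|)` there. -/
structure StripDecay (F : ℂ → ℂ) (d A β : ℝ) : Prop where
  diff : DifferentiableOn ℂ F (Dstrip d)
  bound : ∀ ζ ∈ Dstrip d, ‖F ζ‖ ≤ A * Real.exp (-β * |ζ.re|)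

theorem isOpen_Dstrip (d : ℝ) : IsOpen (Dstrip d) :=
  isOpen_lt (by fun_prop) continuous_const

theorem integral_exp_neg_abs {β : ℝ} (hβ : 0 < β) : ∫ t : ℝ, Real.exp (-β * |t|) = 2 / β := by
  rw [integral_comp_abs (f := fun t => Real.exp (-β * t)), integral_exp_mul_Ioi (by linarith)]
  simp
  field_simp

theorem integrable_exp_neg_abs {β : ℝ} (hβ : 0 < β) :
    Integrable (fun t : ℝ => Real.exp (-β * |t|)) := by
  by_contra h
  have h1 := integral_undef h
  rw [integral_exp_neg_abs hβ] at h1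
  have : 0 < 2 / β := by positivity
  linarith

theorem line_mem_Dstrip {d η : ℝ} (hη : |η| < d) (t : ℝ) :
    (t : ℂ) + η * Complex.I ∈ Dstrip d := by
  simpa [Dstrip] using hη

theorem line_re (t η : ℝ) : ((t : ℂ) + η * Complex.I).re = t := by simp

theorem line_im (t η : ℝ) : ((t : ℂ) + η * Complex.I).im = η := by simp

theorem norm_line_sub_ge (t η x : ℝ) : |η| ≤ ‖(t : ℂ) + η * Complex.I - x‖ := by
  have := Complex.abs_im_le_norm ((t : ℂ) + η * Complex.I - x)
  simpa using this

theorem line_sub_ne {η : ℝ} (h0 : η ≠ 0) (t x : ℝ) : (t : ℂ) + η * Complex.I - x ≠ 0 := by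
  intro h
  have := norm_line_sub_ge t η x
  rw [h, norm_zero] at this
  exact h0 (abs_eq_zero.1 (le_antisymm this (abs_nonneg _)))

variable {F : ℂ → ℂ} {d A β : ℝ}

theorem StripDecay.continuous_line (hF : StripDecay F d A β) {η : ℝ} (hη : |η| < d) :
    Continuous fun t : ℝ => F ((t : ℂ) + η * Complex.I) := by
  refine hF.diff.continuousOn.comp_continuous (by fun_prop) fun t => line_mem_Dstrip hη t

theorem StripDecay.norm_line (hF : StripDecay F d A β) {η : ℝ} (hη : |η| < d) (t : ℝ) :
    ‖F ((t : ℂ) + η * Complex.I)‖ ≤ A * Real.exp (-β * |t|) := by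
  simpa using hF.bound _ (line_mem_Dstrip hη t)

theorem StripDecay.nonneg (hF : StripDecay F d A β) (hd : 0 < d) : 0 ≤ A := by
  have := hF.bound 0 (by simpa [Dstrip] using hd)
  simp at this
  exact (norm_nonneg _).trans this

/-- Products of the boundary values with bounded continuous factors are integrable. -/
theorem StripDecay.integrable_line_mul (hF : StripDecay F d A β) (hβ : 0 < β) {η : ℝ}
    (hη : |η| < d) {w : ℝ → ℂ} (hw : Continuous w) {B : ℝ} (hB : ∀ t, ‖w t‖ ≤ B) :
    Integrable fun t : ℝ => F ((t : ℂ) + η * Complex.I) * w t := by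
  refine ((integrable_exp_neg_abs hβ).const_mul (A * B)).mono'
    (((hF.continuous_line hη).mul hw).aestronglyMeasurable) (Eventually.of_forall fun t => ?_)
  rw [norm_mul]
  have h1 := hF.norm_line hη t
  have h0 : 0 ≤ A * Real.exp (-β * |t|) := (norm_nonneg _).trans h1
  calc _ ≤ A * Real.exp (-β * |t|) * B := mul_le_mul h1 (hB t) (norm_nonneg _) h0
    _ = _ := by ring

theorem continuous_line_inv {η : ℝ} (h0 : η ≠ 0) (x : ℝ) :
    Continuous fun t : ℝ => ((t : ℂ) + η * Complex.I - x)⁻¹ :=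
  Continuous.inv₀ (by fun_prop) fun t => line_sub_ne h0 t x

theorem norm_line_inv_le {η : ℝ} (h0 : η ≠ 0) (t x : ℝ) :
    ‖((t : ℂ) + η * Complex.I - x)⁻¹‖ ≤ 1 / |η| := by
  rw [norm_inv, ← one_div]
  exact one_div_le_one_div_of_le (abs_pos.2 h0) (norm_line_sub_ge t η x)

theorem integrable_poisson {η : ℝ} (h0 : 0 < η) (x : ℝ) :
    Integrable fun t : ℝ => 2 * η / ((t - x) ^ 2 + η ^ 2) := by
  have h1 := ((integrable_inv_one_add_sq.comp_div h0.ne').comp_sub_right x).const_mul (2 / η)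
  refine h1.congr (Eventually.of_forall fun t => ?_)
  have : 0 < (t - x) ^ 2 + η ^ 2 := by positivity
  field_simp
  ring

theorem integral_poisson {η : ℝ} (h0 : 0 < η) (x : ℝ) :
    ∫ t : ℝ, 2 * η / ((t - x) ^ 2 + η ^ 2) = 2 * Real.pi := by
  have h1 : ∀ t : ℝ, 2 * η / ((t - x) ^ 2 + η ^ 2) = (2 / η) * (1 + ((t - x) / η) ^ 2)⁻¹ := by
    intro t
    have : 0 < (t - x) ^ 2 + η ^ 2 := by positivity
    field_simp
    ring
  simp_rw [h1]
  rw [integral_const_mul, integral_sub_right_eq_self (fun t : ℝ => (1 + (t / η) ^ 2)⁻¹),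
    Measure.integral_comp_div (fun t : ℝ => (1 + t ^ 2)⁻¹), integral_univ_inv_one_add_sq,
    abs_of_pos h0, smul_eq_mul]
  field_simp

/-- Cauchy's integral formula on a strip, for points of the real axis. -/
theorem StripDecay.cauchy (hF : StripDecay F d A β) (hβ : 0 < β) {η : ℝ} (h0 : 0 < η)
    (hη : η < d) (x : ℝ) :
    ∫ t : ℝ, (F ((t : ℂ) + (-η : ℝ) * Complex.I) * ((t : ℂ) + (-η : ℝ) * Complex.I - x)⁻¹
        - F ((t : ℂ) + η * Complex.I) * ((t : ℂ) + η * Complex.I - x)⁻¹)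
      = 2 * Real.pi * Complex.I * F x := by
  have hd : 0 < d := h0.trans hη
  have hη1 : |η| < d := by rwa [abs_of_pos h0]
  have hη2 : |-η| < d := by rwa [abs_neg]
  have hxm : (x : ℂ) ∈ Dstrip d := by simpa [Dstrip] using hd
  have hA := hF.nonneg hd
  set G := dslope F (x : ℂ) with hG
  have hGd : DifferentiableOn ℂ G (Dstrip d) :=
    (Complex.differentiableOn_dslope ((isOpen_Dstrip d).mem_nhds hxm)).2 hF.diff
  have hGv : ∀ z : ℂ, z ≠ x → G z = (F z - F x) * (z - x)⁻¹ := by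
    intro z hz
    rw [hG, dslope_of_ne _ hz, slope_def_field, div_eq_mul_inv]
  set Φ : ℝ → ℂ := fun t =>
    (F ((t : ℂ) + (-η : ℝ) * Complex.I) * ((t : ℂ) + (-η : ℝ) * Complex.I - x)⁻¹
        - F ((t : ℂ) + η * Complex.I) * ((t : ℂ) + η * Complex.I - x)⁻¹) with hΦ
  have hΦi : Integrable Φ :=
    (hF.integrable_line_mul hβ hη2 (continuous_line_inv (neg_ne_zero.2 h0.ne') x)
      (fun t => norm_line_inv_le (neg_ne_zero.2 h0.ne') t x)).sub
    (hF.integrable_line_mul hβ hη1 (continuous_line_inv h0.ne' x)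
      (fun t => norm_line_inv_le h0.ne' t x))
  -- `Pk` is the contribution of the pole of `F z / (z - x)`, a multiple of the Poisson kernel.
  set Pk : ℝ → ℂ := fun t => (F x * Complex.I) * ((2 * η / ((t - x) ^ 2 + η ^ 2) : ℝ) : ℂ) with hPk
  have hPi : Integrable Pk := (integrable_poisson h0 x).ofReal.const_mul _
  have hPint : ∫ t, Pk t = 2 * Real.pi * Complex.I * F x := by
    rw [hPk, integral_const_mul, integral_complex_ofReal, integral_poisson h0]
    push_cast; ring
  have hne : ∀ {e : ℝ}, e ≠ 0 → ∀ t : ℝ, (t : ℂ) + e * Complex.I ≠ x := fun he t h =>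
    line_sub_ne he t x (sub_eq_zero.2 h)
  have hpt : ∀ t : ℝ, G ((t : ℂ) + (-η : ℝ) * Complex.I) - G ((t : ℂ) + η * Complex.I)
      = Φ t - Pk t := by
    intro t
    rw [hGv _ (hne (neg_ne_zero.2 h0.ne') t), hGv _ (hne h0.ne' t), hΦ, hPk]
    have h1 := line_sub_ne (neg_ne_zero.2 h0.ne') t x
    have h2 := line_sub_ne h0.ne' t x
    have h3 : (((t : ℂ) - x) ^ 2 + η ^ 2) ≠ 0 := by
      have : 0 < (t - x) ^ 2 + η ^ 2 := by positivity
      exact_mod_cast this.ne'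
    have h4 : ((t : ℂ) + (-η : ℝ) * Complex.I - x)⁻¹ - ((t : ℂ) + η * Complex.I - x)⁻¹
        = Complex.I * (2 * η / ((t - x) ^ 2 + η ^ 2)) := by
      have h5 : ((t : ℂ) + (-η : ℝ) * Complex.I - x) * ((t : ℂ) + η * Complex.I - x)
          = (t - x) ^ 2 + η ^ 2 := by
        push_cast
        linear_combination (-(η : ℂ) ^ 2) * Complex.I_sq
      rw [inv_sub_inv h1 h2, h5]
      push_cast
      ring
    push_cast at h4 ⊢
    linear_combination (-F x) * h4
  -- Removing the pole leaves the holomorphic function `G`, so Cauchy's theorem applies to the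
  -- rectangle `[-R, R] × [-η, η]`.
  have hrect : ∀ R : ℝ, 0 < R → ∫ t in (-R)..R, (Φ t - Pk t)
      = Complex.I * (∫ y in (-η)..η, G ((-R : ℝ) + y * Complex.I))
        - Complex.I * ∫ y in (-η)..η, G ((R : ℝ) + y * Complex.I) := by
    intro R hR
    have hsub : (uIcc (-R) R ×ℂ uIcc (-η) η) ⊆ Dstrip d := by
      intro z hz
      rw [Complex.mem_reProdIm] at hz
      have h2 := hz.2
      rw [uIcc_of_le (by linarith)] at h2
      exact lt_of_le_of_lt (abs_le.2 h2) hη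
    have key := Complex.integral_boundary_rect_eq_zero_of_differentiableOn G
      ⟨-R, -η⟩ ⟨R, η⟩ (hGd.mono hsub)
    simp only [smul_eq_mul] at key
    have hcont : ∀ {e : ℝ}, |e| < d → Continuous fun t : ℝ => G ((t : ℂ) + e * Complex.I) :=
      fun he => hGd.continuousOn.comp_continuous (by fun_prop) fun t => line_mem_Dstrip he t
    have h5 : ∫ t in (-R)..R, (Φ t - Pk t)
        = (∫ t in (-R)..R, G ((t : ℂ) + (-η : ℝ) * Complex.I))
          - ∫ t in (-R)..R, G ((t : ℂ) + η * Complex.I) := by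
      rw [← intervalIntegral.integral_sub ((hcont hη2).intervalIntegrable _ _)
        ((hcont hη1).intervalIntegrable _ _)]
      exact intervalIntegral.integral_congr fun t _ => (hpt t).symm
    rw [h5]
    linear_combination key
  -- On the vertical sides `‖G‖` is at most `(A + ‖F x‖) / (R - |x|)`.
  have hvert : ∀ s : ℝ, |s| = 1 → Tendsto (fun R : ℝ =>
      ∫ y in (-η)..η, G (((s * R : ℝ) : ℂ) + y * Complex.I)) atTop (𝓝 0) := by
    intro s hs
    rw [tendsto_zero_iff_norm_tendsto_zero]
    have hlim : Tendsto (fun R : ℝ => (A + ‖F x‖) * (R - |x|)⁻¹ * |η - -η|) atTop (𝓝 0) := by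
      have : Tendsto (fun R : ℝ => (R - |x|)⁻¹) atTop (𝓝 0) :=
        tendsto_inv_atTop_zero.comp (tendsto_atTop_add_const_right _ _ tendsto_id)
      simpa using (this.const_mul (A + ‖F x‖)).mul_const |η - -η|
    refine squeeze_zero' (Eventually.of_forall fun _ => norm_nonneg _) ?_ hlim
    filter_upwards [eventually_gt_atTop |x|] with R hR
    refine intervalIntegral.norm_integral_le_of_norm_le_const fun y hy => ?_
    rw [uIoc_of_le (by linarith)] at hy
    have hR0 : 0 < R := (abs_nonneg x).trans_lt hR
    have hmem : ((s * R : ℝ) : ℂ) + y * Complex.I ∈ Dstrip d :=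
      line_mem_Dstrip (lt_of_le_of_lt (abs_le.2 ⟨hy.1.le, hy.2⟩) hη) _
    have hre : R - |x| ≤ ‖((s * R : ℝ) : ℂ) + y * Complex.I - x‖ := by
      have h1 := Complex.abs_re_le_norm (((s * R : ℝ) : ℂ) + y * Complex.I - x)
      have h2 : (((s * R : ℝ) : ℂ) + y * Complex.I - x).re = s * R - x := by
        rw [Complex.sub_re, line_re, Complex.ofReal_re]
      rw [h2] at h1
      have h3 : |s * R| - |x| ≤ |s * R - x| := abs_sub_abs_le_abs_sub _ _
      rw [abs_mul, hs, one_mul, abs_of_pos hR0] at h3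
      linarith
    have hRx : 0 < R - |x| := by linarith
    have hzx : ((s * R : ℝ) : ℂ) + y * Complex.I ≠ x := by
      intro h
      rw [h, sub_self, norm_zero] at hre
      linarith
    rw [hGv _ hzx, norm_mul, norm_inv]
    refine mul_le_mul ?_ (inv_anti₀ hRx hre) (by positivity) (by positivity)
    refine (norm_sub_le _ _).trans (add_le_add ?_ le_rfl)
    refine (hF.bound _ hmem).trans ?_
    have hβ' : Real.exp (-β * |(((s * R : ℝ) : ℂ) + y * Complex.I).re|) ≤ 1 :=
      Real.exp_le_one_iff.2 (by
        have := mul_nonneg hβ.le (abs_nonneg (((s * R : ℝ) : ℂ) + y * Complex.I).re)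
        linarith)
    nlinarith
  have hl1 := intervalIntegral_tendsto_integral (hΦi.sub hPi) tendsto_neg_atTop_atBot
    (tendsto_id (α := ℝ))
  have hl2 : Tendsto (fun R : ℝ => ∫ t in (-R)..R, (Φ t - Pk t)) atTop (𝓝 0) := by
    have h1 := ((hvert (-1) (by norm_num)).const_mul Complex.I).sub
      ((hvert 1 (by norm_num)).const_mul Complex.I)
    simp only [mul_zero, sub_zero] at h1
    refine h1.congr' ?_
    filter_upwards [eventually_gt_atTop 0] with R hR
    rw [hrect R hR]
    simp
  have hfin := tendsto_nhds_unique hl1 hl2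
  have h6 : ∫ t, (Φ - Pk) t = (∫ t, Φ t) - ∫ t, Pk t := integral_sub hΦi hPi
  rw [h6, hPint, sub_eq_zero] at hfin
  exact hfin

end

section

open MeasureTheory Set Filter Topology

/-! ### The error of the cardinal series -/

theorem abs_sinh_im_le_norm_sin (w : ℂ) : |Real.sinh w.im| ≤ ‖Complex.sin w‖ := by
  rw [← sq_le_sq₀ (abs_nonneg _) (norm_nonneg _), sq_abs, ← Complex.normSq_eq_norm_sq]
  have h : Complex.sin w = (((Real.sin w.re * Real.cosh w.im : ℝ) : ℂ)
      + ((Real.cos w.re * Real.sinh w.im : ℝ) : ℂ) * Complex.I) := by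
    rw [Complex.sin_eq]; push_cast; ring
  rw [h, Complex.normSq_add_mul_I]
  have h1 := Real.cosh_sq w.im
  have h2 := Real.sin_sq_add_cos_sq w.re
  nlinarith [sq_nonneg (Real.sin w.re), sq_nonneg (Real.sinh w.im)]

/-- An upper bound for `|1 / sin(πz/h)|` on the line `Im z = η`. -/
theorem norm_inv_sin_line {h η : ℝ} (hh : 0 < h) (h0 : η ≠ 0) (t : ℝ) :
    ‖(Complex.sin (Real.pi * ((t : ℂ) + η * Complex.I) / h))⁻¹‖
      ≤ 1 / Real.sinh (Real.pi * |η| / h) := by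
  have hp : 0 < Real.pi * |η| / h := by
    have := abs_pos.2 h0
    have := Real.pi_pos
    positivity
  have h1 := abs_sinh_im_le_norm_sin (Real.pi * ((t : ℂ) + η * Complex.I) / h)
  have h2 : (Real.pi * ((t : ℂ) + η * Complex.I) / h).im = Real.pi * η / h := by
    rw [Complex.div_ofReal_im, Complex.im_ofReal_mul, line_im]
  rw [h2, Real.abs_sinh] at h1
  have h3 : |Real.pi * η / h| = Real.pi * |η| / h := by
    rw [abs_div, abs_mul, abs_of_pos Real.pi_pos, abs_of_pos hh]
  rw [h3] at h1
  rw [norm_inv, ← one_div]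
  exact one_div_le_one_div_of_le (Real.sinh_pos_iff.2 hp) h1

theorem sin_line_ne {h η : ℝ} (hh : 0 < h) (h0 : η ≠ 0) (t : ℝ) :
    Complex.sin (Real.pi * ((t : ℂ) + η * Complex.I) / h) ≠ 0 := by
  apply sin_ne_zero_of_im
  rw [Complex.div_ofReal_im, Complex.im_ofReal_mul, line_im]
  exact div_ne_zero (mul_ne_zero Real.pi_ne_zero h0) hh.ne'

theorem continuous_inv_sin_line {h η : ℝ} (hh : 0 < h) (h0 : η ≠ 0) :
    Continuous fun t : ℝ => (Complex.sin (Real.pi * ((t : ℂ) + η * Complex.I) / h))⁻¹ :=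
  Continuous.inv₀ (by fun_prop) fun t => sin_line_ne hh h0 t

/-- A bound for the absolute partial sums in the cardinal series of `1/(z - ·)`. -/
def cardBound (h η : ℝ) : ℝ := sqSum + 1 / (2 * (min h |η|) ^ 2) * sqSum

theorem sum_sincF_div_le {h η : ℝ} (hh : 0 < h) (h0 : η ≠ 0) (t y : ℝ) (s : Finset ℤ) :
    ∑ j ∈ s, |sincF j h y| * ‖((t : ℂ) + η * Complex.I - ((j * h : ℝ) : ℂ))⁻¹‖
      ≤ cardBound h η := by
  set m := min h |η| with hm
  have hm0 : 0 < m := lt_min hh (abs_pos.2 h0)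
  have hpt : ∀ j : ℤ, |sincF j h y| * ‖((t : ℂ) + η * Complex.I - ((j * h : ℝ) : ℂ))⁻¹‖
      ≤ 1 / (1 + (y / h - j) ^ 2) + 1 / (2 * m ^ 2) * (1 / (1 + (t / h - j) ^ 2)) := by
    intro j
    have h1 := sincF_sq_le (h := h) j hh y
    have h2 : ‖((t : ℂ) + η * Complex.I - ((j * h : ℝ) : ℂ))⁻¹‖ ^ 2
        ≤ 1 / m ^ 2 * (1 / (1 + (t / h - j) ^ 2)) := by
      rw [norm_inv, inv_pow, ← Complex.normSq_eq_norm_sq]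
      have e : (t : ℂ) + η * Complex.I - ((j * h : ℝ) : ℂ)
          = ((t - j * h : ℝ) : ℂ) + (η : ℝ) * Complex.I := by push_cast; ring
      rw [e, Complex.normSq_add_mul_I, one_div_mul_one_div, ← one_div]
      apply one_div_le_one_div_of_le (by positivity)
      have e1 : t - j * h = h * (t / h - j) := by field_simp
      rw [e1]
      have e2 : m ^ 2 ≤ h ^ 2 := pow_le_pow_left₀ hm0.le (min_le_left _ _) 2
      have e3 : m ^ 2 ≤ η ^ 2 := by
        rw [← sq_abs η]; exact pow_le_pow_left₀ hm0.le (min_le_right _ _) 2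
      nlinarith [sq_nonneg (t / h - j)]
    have h3 : |sincF j h y| ^ 2 ≤ 2 / (1 + (y / h - j) ^ 2) := by rw [sq_abs]; exact h1
    have h4 := two_mul_le_add_sq |sincF j h y| ‖((t : ℂ) + η * Complex.I - ((j * h : ℝ) : ℂ))⁻¹‖
    have e5 : 2 / (1 + (y / h - j) ^ 2) = 2 * (1 / (1 + (y / h - j) ^ 2)) := by ring
    have e6 : 1 / (2 * m ^ 2) * (1 / (1 + (t / h - j) ^ 2))
        = (1 / m ^ 2 * (1 / (1 + (t / h - j) ^ 2))) / 2 := by field_simp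
    rw [e6]
    linarith
  refine (Finset.sum_le_sum fun j _ => hpt j).trans ?_
  rw [Finset.sum_add_distrib, ← Finset.mul_sum]
  unfold cardBound
  have h1 := sum_one_div_le s (y / h)
  have h2 := sum_one_div_le s (t / h)
  have h3 : 0 ≤ 1 / (2 * m ^ 2) := by positivity
  have h4 := mul_le_mul_of_nonneg_left h2 h3
  linarith

variable {F : ℂ → ℂ} {d A β : ℝ}

/-- The integrand of the contour formula for the cardinal-series error, on `Im z = η`. -/
def errInt (F : ℂ → ℂ) (h η y t : ℝ) : ℂ :=
  F ((t : ℂ) + η * Complex.I) *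
    ((Real.sin (Real.pi * y / h) : ℂ) *
      (Complex.sin (Real.pi * ((t : ℂ) + η * Complex.I) / h))⁻¹ *
      ((t : ℂ) + η * Complex.I - y)⁻¹)

theorem norm_errFactor_le {h η : ℝ} (hh : 0 < h) (h0 : η ≠ 0) (y t : ℝ) :
    ‖(Real.sin (Real.pi * y / h) : ℂ) *
      (Complex.sin (Real.pi * ((t : ℂ) + η * Complex.I) / h))⁻¹ *
      ((t : ℂ) + η * Complex.I - y)⁻¹‖ ≤ 1 / Real.sinh (Real.pi * |η| / h) * (1 / |η|) := by
  rw [norm_mul, norm_mul]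
  have h1 := norm_inv_sin_line hh h0 t
  have h2 := norm_line_inv_le h0 t y
  have h3 : ‖(Real.sin (Real.pi * y / h) : ℂ)‖ ≤ 1 := by
    rw [Complex.norm_real]; exact Real.abs_sin_le_one _
  refine mul_le_mul ?_ h2 (norm_nonneg _) ((norm_nonneg _).trans h1)
  calc _ ≤ 1 * (1 / Real.sinh (Real.pi * |η| / h)) :=
        mul_le_mul h3 h1 (norm_nonneg _) zero_le_one
    _ = _ := one_mul _

theorem continuous_errFactor {h η : ℝ} (hh : 0 < h) (h0 : η ≠ 0) (y : ℝ) :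
    Continuous fun t : ℝ => (Real.sin (Real.pi * y / h) : ℂ) *
      (Complex.sin (Real.pi * ((t : ℂ) + η * Complex.I) / h))⁻¹ *
      ((t : ℂ) + η * Complex.I - y)⁻¹ :=
  (continuous_const.mul (continuous_inv_sin_line hh h0)).mul (continuous_line_inv h0 y)

theorem StripDecay.integrable_errInt (hF : StripDecay F d A β) (hβ : 0 < β) {h η : ℝ}
    (hh : 0 < h) (h0 : η ≠ 0) (hη : |η| < d) (y : ℝ) : Integrable (errInt F h η y) :=
  hF.integrable_line_mul hβ hη (continuous_errFactor hh h0 y) (norm_errFactor_le hh h0 y)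

theorem StripDecay.norm_errInt_le (hF : StripDecay F d A β) {h η : ℝ}
    (hh : 0 < h) (h0 : η ≠ 0) (hη : |η| < d) (y t : ℝ) :
    ‖errInt F h η y t‖
      ≤ A * Real.exp (-β * |t|) * (1 / Real.sinh (Real.pi * |η| / h) * (1 / |η|)) := by
  unfold errInt
  rw [norm_mul]
  have h1 := hF.norm_line hη t
  exact mul_le_mul h1 (norm_errFactor_le hh h0 y t) (norm_nonneg _) ((norm_nonneg _).trans h1)

/-- Contour-integral formula for the error of the cardinal series. -/
theorem StripDecay.hasSum_cardinal (hF : StripDecay F d A β) (hβ : 0 < β) {h η : ℝ}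
    (hh : 0 < h) (h0 : 0 < η) (hη : η < d) (y : ℝ) :
    HasSum (fun j : ℤ => 2 * Real.pi * Complex.I * (F ((j * h : ℝ) : ℂ) * (sincF j h y : ℂ)))
      (2 * Real.pi * Complex.I * F y
        - ((∫ t, errInt F h (-η) y t) - ∫ t, errInt F h η y t)) := by
  have h0' : -η ≠ 0 := neg_ne_zero.2 h0.ne'
  have hη1 : |η| < d := by rwa [abs_of_pos h0]
  have hη2 : |-η| < d := by rwa [abs_neg]
  have hA := hF.nonneg (h0.trans hη)
  set f : ℤ → ℝ → ℂ := fun j t => (sincF j h y : ℂ) *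
    (F ((t : ℂ) + (-η : ℝ) * Complex.I) *
        ((t : ℂ) + (-η : ℝ) * Complex.I - ((j * h : ℝ) : ℂ))⁻¹
      - F ((t : ℂ) + η * Complex.I) * ((t : ℂ) + η * Complex.I - ((j * h : ℝ) : ℂ))⁻¹) with hf
  set f₀ : ℝ → ℂ := fun t =>
    (F ((t : ℂ) + (-η : ℝ) * Complex.I) * ((t : ℂ) + (-η : ℝ) * Complex.I - y)⁻¹
        - F ((t : ℂ) + η * Complex.I) * ((t : ℂ) + η * Complex.I - y)⁻¹)
      - (errInt F h (-η) y t - errInt F h η y t) with hf₀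
  have hI : ∀ x : ℝ, Integrable fun t : ℝ =>
      F ((t : ℂ) + (-η : ℝ) * Complex.I) * ((t : ℂ) + (-η : ℝ) * Complex.I - x)⁻¹
        - F ((t : ℂ) + η * Complex.I) * ((t : ℂ) + η * Complex.I - x)⁻¹ := fun x =>
    (hF.integrable_line_mul hβ hη2 (continuous_line_inv h0' x)
      (fun t => norm_line_inv_le h0' t x)).sub
    (hF.integrable_line_mul hβ hη1 (continuous_line_inv h0.ne' x)
      (fun t => norm_line_inv_le h0.ne' t x))
  have hfi : ∀ j, Integrable (f j) := fun j => (hI (j * h)).const_mul _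
  have hfint : ∀ j, ∫ t, f j t
      = 2 * Real.pi * Complex.I * (F ((j * h : ℝ) : ℂ) * (sincF j h y : ℂ)) := by
    intro j
    rw [hf, integral_const_mul, hF.cauchy hβ h0 hη]
    ring
  have hf₀int : ∫ t, f₀ t = 2 * Real.pi * Complex.I * F y
        - ((∫ t, errInt F h (-η) y t) - ∫ t, errInt F h η y t) := by
    have e1 := hF.integrable_errInt hβ hh h0' hη2 y
    have e2 := hF.integrable_errInt hβ hh h0.ne' hη1 y
    have e3 : ∫ t, (errInt F h (-η) y t - errInt F h η y t)
        = (∫ t, errInt F h (-η) y t) - ∫ t, errInt F h η y t := integral_sub e1 e2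
    have e4 := integral_sub (hI y) (e1.sub e2)
    rw [hF.cauchy hβ h0 hη y] at e4
    rw [← e3]
    exact e4
  have hpw : ∀ t, HasSum (fun j => f j t) (f₀ t) := by
    intro t
    have hz : ∀ {e : ℝ}, e ≠ 0 → HasSum (fun j : ℤ => (sincF j h y : ℂ) *
        (F ((t : ℂ) + e * Complex.I) * ((t : ℂ) + e * Complex.I - ((j * h : ℝ) : ℂ))⁻¹))
        (F ((t : ℂ) + e * Complex.I) * ((t : ℂ) + e * Complex.I - y)⁻¹ - errInt F h e y t) := by
      intro e he
      have h1 := (hasSum_sincF_div hh y (z := (t : ℂ) + e * Complex.I)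
        (by rw [line_im]; exact he)).mul_left (F ((t : ℂ) + e * Complex.I))
      have hv : F ((t : ℂ) + e * Complex.I) * ((t : ℂ) + e * Complex.I - y)⁻¹
          - errInt F h e y t = F ((t : ℂ) + e * Complex.I) *
          ((1 - Real.sin (Real.pi * y / h) / Complex.sin (Real.pi * (t + e * Complex.I) / h))
            / (t + e * Complex.I - y)) := by
        unfold errInt
        simp only [div_eq_mul_inv]
        ring
      rw [hv]
      refine h1.congr_fun fun j => ?_
      push_cast
      simp only [div_eq_mul_inv]
      ring
    have h2 := (hz h0').sub (hz h0.ne')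
    have hv : f₀ t = F ((t : ℂ) + (-η : ℝ) * Complex.I) * ((t : ℂ) + (-η : ℝ) * Complex.I - y)⁻¹
        - errInt F h (-η) y t - (F ((t : ℂ) + η * Complex.I) * ((t : ℂ) + η * Complex.I - y)⁻¹
        - errInt F h η y t) := by
      simp only [hf₀]; ring
    rw [hv]
    refine h2.congr_fun fun j => ?_
    simp only [hf]
    ring
  have hdom : ∀ (s : Finset ℤ) (t : ℝ), ‖∑ j ∈ s, f j t‖
      ≤ (A * (cardBound h (-η) + cardBound h η)) * Real.exp (-β * |t|) := by
    intro s t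
    have h1 := hF.norm_line hη1 t
    have h2 := hF.norm_line hη2 t
    have h3 := sum_sincF_div_le hh h0' t y s
    have h4 := sum_sincF_div_le hh h0.ne' t y s
    have h5 : 0 ≤ A * Real.exp (-β * |t|) := (norm_nonneg _).trans h1
    refine (norm_sum_le _ _).trans ?_
    calc ∑ j ∈ s, ‖f j t‖ ≤ ∑ j ∈ s, ((A * Real.exp (-β * |t|)) *
          (|sincF j h y| * ‖((t : ℂ) + (-η : ℝ) * Complex.I - ((j * h : ℝ) : ℂ))⁻¹‖)
          + (A * Real.exp (-β * |t|)) *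
          (|sincF j h y| * ‖((t : ℂ) + η * Complex.I - ((j * h : ℝ) : ℂ))⁻¹‖)) := by
          refine Finset.sum_le_sum fun j _ => ?_
          rw [hf]
          simp only
          rw [norm_mul, Complex.norm_real, Real.norm_eq_abs]
          have e1 := norm_sub_le (F ((t : ℂ) + (-η : ℝ) * Complex.I) *
              ((t : ℂ) + (-η : ℝ) * Complex.I - ((j * h : ℝ) : ℂ))⁻¹)
            (F ((t : ℂ) + η * Complex.I) * ((t : ℂ) + η * Complex.I - ((j * h : ℝ) : ℂ))⁻¹)
          rw [norm_mul, norm_mul] at e1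
          have e2 := mul_le_mul_of_nonneg_right h2
            (norm_nonneg (((t : ℂ) + (-η : ℝ) * Complex.I - ((j * h : ℝ) : ℂ))⁻¹))
          have e3 := mul_le_mul_of_nonneg_right h1
            (norm_nonneg (((t : ℂ) + η * Complex.I - ((j * h : ℝ) : ℂ))⁻¹))
          have e4 := mul_le_mul_of_nonneg_left (e1.trans (add_le_add e2 e3))
            (abs_nonneg (sincF j h y))
          refine e4.trans (le_of_eq ?_)
          ring
      _ ≤ A * Real.exp (-β * |t|) * cardBound h (-η) + A * Real.exp (-β * |t|) * cardBound h η := by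
          rw [Finset.sum_add_distrib, ← Finset.mul_sum, ← Finset.mul_sum]
          exact add_le_add (mul_le_mul_of_nonneg_left h3 h5) (mul_le_mul_of_nonneg_left h4 h5)
      _ = _ := by ring
  have hlim : Tendsto (fun s : Finset ℤ => ∫ t, ∑ j ∈ s, f j t) atTop (𝓝 (∫ t, f₀ t)) := by
    refine tendsto_integral_filter_of_dominated_convergence _
      (Eventually.of_forall fun s =>
        (integrable_finsetSum s fun j _ => hfi j).aestronglyMeasurable)
      (Eventually.of_forall fun s => Eventually.of_forall (hdom s))
      ((integrable_exp_neg_abs hβ).const_mul _)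
      (Eventually.of_forall fun t => hpw t)
  rw [hf₀int] at hlim
  refine hlim.congr fun s => ?_
  rw [integral_finsetSum s fun j _ => hfi j]
  exact Finset.sum_congr rfl fun j _ => hfint j

end

section

open MeasureTheory Set Filter Topology

/-! ### Truncated sinc interpolation and sinc indefinite integration -/

variable {F : ℂ → ℂ} {d A β : ℝ}

theorem hasSum_exp_tail {c : ℝ} (hc : 0 < c) (N : ℕ) :
    HasSum (fun j : ℤ => if (N : ℤ) < |j| then Real.exp (-c * |(j : ℝ)|) else 0)
      (Real.exp (-c * N) * (Real.exp c - 1)⁻¹ + Real.exp (-c * N) * (Real.exp c - 1)⁻¹) := by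
  set q := Real.exp (-c) with hq
  have hq1 : q < 1 := by rw [hq]; rw [Real.exp_lt_one_iff]; linarith
  have hq0 : 0 < q := Real.exp_pos _
  have hec : Real.exp c = q⁻¹ := by rw [hq, Real.exp_neg, inv_inv]
  have hgeo := (hasSum_geometric_of_lt_one hq0.le hq1).mul_left (q ^ (N + 1))
  have hval : q ^ (N + 1) * (1 - q)⁻¹ = Real.exp (-c * N) * (Real.exp c - 1)⁻¹ := by
    have e1 : Real.exp (-c * N) = q ^ N := by rw [hq, ← Real.exp_nat_mul]; ring_nf
    rw [e1, hec]
    have : 1 - q ≠ 0 := by linarith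
    field_simp
    ring
  have hexp : ∀ n : ℕ, Real.exp (-c * (n : ℝ)) = q ^ n := fun n => by
    rw [hq, ← Real.exp_nat_mul]; ring_nf
  rw [hval] at hgeo
  refine HasSum.of_nat_of_neg_add_one ?_ ?_
  · have h1 := (hasSum_nat_add_iff (f := fun n : ℕ =>
      if (N : ℤ) < |(n : ℤ)| then Real.exp (-c * |((n : ℤ) : ℝ)|) else 0) (N + 1)
      (g := Real.exp (-c * N) * (Real.exp c - 1)⁻¹)).1 (by
        refine hgeo.congr_fun fun n => ?_
        have : (N : ℤ) < |((n + (N + 1) : ℕ) : ℤ)| := by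
          rw [Nat.abs_cast]; push_cast; omega
        rw [if_pos this, Int.cast_natCast, Nat.abs_cast, hexp]
        ring)
    rw [Finset.sum_eq_zero, add_zero] at h1
    · exact h1
    · intro n hn
      rw [Finset.mem_range] at hn
      have : ¬ (N : ℤ) < |(n : ℤ)| := by rw [Nat.abs_cast]; omega
      rw [if_neg this]
  · have h1 := (hasSum_nat_add_iff (f := fun n : ℕ =>
      if (N : ℤ) < |(-((n : ℤ) + 1))| then Real.exp (-c * |((-((n : ℤ) + 1) : ℤ) : ℝ)|) else 0) N
      (g := Real.exp (-c * N) * (Real.exp c - 1)⁻¹)).1 (by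
        refine hgeo.congr_fun fun n => ?_
        have e : -((((n + N : ℕ) : ℤ)) + 1) = -(((n + N + 1 : ℕ) : ℤ)) := by push_cast; ring
        have : (N : ℤ) < |-((((n + N : ℕ) : ℤ)) + 1)| := by
          rw [e, abs_neg, Nat.abs_cast]; push_cast; omega
        rw [if_pos this, e, Int.cast_neg, abs_neg, Int.cast_natCast, Nat.abs_cast, hexp]
        ring)
    rw [Finset.sum_eq_zero, add_zero] at h1
    · exact h1
    · intro n hn
      rw [Finset.mem_range] at hn
      have e : -((n : ℤ) + 1) = -(((n + 1 : ℕ) : ℤ)) := by push_cast; ring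
      have : ¬ (N : ℤ) < |-((n : ℤ) + 1)| := by rw [e, abs_neg, Nat.abs_cast]; push_cast; omega
      rw [if_neg this]

theorem sum_exp_tail_le {c : ℝ} (hc : 0 < c) (N : ℕ) (s : Finset ℤ)
    (hs : ∀ j ∈ s, (N : ℤ) < |j|) :
    ∑ j ∈ s, Real.exp (-c * |(j : ℝ)|) ≤ 2 * Real.exp (-c * N) / c := by
  have h1 := sum_le_hasSum s (fun j _ => by
    split_ifs
    · exact (Real.exp_pos _).le
    · exact le_rfl) (hasSum_exp_tail hc N)
  rw [Finset.sum_congr rfl fun j hj => if_pos (hs j hj)] at h1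
  refine h1.trans ?_
  have h2 : c ≤ Real.exp c - 1 := by have := Real.add_one_le_exp c; linarith
  have h3 : (Real.exp c - 1)⁻¹ ≤ c⁻¹ := inv_anti₀ hc h2
  have h4 := mul_le_mul_of_nonneg_left h3 (Real.exp_pos (-c * N)).le
  rw [mul_div_assoc, div_eq_mul_inv]
  linarith

theorem summable_exp_abs {c : ℝ} (hc : 0 < c) : Summable fun j : ℤ => Real.exp (-c * |(j : ℝ)|) := by
  refine summable_of_sum_le (c := 1 + 2 / c) (fun j => (Real.exp_pos _).le) fun s => ?_
  rw [← Finset.sum_filter_add_sum_filter_not s (fun j => j = 0)]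
  refine add_le_add ?_ ?_
  · calc _ ≤ ∑ j ∈ ({0} : Finset ℤ), Real.exp (-c * |(j : ℝ)|) :=
          Finset.sum_le_sum_of_subset_of_nonneg (fun j hj => by
            simpa using (Finset.mem_filter.1 hj).2) fun _ _ _ => (Real.exp_pos _).le
      _ = 1 := by simp
  · have := sum_exp_tail_le hc 0 (s.filter fun j => ¬ j = 0) (fun j hj => by
      simpa using (Finset.mem_filter.1 hj).2)
    simpa using this

theorem sum_exp_abs_le {c : ℝ} (hc : 0 < c) (s : Finset ℤ) :
    ∑ j ∈ s, Real.exp (-c * |(j : ℝ)|) ≤ 1 + 2 / c := by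
  rw [← Finset.sum_filter_add_sum_filter_not s (fun j => j = 0)]
  refine add_le_add ?_ ?_
  · calc _ ≤ ∑ j ∈ ({0} : Finset ℤ), Real.exp (-c * |(j : ℝ)|) :=
          Finset.sum_le_sum_of_subset_of_nonneg (fun j hj => by
            simpa using (Finset.mem_filter.1 hj).2) fun _ _ _ => (Real.exp_pos _).le
      _ = 1 := by simp
  · have := sum_exp_tail_le hc 0 (s.filter fun j => ¬ j = 0) (fun j hj => by
      simpa using (Finset.mem_filter.1 hj).2)
    simpa using this

theorem StripDecay.norm_node (hF : StripDecay F d A β) (hd : 0 < d) {h : ℝ} (hh : 0 < h) (j : ℤ) :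
    ‖F ((j * h : ℝ) : ℂ)‖ ≤ A * Real.exp (-(β * h) * |(j : ℝ)|) := by
  have := hF.bound ((j * h : ℝ) : ℂ) (by simpa [Dstrip] using hd)
  rw [Complex.ofReal_re, abs_mul, abs_of_pos hh] at this
  refine this.trans (le_of_eq ?_)
  congr 2; ring

/-- Truncation of a series whose coefficients are the node values of `F`. -/
theorem StripDecay.norm_trunc_le (hF : StripDecay F d A β) (hd : 0 < d) (hβ : 0 < β) {h : ℝ}
    (hh : 0 < h) (N : ℕ) (w : ℤ → ℝ) {B : ℝ} (hw : ∀ j, |w j| ≤ B) :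
    ‖(∑' j : ℤ, F ((j * h : ℝ) : ℂ) * (w j : ℂ))
        - ∑ j ∈ Finset.Icc (-(N : ℤ)) N, F ((j * h : ℝ) : ℂ) * (w j : ℂ)‖
      ≤ B * A * (2 * Real.exp (-β * N * h) / (β * h)) := by
  have hA := hF.nonneg hd
  have hB : 0 ≤ B := (abs_nonneg _).trans (hw 0)
  have hc : 0 < β * h := by positivity
  have hpt : ∀ j : ℤ, ‖F ((j * h : ℝ) : ℂ) * (w j : ℂ)‖
      ≤ B * A * Real.exp (-(β * h) * |(j : ℝ)|) := by
    intro j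
    rw [norm_mul, Complex.norm_real, Real.norm_eq_abs]
    have h1 := hF.norm_node hd hh j
    calc _ ≤ A * Real.exp (-(β * h) * |(j : ℝ)|) * B :=
          mul_le_mul h1 (hw j) (abs_nonneg _) (by positivity)
      _ = _ := by ring
  have hs : Summable fun j : ℤ => F ((j * h : ℝ) : ℂ) * (w j : ℂ) :=
    Summable.of_norm_bounded ((summable_exp_abs hc).mul_left (B * A)) hpt
  have hlim := (hs.hasSum.sub_const
    (∑ j ∈ Finset.Icc (-(N : ℤ)) N, F ((j * h : ℝ) : ℂ) * (w j : ℂ)) :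
    Tendsto _ _ _).norm
  refine le_of_tendsto hlim ?_
  filter_upwards [eventually_ge_atTop (Finset.Icc (-(N : ℤ)) N)] with s hs'
  rw [← Finset.sum_sdiff hs', add_sub_cancel_right]
  refine (norm_sum_le _ _).trans ((Finset.sum_le_sum fun j _ => hpt j).trans ?_)
  rw [← Finset.mul_sum]
  refine mul_le_mul_of_nonneg_left ?_ (by positivity)
  have h2 := sum_exp_tail_le hc N (s \ Finset.Icc (-(N : ℤ)) N) (fun j hj => by
    rw [Finset.mem_sdiff, Finset.mem_Icc] at hj
    by_contra hcon
    exact hj.2 (abs_le.1 (not_lt.1 hcon)))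
  refine h2.trans (le_of_eq ?_)
  congr 3; ring

theorem StripDecay.summable_node (hF : StripDecay F d A β) (hd : 0 < d) (hβ : 0 < β) {h : ℝ}
    (hh : 0 < h) : Summable fun j : ℤ => ‖F ((j * h : ℝ) : ℂ)‖ :=
  Summable.of_nonneg_of_le (fun _ => norm_nonneg _) (hF.norm_node hd hh)
    ((summable_exp_abs (by positivity)).mul_left A)

/-- Replacing `η < d` by `d` in a bound that is continuous in the strip width. -/
theorem le_limit_width {h X Y : ℝ} (hh : 0 < h) (hd : 0 < d)
    (H : ∀ η, 0 < η → η < d → X ≤ Y / (η * Real.sinh (Real.pi * η / h))) :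
    X ≤ Y / (d * Real.sinh (Real.pi * d / h)) := by
  have hc : ContinuousAt (fun η : ℝ => Y / (η * Real.sinh (Real.pi * η / h))) d := by
    have hp : 0 < Real.sinh (Real.pi * d / h) :=
      Real.sinh_pos_iff.2 (by have := Real.pi_pos; positivity)
    refine ContinuousAt.div continuousAt_const ?_ (by positivity)
    exact (continuous_id.mul (Real.continuous_sinh.comp (by fun_prop))).continuousAt
  refine ge_of_tendsto (hc.tendsto.mono_left (nhdsWithin_le_nhds (s := Iio d))) ?_
  filter_upwards [Ioo_mem_nhdsLT hd] with η hη
  exact H η hη.1 hη.2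

theorem norm_two_pi_I_mul (w : ℂ) : ‖2 * (Real.pi : ℂ) * Complex.I * w‖ = 2 * Real.pi * ‖w‖ := by
  rw [norm_mul, norm_mul, norm_mul, Complex.norm_I, Complex.norm_real, Complex.norm_two,
    Real.norm_eq_abs, abs_of_pos Real.pi_pos, mul_one]

/-- The cardinal series is exponentially accurate in `d/h`: both contour integrals in
`StripDecay.hasSum_cardinal` carry the factor `1/sin(πz/h)`. -/
theorem StripDecay.norm_cardinal_error_le (hF : StripDecay F d A β) (hd : 0 < d) (hβ : 0 < β)
    {h : ℝ} (hh : 0 < h) (y : ℝ) :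
    ‖F y - ∑' j : ℤ, F ((j * h : ℝ) : ℂ) * (sincF j h y : ℂ)‖
      ≤ 2 * A / (Real.pi * β) / (d * Real.sinh (Real.pi * d / h)) := by
  refine le_limit_width hh hd fun η h0 hη => ?_
  have h1 := (hF.hasSum_cardinal hβ hh h0 hη y).tsum_eq
  rw [tsum_mul_left] at h1
  have h2 : 2 * Real.pi * Complex.I *
      (F y - ∑' j : ℤ, F ((j * h : ℝ) : ℂ) * (sincF j h y : ℂ))
      = (∫ t, errInt F h (-η) y t) - ∫ t, errInt F h η y t := by
    linear_combination -h1
  have h3 : ∀ e : ℝ, |e| = η → ‖∫ t, errInt F h e y t‖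
      ≤ 2 * A / β * (1 / Real.sinh (Real.pi * η / h) * (1 / η)) := by
    intro e he
    have he0 : e ≠ 0 := by rintro rfl; simp at he; linarith
    have := norm_integral_le_of_norm_le
      (((integrable_exp_neg_abs hβ).const_mul A).mul_const
        (1 / Real.sinh (Real.pi * |e| / h) * (1 / |e|)))
      (Eventually.of_forall (hF.norm_errInt_le hh he0 (by rw [he]; exact hη) y))
    rw [integral_mul_const, integral_const_mul, integral_exp_neg_abs hβ, he] at this
    refine this.trans (le_of_eq ?_)
    ring
  have h4 := congrArg norm h2
  rw [norm_two_pi_I_mul] at h4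
  have h5 := (norm_sub_le (∫ t, errInt F h (-η) y t) (∫ t, errInt F h η y t)).trans
    (add_le_add (h3 (-η) (by rw [abs_neg, abs_of_pos h0])) (h3 η (abs_of_pos h0)))
  rw [← h4] at h5
  have hpi := Real.pi_pos
  rw [← le_div_iff₀' (by positivity)] at h5
  refine h5.trans (le_of_eq ?_)
  have hs : 0 < Real.sinh (Real.pi * η / h) := Real.sinh_pos_iff.2 (by positivity)
  field_simp
  ring

/-- The oscillatory integral controlling sinc indefinite integration: one integration by parts
gains the factor `h`. -/
theorem norm_osc_integral_le {h η : ℝ} (hh : 0 < h) (h0 : η ≠ 0) (t : ℝ) {y x : ℝ} (hyx : y ≤ x) :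
    ‖∫ s in y..x, (Real.sin (Real.pi * s / h) : ℂ) * ((t : ℂ) + η * Complex.I - s)⁻¹‖
      ≤ h / Real.pi * ((2 + Real.pi) / |η|) := by
  have hpi := Real.pi_pos
  have hη := abs_pos.2 h0
  set z : ℂ := (t : ℂ) + η * Complex.I with hz
  have hu : ∀ s : ℝ, HasDerivAt (fun s : ℝ => (z - s)⁻¹) ((z - s)⁻¹ ^ 2) s := by
    intro s
    have h1 : HasDerivAt (fun s : ℝ => z - (s : ℂ)) (-1) s := by
      simpa using (Complex.ofRealCLM.hasDerivAt (x := s)).const_sub z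
    refine (h1.inv (line_sub_ne h0 t s)).congr_deriv ?_
    simp [div_eq_mul_inv, inv_pow]
  have hv : ∀ s : ℝ, HasDerivAt (fun s : ℝ => ((-(h / Real.pi) * Real.cos (Real.pi * s / h) : ℝ) : ℂ))
      ((Real.sin (Real.pi * s / h) : ℝ) : ℂ) s := by
    intro s
    have h1 : HasDerivAt (fun s : ℝ => Real.pi * s / h) (Real.pi / h) s := by
      simpa using ((hasDerivAt_id s).const_mul Real.pi).div_const h
    have h2 := (h1.cos.const_mul (-(h / Real.pi))).ofReal_comp
    refine h2.congr_deriv ?_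
    norm_cast
    field_simp
  have hcu : Continuous fun s : ℝ => (z - (s : ℂ))⁻¹ :=
    Continuous.inv₀ (by fun_prop) fun s => line_sub_ne h0 t s
  have hparts := intervalIntegral.integral_mul_deriv_eq_deriv_mul (a := y) (b := x)
    (fun s _ => hu s) (fun s _ => hv s) ((hcu.pow 2).intervalIntegrable _ _)
    ((by fun_prop : Continuous fun s : ℝ =>
      ((Real.sin (Real.pi * s / h) : ℝ) : ℂ)).intervalIntegrable _ _)
  have hcomm : ∫ s in y..x, (Real.sin (Real.pi * s / h) : ℂ) * (z - s)⁻¹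
      = ∫ s in y..x, (z - s)⁻¹ * (Real.sin (Real.pi * s / h) : ℂ) :=
    intervalIntegral.integral_congr fun s _ => mul_comm _ _
  rw [hcomm, hparts]
  have hvb : ∀ s : ℝ, ‖((-(h / Real.pi) * Real.cos (Real.pi * s / h) : ℝ) : ℂ)‖ ≤ h / Real.pi := by
    intro s
    rw [Complex.norm_real, Real.norm_eq_abs, abs_mul, abs_neg, abs_of_pos (by positivity)]
    exact mul_le_of_le_one_right (by positivity) (Real.abs_cos_le_one _)
  have hbd : ∀ s : ℝ, ‖(z - s)⁻¹ * ((-(h / Real.pi) * Real.cos (Real.pi * s / h) : ℝ) : ℂ)‖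
      ≤ 1 / |η| * (h / Real.pi) := by
    intro s
    rw [norm_mul]
    exact mul_le_mul (norm_line_inv_le h0 t s) (hvb s) (norm_nonneg _) (by positivity)
  have hIntg : ‖∫ s in y..x, (z - s)⁻¹ ^ 2 *
      ((-(h / Real.pi) * Real.cos (Real.pi * s / h) : ℝ) : ℂ)‖ ≤ h / Real.pi * (Real.pi / |η|) := by
    have hgi : Integrable fun s : ℝ =>
        h / (Real.pi * (2 * |η|)) * (2 * |η| / ((s - t) ^ 2 + |η| ^ 2)) :=
      (integrable_poisson hη t).const_mul _
    have hle := intervalIntegral.norm_integral_le_of_norm_le hyx (μ := volume)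
      (f := fun s : ℝ => (z - s)⁻¹ ^ 2 *
        ((-(h / Real.pi) * Real.cos (Real.pi * s / h) : ℝ) : ℂ))
      (g := fun s : ℝ => h / (Real.pi * (2 * |η|)) * (2 * |η| / ((s - t) ^ 2 + |η| ^ 2)))
      (Eventually.of_forall fun s _ => by
        rw [norm_mul, norm_pow, norm_inv, inv_pow, ← Complex.normSq_eq_norm_sq]
        have e : z - s = ((t - s : ℝ) : ℂ) + (η : ℝ) * Complex.I := by
          rw [hz]; push_cast; ring
        rw [e, Complex.normSq_add_mul_I]
        have e2 : (t - s) ^ 2 + η ^ 2 = (s - t) ^ 2 + |η| ^ 2 := by rw [sq_abs]; ring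
        rw [e2]
        have e3 : 0 < (s - t) ^ 2 + |η| ^ 2 := by positivity
        calc _ ≤ ((s - t) ^ 2 + |η| ^ 2)⁻¹ * (h / Real.pi) :=
              mul_le_mul_of_nonneg_left (hvb s) (by positivity)
          _ = _ := by field_simp)
      hgi.intervalIntegrable
    refine hle.trans ?_
    rw [intervalIntegral.integral_of_le hyx]
    refine (setIntegral_le_integral hgi (Eventually.of_forall fun s => by
      simp only [Pi.zero_apply]; positivity)).trans ?_
    rw [integral_const_mul, integral_poisson hη]
    apply le_of_eq
    field_simp
  refine (norm_sub_le _ _).trans ((add_le_add ((norm_sub_le _ _).trans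
    (add_le_add (hbd x) (hbd y))) hIntg).trans (le_of_eq ?_))
  field_simp
  ring

theorem continuous_errInt_uncurry (hF : StripDecay F d A β) {h η : ℝ} (hh : 0 < h) (h0 : η ≠ 0)
    (hη : |η| < d) : Continuous (Function.uncurry (errInt F h η)) := by
  unfold errInt Function.uncurry
  refine ((hF.continuous_line hη).comp continuous_snd).mul (Continuous.mul (Continuous.mul
    (by fun_prop) ((continuous_inv_sin_line hh h0).comp continuous_snd)) ?_)
  exact Continuous.inv₀ (by fun_prop) fun p => line_sub_ne h0 p.2 p.1

theorem StripDecay.integrable_errInt_prod (hF : StripDecay F d A β) (hβ : 0 < β) {h η : ℝ}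
    (hh : 0 < h) (h0 : η ≠ 0) (hη : |η| < d) (y x : ℝ) :
    Integrable (Function.uncurry (errInt F h η)) ((volume.restrict (uIoc y x)).prod volume) := by
  have : IsFiniteMeasure (volume.restrict (uIoc y x)) :=
    ⟨by rw [Measure.restrict_apply_univ, uIoc]; exact measure_Ioc_lt_top⟩
  have h1 : Integrable (fun p : ℝ × ℝ => A * Real.exp (-β * |p.2|) *
      (1 / Real.sinh (Real.pi * |η| / h) * (1 / |η|))) ((volume.restrict (uIoc y x)).prod volume) :=
    Integrable.comp_snd (((integrable_exp_neg_abs hβ).const_mul A).mul_const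
      (1 / Real.sinh (Real.pi * |η| / h) * (1 / |η|))) _
  exact h1.mono' (continuous_errInt_uncurry hF hh h0 hη).aestronglyMeasurable
    (Eventually.of_forall fun p => hF.norm_errInt_le hh h0 hη p.1 p.2)

theorem StripDecay.norm_integral_errInt_le (hF : StripDecay F d A β) (hβ : 0 < β) {h η : ℝ}
    (hh : 0 < h) (h0 : η ≠ 0) (hη : |η| < d) {y x : ℝ} (hyx : y ≤ x) :
    ‖∫ s in y..x, ∫ t, errInt F h η s t‖
      ≤ 2 * A / β * (1 / Real.sinh (Real.pi * |η| / h) * (h / Real.pi * ((2 + Real.pi) / |η|))) := by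
  rw [intervalIntegral_integral_swap (hF.integrable_errInt_prod hβ hh h0 hη y x)]
  have := norm_integral_le_of_norm_le (f := fun t => ∫ s in y..x, errInt F h η s t)
      (((integrable_exp_neg_abs hβ).const_mul A).mul_const
        (1 / Real.sinh (Real.pi * |η| / h) * (h / Real.pi * ((2 + Real.pi) / |η|))))
      (Eventually.of_forall fun t => by
        have e : ∫ s in y..x, errInt F h η s t
            = (F ((t : ℂ) + η * Complex.I) *
              (Complex.sin (Real.pi * ((t : ℂ) + η * Complex.I) / h))⁻¹) *
              ∫ s in y..x, (Real.sin (Real.pi * s / h) : ℂ) * ((t : ℂ) + η * Complex.I - s)⁻¹ := by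
          rw [← intervalIntegral.integral_const_mul]
          refine intervalIntegral.integral_congr fun s _ => ?_
          simp only [errInt]
          ring
        rw [e, norm_mul, norm_mul, mul_assoc]
        have h1 := hF.norm_line hη t
        have h2 := norm_inv_sin_line hh h0 t
        have h3 := norm_osc_integral_le hh h0 t hyx
        exact mul_le_mul h1 (mul_le_mul h2 h3 (norm_nonneg _) ((norm_nonneg _).trans h2))
          (by positivity) ((norm_nonneg _).trans h1))
  rw [integral_mul_const, integral_const_mul, integral_exp_neg_abs hβ] at this
  refine this.trans (le_of_eq ?_)
  ring

theorem StripDecay.integrable_real (hF : StripDecay F d A β) (hd : 0 < d) (hβ : 0 < β) :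
    Integrable fun x : ℝ => F x := by
  have := hF.integrable_line_mul hβ (η := 0) (by simpa using hd) (w := fun _ => 1)
    continuous_const (B := 1) (by simp)
  simpa using this

/-- Integrating the contour formula for the cardinal series up to `x` gives the error of sinc
indefinite integration. -/
theorem StripDecay.norm_indef_error_le (hF : StripDecay F d A β) (hd : 0 < d) (hβ : 0 < β)
    {h : ℝ} (hh : 0 < h) (x : ℝ) :
    ‖(∫ s in Iic x, F s) - ∑' j : ℤ, F ((j * h : ℝ) : ℂ) * (Jfun j h x : ℂ)‖
      ≤ 2 * A / (Real.pi * β) * (h * (2 + Real.pi) / Real.pi) /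
        (d * Real.sinh (Real.pi * d / h)) := by
  refine le_limit_width hh hd fun η h0 hη => ?_
  have hpi := Real.pi_pos
  have hη1 : |η| < d := by rwa [abs_of_pos h0]
  have hη2 : |-η| < d := by rwa [abs_neg]
  have h0' : -η ≠ 0 := neg_ne_zero.2 h0.ne'
  have hFi := hF.integrable_real hd hβ
  have hFn := hF.summable_node hd hβ hh
  set B := 2 * A / (Real.pi * β) * (h * (2 + Real.pi) / Real.pi) /
        (η * Real.sinh (Real.pi * η / h)) with hB
  have hsinh : 0 < Real.sinh (Real.pi * η / h) := Real.sinh_pos_iff.2 (by positivity)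
  have hfin : ∀ y, y ≤ x → ‖(∫ s in y..x, F s)
      - ∑' j : ℤ, F ((j * h : ℝ) : ℂ) * ((Jfun j h x - Jfun j h y : ℝ) : ℂ)‖ ≤ B := by
    intro y hyx
    have hs := intervalIntegral.hasSum_integral_of_dominated_convergence (μ := volume)
      (a := y) (b := x)
      (F := fun (j : ℤ) (s : ℝ) =>
        2 * Real.pi * Complex.I * (F ((j * h : ℝ) : ℂ) * (sincF j h s : ℂ)))
      (fun j _ => 2 * Real.pi * ‖F ((j * h : ℝ) : ℂ)‖)
      (fun j => (Continuous.aestronglyMeasurable (by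
        have := continuous_sincF j hh
        fun_prop)))
      (fun j => Eventually.of_forall fun s _ => by
        rw [norm_two_pi_I_mul, norm_mul, Complex.norm_real, Real.norm_eq_abs]
        have := mul_le_of_le_one_right (norm_nonneg (F ((j * h : ℝ) : ℂ)))
          (abs_sincF_le_one j hh s)
        exact mul_le_mul_of_nonneg_left this (by positivity))
      (Eventually.of_forall fun s _ => hFn.mul_left _)
      (by simp)
      (Eventually.of_forall fun s _ => hF.hasSum_cardinal hβ hh h0 hη s)
    have hi1 : IntervalIntegrable (fun s => ∫ t, errInt F h (-η) s t) volume y x :=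
      intervalIntegrable_iff.2 (hF.integrable_errInt_prod hβ hh h0' hη2 y x).integral_prod_left
    have hi2 : IntervalIntegrable (fun s => ∫ t, errInt F h η s t) volume y x :=
      intervalIntegrable_iff.2 (hF.integrable_errInt_prod hβ hh h0.ne' hη1 y x).integral_prod_left
    have hi3 : IntervalIntegrable (fun s : ℝ => 2 * Real.pi * Complex.I * F s) volume y x :=
      (hFi.const_mul _).intervalIntegrable
    rw [intervalIntegral.integral_sub hi3 (hi1.sub hi2), intervalIntegral.integral_sub hi1 hi2,
      intervalIntegral.integral_const_mul] at hs
    have h1 := hs.tsum_eq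
    have h2 : ∀ j : ℤ, ∫ s in y..x, 2 * Real.pi * Complex.I *
        (F ((j * h : ℝ) : ℂ) * (sincF j h s : ℂ))
        = 2 * Real.pi * Complex.I *
          (F ((j * h : ℝ) : ℂ) * ((Jfun j h x - Jfun j h y : ℝ) : ℂ)) := by
      intro j
      rw [Jfun_sub j hh, intervalIntegral.integral_const_mul, intervalIntegral.integral_const_mul,
        intervalIntegral.integral_ofReal]
    simp_rw [h2] at h1
    rw [tsum_mul_left] at h1
    have h3 : 2 * Real.pi * Complex.I * ((∫ s in y..x, F s)
        - ∑' j : ℤ, F ((j * h : ℝ) : ℂ) * ((Jfun j h x - Jfun j h y : ℝ) : ℂ))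
        = (∫ s in y..x, ∫ t, errInt F h (-η) s t) - ∫ s in y..x, ∫ t, errInt F h η s t := by
      linear_combination -h1
    have h4 := congrArg norm h3
    rw [norm_two_pi_I_mul] at h4
    have h5 := (norm_sub_le (∫ s in y..x, ∫ t, errInt F h (-η) s t)
      (∫ s in y..x, ∫ t, errInt F h η s t)).trans
      (add_le_add (hF.norm_integral_errInt_le hβ hh h0' hη2 hyx)
        (hF.norm_integral_errInt_le hβ hh h0.ne' hη1 hyx))
    rw [← h4, ← le_div_iff₀' (by positivity)] at h5
    refine h5.trans (le_of_eq ?_)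
    rw [abs_neg, abs_of_pos h0, hB]
    field_simp
    ring
  have hlim1 := intervalIntegral_tendsto_integral_Iic x hFi.integrableOn (tendsto_id (α := ℝ))
  have hlim2 : Tendsto (fun y => ∑' j : ℤ, F ((j * h : ℝ) : ℂ) *
      ((Jfun j h x - Jfun j h y : ℝ) : ℂ)) atBot
      (𝓝 (∑' j : ℤ, F ((j * h : ℝ) : ℂ) * (Jfun j h x : ℂ))) := by
    refine tendsto_tsum_of_dominated_convergence (hFn.mul_right (4 * h)) (fun j => ?_)
      (Eventually.of_forall fun y j => ?_)
    · have h1 := (tendsto_const_nhds (x := Jfun j h x)).sub (tendsto_Jfun_atBot j hh)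
      rw [sub_zero] at h1
      exact ((Complex.continuous_ofReal.tendsto _).comp h1).const_mul _
    · rw [norm_mul, Complex.norm_real, Real.norm_eq_abs]
      refine mul_le_mul_of_nonneg_left ?_ (norm_nonneg _)
      have h1 := abs_sub (Jfun j h x) (Jfun j h y)
      have h2 := abs_Jfun_le j hh x
      have h3 := abs_Jfun_le j hh y
      linarith
  refine le_of_tendsto (hlim1.sub hlim2).norm ?_
  filter_upwards [eventually_le_atBot x] with y hy
  exact hfin y hy

end

section

open MeasureTheory Set Filter Topology

/-! ### The real SE transformation -/

theorem tanh_half_eq (x : ℝ) : Real.tanh (x / 2) = (Real.exp x - 1) / (Real.exp x + 1) := by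
  have h : Real.exp x = Real.exp (x / 2) * Real.exp (x / 2) := by rw [← Real.exp_add]; ring_nf
  rw [Real.tanh_eq, h, Real.exp_neg]
  have := Real.exp_pos (x / 2)
  field_simp

theorem psiSE_eq (a b x : ℝ) : psiSE a b x = a + (b - a) * (Real.exp x / (1 + Real.exp x)) := by
  unfold psiSE
  rw [tanh_half_eq]
  have := Real.exp_pos x
  field_simp
  ring

theorem psiSE_sub_a (a b x : ℝ) : psiSE a b x - a = (b - a) * (Real.exp x / (1 + Real.exp x)) := by
  rw [psiSE_eq]; ring

theorem b_sub_psiSE (a b x : ℝ) : b - psiSE a b x = (b - a) * (1 / (1 + Real.exp x)) := by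
  rw [psiSE_eq]
  have := Real.exp_pos x
  field_simp
  ring

theorem psiSE_mem {a b : ℝ} (hab : a < b) (x : ℝ) : psiSE a b x ∈ Ioo a b := by
  have h0 := Real.exp_pos x
  have h1 : 0 < b - a := sub_pos.2 hab
  constructor
  · rw [← sub_pos, psiSE_sub_a]; positivity
  · rw [← sub_pos, b_sub_psiSE]; positivity

theorem hasDerivAt_psiSE (a b x : ℝ) :
    HasDerivAt (psiSE a b) ((b - a) * (Real.exp x / (1 + Real.exp x) ^ 2)) x := by
  have h0 := Real.exp_pos x
  have h1 := (((Real.hasDerivAt_exp x).div ((Real.hasDerivAt_exp x).const_add 1)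
    (by positivity)).const_mul (b - a)).const_add a
  have h2 : psiSE a b = fun x => a + (b - a) * (Real.exp x / (1 + Real.exp x)) :=
    funext (psiSE_eq a b)
  rw [h2]
  refine h1.congr_deriv ?_
  field_simp
  ring

theorem deriv_psiSE (a b x : ℝ) :
    deriv (psiSE a b) x = (b - a) * (Real.exp x / (1 + Real.exp x) ^ 2) :=
  (hasDerivAt_psiSE a b x).deriv

theorem exp_div_sq_le (x : ℝ) : Real.exp x / (1 + Real.exp x) ^ 2 ≤ Real.exp (-|x|) := by
  have h0 := Real.exp_pos x
  rw [div_le_iff₀ (by positivity)]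
  rcases abs_cases x with ⟨h1, _⟩ | ⟨h1, _⟩
  · rw [h1, Real.exp_neg]
    have : (Real.exp x)⁻¹ * (1 + Real.exp x) ^ 2 = (Real.exp x)⁻¹ + 2 + Real.exp x := by
      field_simp; ring
    rw [this]
    have := inv_pos.2 h0
    linarith
  · rw [h1, neg_neg]
    nlinarith [mul_pos h0 h0]

theorem deriv_psiSE_pos {a b : ℝ} (hab : a < b) (x : ℝ) : 0 < deriv (psiSE a b) x := by
  rw [deriv_psiSE]
  have := Real.exp_pos x
  have := sub_pos.2 hab
  positivity

theorem deriv_psiSE_le {a b : ℝ} (hab : a < b) (x : ℝ) :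
    deriv (psiSE a b) x ≤ (b - a) * Real.exp (-|x|) := by
  rw [deriv_psiSE]
  exact mul_le_mul_of_nonneg_left (exp_div_sq_le x) (sub_pos.2 hab).le

theorem phiSE_psiSE {a b : ℝ} (hab : a < b) (x : ℝ) : phiSE a b (psiSE a b x) = x := by
  unfold phiSE
  rw [psiSE_sub_a, b_sub_psiSE]
  have h0 := Real.exp_pos x
  have h1 : 0 < b - a := sub_pos.2 hab
  have : (b - a) * (Real.exp x / (1 + Real.exp x)) / ((b - a) * (1 / (1 + Real.exp x)))
      = Real.exp x := by field_simp
  rw [this, Real.log_exp]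

theorem psiSE_phiSE {a b t : ℝ} (ht : t ∈ Ioo a b) : psiSE a b (phiSE a b t) = t := by
  have h1 : 0 < t - a := sub_pos.2 ht.1
  have h2 : 0 < b - t := sub_pos.2 ht.2
  rw [psiSE_eq, phiSE, Real.exp_log (by positivity)]
  have h3 : t - a + (b - t) ≠ 0 := by linarith
  have h4 : b - t + (t - a) ≠ 0 := by linarith
  field_simp
  ring

/-! ### Stability of the discretized Volterra equation -/

theorem discrete_gronwall_prod {n : ℕ} {x c : ℕ → ℝ} {B : ℝ}
    (hc : ∀ j, 0 ≤ c j) (hx : ∀ i < n, x i ≤ B + ∑ j ∈ Finset.range i, c j * x j) (hB : 0 ≤ B) :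
    ∀ i < n, x i ≤ B * Real.exp (∑ j ∈ Finset.range n, c j) := by
  have key : ∀ i ≤ n, B + ∑ j ∈ Finset.range i, c j * x j
      ≤ B * Real.exp (∑ j ∈ Finset.range i, c j) := by
    intro i
    induction i with
    | zero => intro _; simp
    | succ i ih =>
      intro hi
      have h1 := ih (by omega)
      have h2 := mul_le_mul_of_nonneg_left ((hx i (by omega)).trans h1) (hc i)
      rw [Finset.sum_range_succ, Finset.sum_range_succ, Real.exp_add]
      have h3 := Real.add_one_le_exp (c i)
      have h4 : 0 ≤ B * Real.exp (∑ j ∈ Finset.range i, c j) := by positivity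
      nlinarith
  intro i hi
  refine ((hx i hi).trans (key i hi.le)).trans (mul_le_mul_of_nonneg_left ?_ hB)
  refine Real.exp_le_exp.2 (Finset.sum_le_sum_of_subset_of_nonneg ?_ fun j _ _ => hc j)
  intro j hj
  rw [Finset.mem_range] at hj ⊢
  omega

/-- Stability for kernels of Heaviside type plus a small perturbation: the Heaviside part is
handled by a discrete Gronwall argument, the perturbation is absorbed. -/
theorem heaviside_stability {n : ℕ} (κ : Fin n → Fin n → ℂ) (θ : Fin n → Fin n → ℝ)
    (w : ℕ → ℝ) (τ W ρ : ℝ) (hw0 : ∀ j, 0 ≤ w j) (hw2 : ∀ j, w j ≤ 1 / 2)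
    (hW : ∑ j ∈ Finset.range n, w j ≤ W)
    (hκ : ∀ i j, ‖κ i j‖ ≤ w j)
    (hθ : ∀ i, ∑ j : Fin n, w j * |θ i j - heav ((i : ℤ) - (j : ℤ))| ≤ τ)
    (hτ : 2 * Real.exp (2 * W) * τ ≤ 1 / 2)
    (v r : Fin n → ℂ) (hr : ∀ i, ‖r i‖ ≤ ρ)
    (hv : ∀ i, v i = r i + ∑ j, κ i j * (θ i j : ℂ) * v j) :
    ∀ i, ‖v i‖ ≤ 4 * Real.exp (2 * W) * ρ := by
  intro i₀
  have hne : (Finset.univ : Finset (Fin n)).Nonempty := ⟨i₀, Finset.mem_univ _⟩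
  obtain ⟨im, -, him⟩ := Finset.exists_max_image Finset.univ (fun i => ‖v i‖) hne
  set m := ‖v im‖ with hm
  have hvm : ∀ i, ‖v i‖ ≤ m := fun i => him i (Finset.mem_univ _)
  have hm0 : 0 ≤ m := norm_nonneg _
  have hρ : 0 ≤ ρ := (norm_nonneg _).trans (hr i₀)
  have hτ0 : 0 ≤ τ := (Finset.sum_nonneg fun j _ =>
    mul_nonneg (hw0 _) (abs_nonneg _)).trans (hθ i₀)
  set x : ℕ → ℝ := fun i => if hi : i < n then ‖v ⟨i, hi⟩‖ else 0 with hx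
  have hxv : ∀ i : Fin n, x i = ‖v i‖ := fun i => by simp [hx]
  have hstep : ∀ i : Fin n, ‖v i‖ ≤ ρ + τ * m
      + ∑ j : Fin n, w j * |heav ((i : ℤ) - (j : ℤ))| * ‖v j‖ := by
    intro i
    have h1 : ‖v i‖ ≤ ‖r i‖ + ∑ j, ‖κ i j * (θ i j : ℂ) * v j‖ := by
      conv_lhs => rw [hv i]
      exact (norm_add_le _ _).trans (add_le_add le_rfl (norm_sum_le _ _))
    have h2 : ∑ j, ‖κ i j * (θ i j : ℂ) * v j‖
        ≤ ∑ j : Fin n, (w j * |θ i j - heav ((i : ℤ) - (j : ℤ))| * m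
          + w j * |heav ((i : ℤ) - (j : ℤ))| * ‖v j‖) := by
      refine Finset.sum_le_sum fun j _ => ?_
      rw [norm_mul, norm_mul, Complex.norm_real, Real.norm_eq_abs]
      have e1 : |θ i j| ≤ |θ i j - heav ((i : ℤ) - (j : ℤ))| + |heav ((i : ℤ) - (j : ℤ))| := by
        have := abs_add_le (θ i j - heav ((i : ℤ) - (j : ℤ))) (heav ((i : ℤ) - (j : ℤ)))
        simpa using this
      have e2 : ‖κ i j‖ * |θ i j| ≤ w j * |θ i j - heav ((i : ℤ) - (j : ℤ))|
          + w j * |heav ((i : ℤ) - (j : ℤ))| := by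
        rw [← mul_add]
        exact mul_le_mul (hκ i j) e1 (abs_nonneg _) (hw0 _)
      have e3 := mul_le_mul_of_nonneg_right e2 (norm_nonneg (v j))
      have e4 := mul_le_mul_of_nonneg_left (hvm j)
        (mul_nonneg (hw0 j) (abs_nonneg (θ i j - heav ((i : ℤ) - (j : ℤ)))))
      rw [add_mul] at e3
      linarith
    rw [Finset.sum_add_distrib, ← Finset.sum_mul] at h2
    have h3 := mul_le_mul_of_nonneg_right (hθ i) hm0
    have h4 := hr i
    linarith
  have hx' : ∀ i < n, x i ≤ 2 * (ρ + τ * m) + ∑ j ∈ Finset.range i, (2 * w j) * x j := by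
    intro i hi
    have h1 := hstep ⟨i, hi⟩
    have h2 : ∑ j : Fin n, w j * |heav (((⟨i, hi⟩ : Fin n) : ℕ) - (j : ℤ))| * ‖v j‖
        = ∑ j ∈ Finset.range n, w j * |heav ((i : ℤ) - (j : ℤ))| * x j := by
      rw [← Fin.sum_univ_eq_sum_range (fun j : ℕ => w j * |heav ((i : ℤ) - (j : ℤ))| * x j)]
      exact Finset.sum_congr rfl fun j _ => by rw [hxv]
    have hx0 : ∀ j, 0 ≤ x j := fun j => by simp only [hx]; split_ifs <;> positivity
    have h3 : ∑ j ∈ Finset.range n, w j * |heav ((i : ℤ) - (j : ℤ))| * x j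
        ≤ ∑ j ∈ Finset.range (i + 1), w j * x j := by
      have hsub : Finset.range (i + 1) ⊆ Finset.range n := by
        intro j hj; rw [Finset.mem_range] at hj ⊢; omega
      rw [← Finset.sum_subset hsub]
      · refine Finset.sum_le_sum fun j _ => ?_
        refine mul_le_mul_of_nonneg_right ?_ (hx0 j)
        exact mul_le_of_le_one_right (hw0 j) (abs_heav_le _)
      · intro j _ hj
        rw [Finset.mem_range, not_lt] at hj
        have : heav ((i : ℤ) - (j : ℤ)) = 0 := by
          unfold heav
          rw [if_neg (by omega), if_neg (by omega)]
        rw [this]; simp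
    rw [h2] at h1
    rw [Finset.sum_range_succ] at h3
    have h4 : x i = ‖v ⟨i, hi⟩‖ := by simp [hx, hi]
    rw [← h4] at h1
    have h5 := mul_le_mul_of_nonneg_right (hw2 i) (hx0 i)
    have h6 : ∑ j ∈ Finset.range i, (2 * w j) * x j
        = 2 * ∑ j ∈ Finset.range i, w j * x j := by
      rw [Finset.mul_sum]; exact Finset.sum_congr rfl fun j _ => by ring
    rw [h6]
    linarith
  have hB : 0 ≤ 2 * (ρ + τ * m) := by positivity
  have hg := discrete_gronwall_prod (fun j => mul_nonneg zero_le_two (hw0 j)) hx' hB im im.2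
  rw [hxv, ← Finset.mul_sum, ← hm] at hg
  have hE : Real.exp (2 * ∑ j ∈ Finset.range n, w j) ≤ Real.exp (2 * W) :=
    Real.exp_le_exp.2 (by linarith)
  have h7 : m ≤ 2 * (ρ + τ * m) * Real.exp (2 * W) :=
    hg.trans (mul_le_mul_of_nonneg_left hE hB)
  have h8 := mul_le_mul_of_nonneg_right hτ hm0
  have h9 : m ≤ 4 * Real.exp (2 * W) * ρ := by nlinarith
  exact (hvm i₀).trans h9

theorem zidx_sub (N : ℕ) (i j : Fin (2 * N + 1)) : zidx N i - zidx N j = (i : ℤ) - (j : ℤ) := by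
  unfold zidx; ring

theorem zidx_injective (N : ℕ) : Function.Injective (zidx N) := by
  intro i j h
  unfold zidx at h
  apply Fin.ext
  omega

theorem zidx_mem (N : ℕ) (i : Fin (2 * N + 1)) : zidx N i ∈ Finset.Icc (-(N : ℤ)) N := by
  rw [Finset.mem_Icc]
  unfold zidx
  have := i.2
  omega

theorem sum_zidx {M : Type*} [AddCommMonoid M] (N : ℕ) (f : ℤ → M) :
    ∑ i : Fin (2 * N + 1), f (zidx N i) = ∑ j ∈ Finset.Icc (-(N : ℤ)) N, f j := by
  refine Finset.sum_bij (fun i _ => zidx N i) (fun i _ => zidx_mem N i)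
    (fun i _ j _ h => zidx_injective N h) (fun j hj => ?_) (fun _ _ => rfl)
  rw [Finset.mem_Icc] at hj
  refine ⟨⟨(j + N).toNat, by omega⟩, Finset.mem_univ _, ?_⟩
  simp only [zidx]
  omega

/-- Uniform stability of `I - V_n^SE` for small mesh size. -/
theorem exists_stability {a b : ℝ} (hab : a < b) {K : ℝ} (hK : 0 ≤ K) :
    ∃ h₀ : ℝ, 0 < h₀ ∧ ∃ C : ℝ, 0 ≤ C ∧ ∀ h : ℝ, 0 < h → h ≤ h₀ → ∀ N : ℕ,
      ∀ k : ℝ → ℝ → ℂ, (∀ t ∈ Ioo a b, ∀ s ∈ Ioo a b, ‖k t s‖ ≤ K) →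
      ∀ (v r : Fin (2 * N + 1) → ℂ) (ρ : ℝ), (∀ i, ‖r i‖ ≤ ρ) →
      v = r + Matrix.mulVec (VnSE a b h N k) v → ∀ i, ‖v i‖ ≤ C * ρ := by
  set Q := K * (b - a) with hQ
  have hba : 0 < b - a := sub_pos.2 hab
  have hQ0 : 0 ≤ Q := by positivity
  set W := 3 * Q with hW
  set P := Real.exp (2 * W) with hP
  have hP0 : 0 < P := Real.exp_pos _
  have hs0 := sqSum_pos
  -- `τ = √(Q h W) √sqSum` has to be at most `1 / (4 P)`
  set h₁ := 1 / (16 * P ^ 2 * (Q * W * sqSum + 1)) with hh₁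
  have hW0 : 0 ≤ W := by positivity
  have hh₁0 : 0 < h₁ := by positivity
  refine ⟨min 1 (min h₁ (1 / (2 * (Q + 1)))), by positivity, 4 * P, by positivity, ?_⟩
  intro h hh hh0 N k hk v r ρ hr hv
  have hle1 : h ≤ 1 := hh0.trans (min_le_left _ _)
  have hleh₁ : h ≤ h₁ := hh0.trans ((min_le_right _ _).trans (min_le_left _ _))
  have hleQ : h ≤ 1 / (2 * (Q + 1)) := hh0.trans ((min_le_right _ _).trans (min_le_right _ _))
  have hQh : Q * h ≤ 1 / 2 := by
    rw [le_div_iff₀ (by positivity)] at hleQ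
    nlinarith
  -- The weights are extended to all natural indices, as the Gronwall argument sums over ranges.
  set w : ℕ → ℝ := fun j => K * deriv (psiSE a b) ((((j : ℤ) - N : ℤ) : ℝ) * h) * h with hw
  have hwle : ∀ j : ℕ, w j ≤ Q * h * Real.exp (-h * |(((j : ℤ) - N : ℤ) : ℝ)|) := by
    intro j
    have h1 := deriv_psiSE_le hab ((((j : ℤ) - N : ℤ) : ℝ) * h)
    rw [abs_mul, abs_of_pos hh] at h1
    have h2 := mul_le_mul_of_nonneg_left h1 (mul_nonneg hK hh.le)
    calc w j = K * h * deriv (psiSE a b) ((((j : ℤ) - N : ℤ) : ℝ) * h) := by rw [hw]; ring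
      _ ≤ K * h * ((b - a) * Real.exp (-(|(((j : ℤ) - N : ℤ) : ℝ)| * h))) := h2
      _ = _ := by rw [hQ, show -(|(((j : ℤ) - N : ℤ) : ℝ)| * h)
                    = -h * |(((j : ℤ) - N : ℤ) : ℝ)| by ring]; ring
  have hw0 : ∀ j, 0 ≤ w j := fun j =>
    mul_nonneg (mul_nonneg hK (deriv_psiSE_pos hab _).le) hh.le
  have hwQ : ∀ j, w j ≤ Q * h := fun j => (hwle j).trans (mul_le_of_le_one_right (by positivity)
    (Real.exp_le_one_iff.2 (by
      have := mul_nonneg hh.le (abs_nonneg (((j : ℤ) - N : ℤ) : ℝ))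
      linarith)))
  have hWsum : ∑ j ∈ Finset.range (2 * N + 1), w j ≤ W := by
    refine (Finset.sum_le_sum fun j _ => hwle j).trans ?_
    rw [← Finset.mul_sum, ← Fin.sum_univ_eq_sum_range
      (fun j : ℕ => Real.exp (-h * |(((j : ℤ) - N : ℤ) : ℝ)|))]
    have h1 := sum_zidx N (fun j : ℤ => Real.exp (-h * |(j : ℝ)|))
    unfold zidx at h1
    rw [h1]
    have h2 := mul_le_mul_of_nonneg_left (sum_exp_abs_le hh (Finset.Icc (-(N : ℤ)) N))
      (mul_nonneg hQ0 hh.le)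
    refine h2.trans ?_
    have : Q * h * (1 + 2 / h) = Q * h + 2 * Q := by field_simp
    rw [this, hW]
    nlinarith
  have hθ : ∀ i : Fin (2 * N + 1), ∑ j : Fin (2 * N + 1),
      w j * |deltaM (zidx N i - zidx N j) - heav ((i : ℤ) - (j : ℤ))| ≤ 1 / (4 * P) := by
    intro i
    have h1 : (∑ j : Fin (2 * N + 1),
        w j * |deltaM (zidx N i - zidx N j) - heav ((i : ℤ) - (j : ℤ))|) ^ 2
        ≤ (Q * h * W) * sqSum := by
      refine (Finset.sum_mul_sq_le_sq_mul_sq _ _ _).trans ?_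
      refine mul_le_mul ?_ ?_ (Finset.sum_nonneg fun _ _ => sq_nonneg _) (by positivity)
      · calc ∑ j : Fin (2 * N + 1), w j ^ 2 ≤ ∑ j : Fin (2 * N + 1), Q * h * w j := by
              refine Finset.sum_le_sum fun j _ => ?_
              rw [sq]
              exact mul_le_mul_of_nonneg_right (hwQ j) (hw0 j)
          _ = Q * h * ∑ j ∈ Finset.range (2 * N + 1), w j := by
              rw [← Finset.mul_sum, Fin.sum_univ_eq_sum_range]
          _ ≤ _ := mul_le_mul_of_nonneg_left hWsum (by positivity)
      · calc ∑ j : Fin (2 * N + 1),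
              |deltaM (zidx N i - zidx N j) - heav ((i : ℤ) - (j : ℤ))| ^ 2
            ≤ ∑ j : Fin (2 * N + 1), 1 / (1 + ((zidx N i : ℝ) - (zidx N j : ℝ)) ^ 2) := by
              refine Finset.sum_le_sum fun j _ => ?_
              rw [sq_abs, ← zidx_sub]
              have := deltaM_sub_heav_sq_le (zidx N i - zidx N j)
              push_cast at this
              exact this
          _ = ∑ j ∈ Finset.Icc (-(N : ℤ)) N, 1 / (1 + ((zidx N i : ℝ) - (j : ℝ)) ^ 2) :=
              sum_zidx N (fun j : ℤ => 1 / (1 + ((zidx N i : ℝ) - (j : ℝ)) ^ 2))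
          _ ≤ sqSum := sum_one_div_le _ _
    refine (sq_le_sq₀ (Finset.sum_nonneg fun j _ => mul_nonneg (hw0 _) (abs_nonneg _))
      (by positivity)).1 (h1.trans ?_)
    rw [hh₁, le_div_iff₀ (by positivity)] at hleh₁
    rw [div_pow, one_pow, le_div_iff₀ (by positivity)]
    nlinarith [mul_pos hh (pow_pos hP0 2)]
  refine heaviside_stability
    (fun i j => k (tSE a b h (zidx N i)) (tSE a b h (zidx N j))
      * ((deriv (psiSE a b) ((zidx N j : ℝ) * h) : ℝ) : ℂ) * ((h : ℝ) : ℂ))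
    (fun i j => deltaM (zidx N i - zidx N j)) w (1 / (4 * P)) W ρ hw0
    (fun j => (hwQ j).trans hQh) hWsum ?_ hθ ?_ v r hr ?_
  · intro i j
    rw [norm_mul, norm_mul, Complex.norm_real, Complex.norm_real, Real.norm_eq_abs,
      Real.norm_eq_abs, abs_of_pos hh, abs_of_pos (deriv_psiSE_pos hab _)]
    have h1 := hk _ (psiSE_mem hab ((zidx N i : ℝ) * h)) _ (psiSE_mem hab ((zidx N j : ℝ) * h))
    have h2 := (deriv_psiSE_pos hab ((zidx N j : ℝ) * h)).le
    exact mul_le_mul_of_nonneg_right (mul_le_mul_of_nonneg_right h1 h2) hh.le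
  · rw [← hP]
    apply le_of_eq
    field_simp
    norm_num
  · intro i
    conv_lhs => rw [hv]
    simp only [Pi.add_apply, Matrix.mulVec, dotProduct, VnSE, Matrix.of_apply]

end

section

open MeasureTheory Set Filter Topology

/-! ### Algebra of the collocation system -/

theorem JSEext_node {a b h : ℝ} (hab : a < b) (hh : 0 < h) (i j : ℤ) :
    JSEext a b h j (tSE a b h i) = h * deltaM (i - j) := by
  have hm := psiSE_mem hab ((i : ℝ) * h)
  unfold JSEext tSE
  rw [if_neg (not_le.2 hm.1), if_neg (not_le.2 hm.2), phiSE_psiSE hab, Jfun_node i j hh]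

theorem VNSE_node {a b h : ℝ} (hab : a < b) (hh : 0 < h) (N : ℕ) (k : ℝ → ℝ → ℂ) (f : ℝ → ℂ)
    (i : Fin (2 * N + 1)) :
    VNSE a b h N k f (tSE a b h (zidx N i))
      = ∑ l, VnSE a b h N k i l * f (tSE a b h (zidx N l)) := by
  unfold VNSE
  rw [← sum_zidx N (fun j : ℤ => k (tSE a b h (zidx N i)) (tSE a b h j) * f (tSE a b h j)
    * ((deriv (psiSE a b) ((j : ℝ) * h) : ℝ) : ℂ)
      * ((JSEext a b h j (tSE a b h (zidx N i)) : ℝ) : ℂ))]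
  refine Finset.sum_congr rfl fun l _ => ?_
  rw [JSEext_node hab hh]
  simp only [VnSE, Matrix.of_apply]
  push_cast
  ring

/-- The collocation matrix is the Nyström matrix times the interpolation matrix: hence the node
values `E c` of the collocation solution solve the Nyström system. -/
theorem RZ_factor {a b h : ℝ} (hab : a < b) (hh : 0 < h) (N : ℕ) (k : ℝ → ℝ → ℂ) :
    EnRZ a b h N - VnRZ a b h N k = (1 - VnSE a b h N k) * EnRZ a b h N := by
  rw [sub_mul, one_mul]
  congr 1
  ext i j
  rw [Matrix.mul_apply]
  simp only [VnRZ, EnRZ, Matrix.of_apply]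
  split_ifs with h1 h2
  · rw [VNSE_node hab hh]
  · rw [VNSE_node hab hh]
  · simp [VnSE]

theorem EnRZ_mulVec {a b h : ℝ} {N : ℕ} (hN : 0 < N) (c : Fin (2 * N + 1) → ℂ)
    (i : Fin (2 * N + 1)) :
    Matrix.mulVec (EnRZ a b h N) c i
      = c ⟨0, by omega⟩ * ((omA a b (tSE a b h (zidx N i)) : ℝ) : ℂ)
        + c ⟨2 * N, by omega⟩ * ((omB a b (tSE a b h (zidx N i)) : ℝ) : ℂ)
        + if (i : ℕ) ≠ 0 ∧ (i : ℕ) ≠ 2 * N then c i else 0 := by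
  simp only [Matrix.mulVec, dotProduct, EnRZ, Matrix.of_apply]
  have h1 : ∀ j : Fin (2 * N + 1),
      (if (j : ℕ) = 0 then ((omA a b (tSE a b h (zidx N i)) : ℝ) : ℂ)
        else if (j : ℕ) = 2 * N then ((omB a b (tSE a b h (zidx N i)) : ℝ) : ℂ)
        else if i = j then 1 else 0) * c j
      = (if j = ⟨0, by omega⟩ then c j * ((omA a b (tSE a b h (zidx N i)) : ℝ) : ℂ) else 0)
        + (if j = ⟨2 * N, by omega⟩ then c j * ((omB a b (tSE a b h (zidx N i)) : ℝ) : ℂ) else 0)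
        + (if j = i then (if (i : ℕ) ≠ 0 ∧ (i : ℕ) ≠ 2 * N then c i else 0) else 0) := by
    intro j
    have hz : j = ⟨0, by omega⟩ ↔ (j : ℕ) = 0 := by rw [Fin.ext_iff]
    have hn : j = ⟨2 * N, by omega⟩ ↔ (j : ℕ) = 2 * N := by rw [Fin.ext_iff]
    by_cases h0 : (j : ℕ) = 0
    · have h2 : ¬ (j : ℕ) = 2 * N := by omega
      rw [if_pos h0, if_pos (hz.2 h0), if_neg (fun h => h2 (hn.1 h))]
      have : (if j = i then (if (i : ℕ) ≠ 0 ∧ (i : ℕ) ≠ 2 * N then c i else 0) else 0) = 0 := by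
        split_ifs with h3 h4
        · subst h3; exact absurd h0 h4.1
        · rfl
        · rfl
      rw [this]; ring
    · rw [if_neg h0, if_neg (fun h => h0 (hz.1 h))]
      by_cases h2 : (j : ℕ) = 2 * N
      · rw [if_pos h2, if_pos (hn.2 h2)]
        have : (if j = i then (if (i : ℕ) ≠ 0 ∧ (i : ℕ) ≠ 2 * N then c i else 0) else 0) = 0 := by
          split_ifs with h3 h4
          · subst h3; exact absurd h2 h4.2
          · rfl
          · rfl
        rw [this]; ring
      · rw [if_neg h2, if_neg (fun h => h2 (hn.1 h))]
        by_cases h3 : i = j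
        · subst h3
          rw [if_pos rfl, if_pos rfl, if_pos ⟨h0, h2⟩]; ring
        · rw [if_neg h3, if_neg (fun h => h3 h.symm)]; ring
  rw [Finset.sum_congr rfl fun j _ => h1 j, Finset.sum_add_distrib, Finset.sum_add_distrib,
    Finset.sum_ite_eq' Finset.univ, Finset.sum_ite_eq' Finset.univ, Finset.sum_ite_eq' Finset.univ]
  simp

theorem omA_psiSE {a b : ℝ} (hab : a < b) (x : ℝ) : omA a b (psiSE a b x) = 1 / (1 + Real.exp x) := by
  have : b - a ≠ 0 := (sub_pos.2 hab).ne'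
  rw [omA, b_sub_psiSE]
  field_simp

theorem omB_psiSE {a b : ℝ} (hab : a < b) (x : ℝ) :
    omB a b (psiSE a b x) = Real.exp x / (1 + Real.exp x) := by
  have : b - a ≠ 0 := (sub_pos.2 hab).ne'
  rw [omB, psiSE_sub_a]
  field_simp

theorem omA_add_omB {a b : ℝ} (hab : a < b) (t : ℝ) : omA a b t + omB a b t = 1 := by
  have : b - a ≠ 0 := (sub_pos.2 hab).ne'
  rw [omA, omB]
  field_simp
  ring

theorem exp_div_one_add (x : ℝ) : Real.exp (-x) / (1 + Real.exp (-x)) = 1 / (1 + Real.exp x) := by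
  rw [Real.exp_neg]
  have := Real.exp_pos x
  field_simp
  ring

/-- The coefficients of `ω_a`, `ω_b` are controlled by the values at the two extreme nodes. -/
theorem two_by_two {p r : ℝ} (hp0 : 0 ≤ p) (hp : p ≤ 1 / 4) {x y A B : ℂ}
    (h1 : x * ((1 - p : ℝ) : ℂ) + y * (p : ℂ) = A) (h2 : x * (p : ℂ) + y * ((1 - p : ℝ) : ℂ) = B)
    (hA : ‖A‖ ≤ r) (hB : ‖B‖ ≤ r) : ‖x‖ ≤ 2 * r ∧ ‖y‖ ≤ 2 * r := by
  have key : ∀ x y A B : ℂ, x * ((1 - p : ℝ) : ℂ) + y * (p : ℂ) = A →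
      x * (p : ℂ) + y * ((1 - p : ℝ) : ℂ) = B → ‖A‖ ≤ r → ‖B‖ ≤ r → ‖x‖ ≤ 2 * r := by
    intro x y A B h1 h2 hA hB
    have h3 : x * ((1 - 2 * p : ℝ) : ℂ) = A * ((1 - p : ℝ) : ℂ) - B * (p : ℂ) := by
      rw [← h1, ← h2]; push_cast; ring
    have h4 : ‖x‖ * (1 - 2 * p) ≤ r := by
      calc ‖x‖ * (1 - 2 * p) = ‖x * ((1 - 2 * p : ℝ) : ℂ)‖ := by
            rw [norm_mul, Complex.norm_real, Real.norm_eq_abs, abs_of_nonneg (by linarith)]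
        _ ≤ ‖A * ((1 - p : ℝ) : ℂ)‖ + ‖B * (p : ℂ)‖ := by rw [h3]; exact norm_sub_le _ _
        _ = ‖A‖ * (1 - p) + ‖B‖ * p := by
            rw [norm_mul, norm_mul, Complex.norm_real, Complex.norm_real, Real.norm_eq_abs,
              Real.norm_eq_abs, abs_of_nonneg (show 0 ≤ 1 - p by linarith), abs_of_nonneg hp0]
        _ ≤ r * (1 - p) + r * p := by gcongr; linarith
        _ = r := by ring
    nlinarith [norm_nonneg x]
  refine ⟨key x y A B h1 h2 hA hB, key y x B A ?_ ?_ hB hA⟩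
  · rw [← h2]; ring
  · rw [← h1]; ring

theorem zidx_first (N : ℕ) : zidx N ⟨0, by omega⟩ = -(N : ℤ) := by simp [zidx]

theorem zidx_last (N : ℕ) : zidx N ⟨2 * N, by omega⟩ = (N : ℤ) := by simp [zidx]; ring

/-- The 2×2 relations between the two extreme node values `v_{∓N}` and the two end coefficients. -/
theorem EnRZ_ends {a b h : ℝ} (hab : a < b) {N : ℕ} (hN : 0 < N) (c : Fin (2 * N + 1) → ℂ) {p : ℝ}
    (hp : p = 1 / (1 + Real.exp (N * h))) :
    c ⟨0, by omega⟩ * ((1 - p : ℝ) : ℂ) + c ⟨2 * N, by omega⟩ * (p : ℂ)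
        = Matrix.mulVec (EnRZ a b h N) c ⟨0, by omega⟩ ∧
    c ⟨0, by omega⟩ * (p : ℂ) + c ⟨2 * N, by omega⟩ * ((1 - p : ℝ) : ℂ)
        = Matrix.mulVec (EnRZ a b h N) c ⟨2 * N, by omega⟩ := by
  have hA : omA a b (tSE a b h (N : ℤ)) = p := by
    rw [tSE, omA_psiSE hab, hp]; simp
  have hB : omB a b (tSE a b h (N : ℤ)) = 1 - p := by
    rw [← hA, ← omA_add_omB hab (tSE a b h (N : ℤ))]; ring
  have hB' : omB a b (tSE a b h (-(N : ℤ))) = p := by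
    rw [tSE, omB_psiSE hab, hp, ← exp_div_one_add]; simp
  have hA' : omA a b (tSE a b h (-(N : ℤ))) = 1 - p := by
    rw [← hB', ← omA_add_omB hab (tSE a b h (-(N : ℤ)))]; ring
  constructor
  · rw [EnRZ_mulVec hN, zidx_first, hA', hB']
    simp
  · rw [EnRZ_mulVec hN, zidx_last, hA, hB]
    simp

theorem EnRZ_isUnit {a b h : ℝ} (hab : a < b) {N : ℕ} (hN : 0 < N)
    (hp : 1 / (1 + Real.exp (N * h)) ≤ 1 / 4) : IsUnit (EnRZ a b h N) := by
  rw [← Matrix.mulVec_injective_iff_isUnit]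
  intro c₁ c₂ h12
  rw [← sub_eq_zero]
  set c := c₁ - c₂ with hc
  have h0 : Matrix.mulVec (EnRZ a b h N) c = 0 := by
    rw [hc, Matrix.mulVec_sub]; exact sub_eq_zero.2 h12
  obtain ⟨e1, e2⟩ := EnRZ_ends (a := a) (b := b) (h := h) hab hN c rfl
  rw [h0] at e1 e2
  obtain ⟨n1, n2⟩ := two_by_two (r := 0) (by positivity) hp e1 e2 (by simp) (by simp)
  have z1 : c ⟨0, by omega⟩ = 0 := by simpa using n1
  have z2 : c ⟨2 * N, by omega⟩ = 0 := by simpa using n2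
  ext i
  by_cases hi : (i : ℕ) ≠ 0 ∧ (i : ℕ) ≠ 2 * N
  · have := EnRZ_mulVec (a := a) (b := b) (h := h) hN c i
    rw [h0, z1, z2, if_pos hi] at this
    simpa using this.symm
  · rw [not_and_or, not_not, not_not] at hi
    rcases hi with hi | hi
    · rw [show i = ⟨0, by omega⟩ from Fin.ext hi, z1]; rfl
    · rw [show i = ⟨2 * N, by omega⟩ from Fin.ext hi, z2]; rfl

end

section

open MeasureTheory Set Filter Topology

/-! ### Error estimate, given the analytic continuation of the solution -/

theorem sum_abs_sincF_le {h : ℝ} (hh : 0 < h) {N : ℕ} (hN : 0 < N) (x : ℝ) :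
    ∑ i : Fin (2 * N + 1), |sincF (zidx N i) h x| ≤ √(6 * sqSum) * √N := by
  have hs0 := sqSum_pos
  rw [← Real.sqrt_mul (by positivity)]
  apply Real.le_sqrt_of_sq_le
  have h1 : (∑ i : Fin (2 * N + 1), |sincF (zidx N i) h x|) ^ 2
      ≤ (2 * N + 1) * ∑ i : Fin (2 * N + 1), |sincF (zidx N i) h x| ^ 2 := by
    have := sq_sum_le_card_mul_sum_sq (s := (Finset.univ : Finset (Fin (2 * N + 1))))
      (f := fun i => |sincF (zidx N i) h x|)
    simpa using this
  have h2 : ∑ i : Fin (2 * N + 1), |sincF (zidx N i) h x| ^ 2 ≤ 2 * sqSum := by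
    calc ∑ i : Fin (2 * N + 1), |sincF (zidx N i) h x| ^ 2
        = ∑ j ∈ Finset.Icc (-(N : ℤ)) N, |sincF j h x| ^ 2 :=
          sum_zidx N (fun j : ℤ => |sincF j h x| ^ 2)
      _ ≤ ∑ j ∈ Finset.Icc (-(N : ℤ)) N, 2 * (1 / (1 + (x / h - j) ^ 2)) := by
          refine Finset.sum_le_sum fun j _ => ?_
          rw [sq_abs]
          refine (sincF_sq_le j hh x).trans (le_of_eq (by ring))
      _ ≤ 2 * sqSum := by
          rw [← Finset.mul_sum]
          exact mul_le_mul_of_nonneg_left (sum_one_div_le _ _) (by norm_num)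
  have h3 : (1 : ℝ) ≤ N := by exact_mod_cast hN
  calc _ ≤ (2 * N + 1) * (2 * sqSum) := h1.trans (mul_le_mul_of_nonneg_left h2 (by positivity))
    _ ≤ 6 * sqSum * N := by nlinarith

/-- A residual bound `ρ` for the exact solution in the Nyström system bounds the error of the
Nyström node values by `C ρ`, where `C` is the stability constant. -/
theorem node_error {a b h : ℝ} {N : ℕ} {k : ℝ → ℝ → ℂ} {C ρ : ℝ}
    (hst : ∀ (v r : Fin (2 * N + 1) → ℂ) (ρ : ℝ), (∀ i, ‖r i‖ ≤ ρ) →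
      v = r + Matrix.mulVec (VnSE a b h N k) v → ∀ i, ‖v i‖ ≤ C * ρ)
    (g' v w : Fin (2 * N + 1) → ℂ) (hv : v = g' + Matrix.mulVec (VnSE a b h N k) v)
    (hw : ∀ i, ‖w i - g' i - Matrix.mulVec (VnSE a b h N k) w i‖ ≤ ρ) (i : Fin (2 * N + 1)) :
    ‖v i - w i‖ ≤ C * ρ := by
  refine hst (v - w) (fun i => -(w i - g' i - Matrix.mulVec (VnSE a b h N k) w i)) ρ
    (fun i => by rw [norm_neg]; exact hw i) ?_ i
  ext i
  have := congrFun hv i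
  simp only [Pi.add_apply] at this
  simp only [Pi.add_apply, Pi.sub_apply, Matrix.mulVec_sub]
  rw [this]
  ring

/-- The pointwise error of the collocation solution in terms of: the error of its node values `ε`,
a bound `η` for the decaying part `F` of the solution at the extreme nodes, and the error `τ` of the
truncated cardinal series of `F`. -/
theorem pointwise_error {a b h : ℝ} (hab : a < b) (hh : 0 < h) {N : ℕ} (hN : 0 < N)
    (hp : 1 / (1 + Real.exp (N * h)) ≤ 1 / 4) {u : ℝ → ℂ} {F : ℂ → ℂ}
    (hFu : ∀ x : ℝ, F x = u (psiSE a b x) - u a * (omA a b (psiSE a b x) : ℂ)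
      - u b * (omB a b (psiSE a b x) : ℂ)) {ε η τ : ℝ}
    (c : Fin (2 * N + 1) → ℂ)
    (hε : ∀ i, ‖Matrix.mulVec (EnRZ a b h N) c i - u (tSE a b h (zidx N i))‖ ≤ ε)
    (hη : ‖F (((N : ℤ) * h : ℝ) : ℂ)‖ ≤ η) (hη' : ‖F (((-(N : ℤ) : ℤ) * h : ℝ) : ℂ)‖ ≤ η)
    (hτ : ∀ x : ℝ, ‖F x - ∑ j ∈ Finset.Icc (-(N : ℤ)) N,
      F ((j * h : ℝ) : ℂ) * (sincF j h x : ℂ)‖ ≤ τ) {t : ℝ} (ht : t ∈ Icc a b) :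
    ‖u t - wRZf a b h N c t‖ ≤ τ + 4 * (ε + η) + (ε + 4 * (ε + η)) * (√(6 * sqSum) * √N) := by
  set v := Matrix.mulVec (EnRZ a b h N) c with hv
  set da := c ⟨0, by omega⟩ - u a with hda
  set db := c ⟨2 * N, by omega⟩ - u b with hdb
  have hε0 : 0 ≤ ε := (norm_nonneg _).trans (hε ⟨0, by omega⟩)
  have hη0 : 0 ≤ η := (norm_nonneg _).trans hη
  have hτ0 : 0 ≤ τ := (norm_nonneg _).trans (hτ 0)
  have hs0 := sqSum_pos
  -- At the extreme nodes `ω_a`, `ω_b` take the values `p` and `1 - p`; solving the resulting 2×2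
  -- system compares `c_{∓N}` with `u a`, `u b`.
  obtain ⟨e1, e2⟩ := EnRZ_ends (a := a) (b := b) (h := h) hab hN c rfl
  rw [← hv] at e1 e2
  set p := 1 / (1 + Real.exp (N * h)) with hpdef
  have hFN : F (((N : ℤ) * h : ℝ) : ℂ)
      = u (tSE a b h N) - u a * (p : ℂ) - u b * ((1 - p : ℝ) : ℂ) := by
    rw [hFu, ← omA_add_omB hab (psiSE a b ((N : ℤ) * h)), omA_psiSE hab, tSE, hpdef]
    push_cast
    ring
  have hFN' : F (((-(N : ℤ) : ℤ) * h : ℝ) : ℂ)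
      = u (tSE a b h (-(N : ℤ))) - u a * ((1 - p : ℝ) : ℂ) - u b * (p : ℂ) := by
    have : omB a b (psiSE a b ((-(N : ℤ) : ℤ) * h)) = p := by
      rw [omB_psiSE hab, hpdef, ← exp_div_one_add]; simp
    rw [hFu, ← omA_add_omB hab (psiSE a b ((-(N : ℤ) : ℤ) * h)), this, tSE]
    push_cast
    ring
  have hd := two_by_two (x := da) (y := db) (p := p) (r := ε + η)
    (A := (v ⟨0, by omega⟩ - u (tSE a b h (-(N : ℤ)))) + F (((-(N : ℤ) : ℤ) * h : ℝ) : ℂ))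
    (B := (v ⟨2 * N, by omega⟩ - u (tSE a b h N)) + F (((N : ℤ) * h : ℝ) : ℂ))
    (by positivity) hp (by rw [hFN', ← e1, hda, hdb]; ring) (by rw [hFN, ← e2, hda, hdb]; ring)
    ((norm_add_le _ _).trans (add_le_add (by
      have := hε ⟨0, by omega⟩; rwa [zidx_first] at this) hη'))
    ((norm_add_le _ _).trans (add_le_add (by
      have := hε ⟨2 * N, by omega⟩; rwa [zidx_last] at this) hη))
  obtain ⟨hda2, hdb2⟩ := hd
  have hrest : 0 ≤ (ε + 4 * (ε + η)) * (√(6 * sqSum) * √N) := by positivity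
  unfold wRZf
  by_cases ha : t ≤ a
  · have hta : t = a := le_antisymm ha ht.1
    rw [if_pos ha, hta, norm_sub_rev]
    linarith
  rw [if_neg ha]
  by_cases hb : b ≤ t
  · have htb : t = b := le_antisymm ht.2 hb
    rw [if_pos hb, htb, norm_sub_rev]
    linarith
  rw [if_neg hb]
  have htI : t ∈ Ioo a b := ⟨not_le.1 ha, not_le.1 hb⟩
  set x := phiSE a b t with hx
  have hpsi : psiSE a b x = t := psiSE_phiSE htI
  have hω : ∀ y : ℝ, 0 ≤ omA a b (psiSE a b y) ∧ 0 ≤ omB a b (psiSE a b y) := fun y => by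
    rw [omA_psiSE hab, omB_psiSE hab]; constructor <;> positivity
  have hdω : ∀ y : ℝ, ‖da * (omA a b (psiSE a b y) : ℂ) + db * (omB a b (psiSE a b y) : ℂ)‖
      ≤ 4 * (ε + η) := by
    intro y
    obtain ⟨h1, h2⟩ := hω y
    have h3 := omA_add_omB hab (psiSE a b y)
    refine (norm_add_le _ _).trans ?_
    rw [norm_mul, norm_mul, Complex.norm_real, Complex.norm_real, Real.norm_eq_abs,
      Real.norm_eq_abs, abs_of_nonneg h1, abs_of_nonneg h2]
    have h4 : ‖da‖ * omA a b (psiSE a b y) ≤ 2 * (ε + η) := by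
      nlinarith [norm_nonneg da]
    have h5 : ‖db‖ * omB a b (psiSE a b y) ≤ 2 * (ε + η) := by
      nlinarith [norm_nonneg db]
    linarith
  -- all coefficients `c_i` are node values minus the two end contributions
  have hsum : ∑ j ∈ Finset.univ.filter (fun j : Fin (2 * N + 1) => (j : ℕ) ≠ 0 ∧ (j : ℕ) ≠ 2 * N),
      c j * ((sincF (zidx N j) h x : ℝ) : ℂ)
      = ∑ i : Fin (2 * N + 1), (v i - c ⟨0, by omega⟩ * (omA a b (tSE a b h (zidx N i)) : ℂ)
        - c ⟨2 * N, by omega⟩ * (omB a b (tSE a b h (zidx N i)) : ℂ))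
          * ((sincF (zidx N i) h x : ℝ) : ℂ) := by
    rw [Finset.sum_filter]
    refine Finset.sum_congr rfl fun i _ => ?_
    rw [hv, EnRZ_mulVec hN c i]
    split_ifs <;> ring
  rw [hsum]
  have hq : ∀ i : Fin (2 * N + 1),
      v i - c ⟨0, by omega⟩ * (omA a b (tSE a b h (zidx N i)) : ℂ)
        - c ⟨2 * N, by omega⟩ * (omB a b (tSE a b h (zidx N i)) : ℂ)
      = F ((zidx N i * h : ℝ) : ℂ) + ((v i - u (tSE a b h (zidx N i)))
        - (da * (omA a b (tSE a b h (zidx N i)) : ℂ) + db * (omB a b (tSE a b h (zidx N i)) : ℂ))) := by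
    intro i
    rw [hFu, hda, hdb, tSE]
    ring
  have hFsum := sum_zidx N (fun j : ℤ => F ((j * h : ℝ) : ℂ) * (sincF j h x : ℂ))
  have hfin : u t - (c ⟨0, by omega⟩ * ((omA a b t : ℝ) : ℂ)
        + c ⟨2 * N, by omega⟩ * ((omB a b t : ℝ) : ℂ)
      + ∑ i : Fin (2 * N + 1), (v i - c ⟨0, by omega⟩ * (omA a b (tSE a b h (zidx N i)) : ℂ)
        - c ⟨2 * N, by omega⟩ * (omB a b (tSE a b h (zidx N i)) : ℂ))
          * ((sincF (zidx N i) h x : ℝ) : ℂ))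
      = (F x - ∑ j ∈ Finset.Icc (-(N : ℤ)) N, F ((j * h : ℝ) : ℂ) * (sincF j h x : ℂ))
        - (da * (omA a b (psiSE a b x) : ℂ) + db * (omB a b (psiSE a b x) : ℂ))
        - ∑ i : Fin (2 * N + 1), ((v i - u (tSE a b h (zidx N i)))
          - (da * (omA a b (tSE a b h (zidx N i)) : ℂ) + db * (omB a b (tSE a b h (zidx N i)) : ℂ)))
            * ((sincF (zidx N i) h x : ℝ) : ℂ) := by
    rw [← hFsum, Finset.sum_congr rfl fun i _ => by rw [hq i, add_mul], Finset.sum_add_distrib,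
      hFu x, hpsi, hda, hdb]
    ring
  rw [hfin]
  refine (norm_sub_le _ _).trans (add_le_add ((norm_sub_le _ _).trans
    (add_le_add (hτ x) (hdω x))) ?_)
  calc _ ≤ ∑ i : Fin (2 * N + 1), (ε + 4 * (ε + η)) * |sincF (zidx N i) h x| := by
        refine norm_sum_le_of_le _ fun i _ => ?_
        rw [norm_mul, Complex.norm_real, Real.norm_eq_abs]
        refine mul_le_mul_of_nonneg_right ?_ (abs_nonneg _)
        exact (norm_sub_le _ _).trans (add_le_add (hε i) (hdω _))
    _ = (ε + 4 * (ε + η)) * ∑ i : Fin (2 * N + 1), |sincF (zidx N i) h x| := by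
        rw [Finset.mul_sum]
    _ ≤ _ := mul_le_mul_of_nonneg_left (sum_abs_sincF_le hh hN x) (by positivity)

end

section

open MeasureTheory Set Filter Topology

theorem inv_sinh_le {X₁ X : ℝ} (h1 : 0 < X₁) (h : X₁ ≤ X) :
    1 / Real.sinh X ≤ 2 / (1 - Real.exp (-2 * X₁)) * Real.exp (-X) := by
  have hlt : Real.exp (-2 * X₁) < 1 := Real.exp_lt_one_iff.2 (by linarith)
  have hle : Real.exp (-2 * X) ≤ Real.exp (-2 * X₁) := Real.exp_le_exp.2 (by linarith)
  have hs : 0 < Real.sinh X := Real.sinh_pos_iff.2 (h1.trans_le h)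
  have hpos : 0 < 1 - Real.exp (-2 * X₁) := by linarith
  rw [div_mul_eq_mul_div, div_le_div_iff₀ hs hpos, Real.sinh_eq]
  have h3 : Real.exp (-X) * Real.exp X = 1 := by rw [← Real.exp_add]; simp
  have h4 : Real.exp (-X) * Real.exp (-X) = Real.exp (-2 * X) := by
    rw [← Real.exp_add]; congr 1; ring
  nlinarith

/-- The identities satisfied by the mesh size `h = √(πd/(αN))`, with `X = √(πdαN)`. -/
theorem hstep_facts {α d : ℝ} (hα : 0 < α) (hd : 0 < d) {N : ℕ} (hN : 0 < N) :
    0 < hstepSE α d N ∧ Real.pi * d / hstepSE α d N = √(Real.pi * d * α * N) ∧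
    α * N * hstepSE α d N = √(Real.pi * d * α * N) := by
  have hNr : (0 : ℝ) < N := by exact_mod_cast hN
  have hpi := Real.pi_pos
  have hpos : 0 < hstepSE α d N := Real.sqrt_pos.2 (by positivity)
  have hsq : hstepSE α d N ^ 2 = Real.pi * d / (α * N) := Real.sq_sqrt (by positivity)
  have h1 : α * N * hstepSE α d N = √(Real.pi * d * α * N) := by
    rw [eq_comm, Real.sqrt_eq_iff_eq_sq (by positivity) (by positivity), mul_pow, hsq]
    field_simp
  refine ⟨hpos, ?_, h1⟩
  rw [← h1, div_eq_iff hpos.ne']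
  have : α * N * hstepSE α d N * hstepSE α d N = α * N * hstepSE α d N ^ 2 := by ring
  rw [this, hsq]
  field_simp

/-- Convergence of the collocation method when the solution and the integrands extend to
exponentially decaying holomorphic functions on the strip. -/
theorem convergence_of_strip {a b α d A B K : ℝ} (hab : a < b) (hα : 0 < α) (hα1 : α ≤ 1)
    (hd : 0 < d) (hK : 0 ≤ K) {k : ℝ → ℝ → ℂ} {g u : ℝ → ℂ} {F : ℂ → ℂ} {H : ℝ → ℂ → ℂ}
    (hk : ∀ t ∈ Ioo a b, ∀ s ∈ Ioo a b, ‖k t s‖ ≤ K)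
    (hF : StripDecay F d A α)
    (hFu : ∀ x : ℝ, F x = u (psiSE a b x) - u a * (omA a b (psiSE a b x) : ℂ)
      - u b * (omB a b (psiSE a b x) : ℂ))
    (hH : ∀ t ∈ Ioo a b, StripDecay (H t) d B 1)
    (hHu : ∀ t ∈ Ioo a b, ∀ x : ℝ, H t x
      = k t (psiSE a b x) * u (psiSE a b x) * ((deriv (psiSE a b) x : ℝ) : ℂ))
    (hu : ∀ x : ℝ, u (psiSE a b x) = g (psiSE a b x) + ∫ s in Iic x, H (psiSE a b x) s) :
    ∃ N₀ : ℕ, 0 < N₀ ∧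
      (∀ N : ℕ, N₀ ≤ N → IsUnit (EnRZ a b (hstepSE α d N) N - VnRZ a b (hstepSE α d N) N k)) ∧
      ∃ C : ℝ, ∀ N : ℕ, N₀ ≤ N → ∀ c : Fin (2 * N + 1) → ℂ,
        Matrix.mulVec (EnRZ a b (hstepSE α d N) N - VnRZ a b (hstepSE α d N) N k) c
          = gnSE a b (hstepSE α d N) N g →
        ∀ t ∈ Icc a b, ‖u t - wRZf a b (hstepSE α d N) N c t‖
            ≤ C * √N * Real.exp (-√(Real.pi * d * α * N)) := by
  have hpi := Real.pi_pos
  obtain ⟨h₀, hh₀, Cst, hCst, hst⟩ := exists_stability hab hK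
  have hA0 : 0 ≤ A := hF.nonneg hd
  have hB0 : 0 ≤ B := (hH _ (psiSE_mem hab 0)).nonneg hd
  -- `N₀` makes `h ≤ h₀` and `exp (N h) ≥ 3`
  obtain ⟨N₁, hN₁⟩ := exists_nat_gt (Real.pi * d / (α * h₀ ^ 2))
  obtain ⟨N₂, hN₂⟩ := exists_nat_gt (4 / (Real.pi * d * α))
  have hbig : ∀ N : ℕ, max (max N₁ N₂) 1 ≤ N → 0 < N ∧ hstepSE α d N ≤ h₀ ∧
      1 / (1 + Real.exp (N * hstepSE α d N)) ≤ 1 / 4 := by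
    intro N hN
    have hN1 : N₁ ≤ N := ((le_max_left _ _).trans (le_max_left _ _)).trans hN
    have hN2 : N₂ ≤ N := ((le_max_right _ _).trans (le_max_left _ _)).trans hN
    have hN0 : 0 < N := (le_max_right _ _).trans hN
    have hNr : (0 : ℝ) < N := by exact_mod_cast hN0
    obtain ⟨hp, -, hX⟩ := hstep_facts hα hd hN0
    refine ⟨hN0, ?_, ?_⟩
    · have h1 : Real.pi * d / (α * h₀ ^ 2) < N := hN₁.trans_le (by exact_mod_cast hN1)
      rw [hstepSE]
      refine (Real.sqrt_le_left hh₀.le).2 ?_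
      rw [div_lt_iff₀ (by positivity)] at h1
      rw [div_le_iff₀ (by positivity)]
      nlinarith
    · have h1 : 4 / (Real.pi * d * α) < N := hN₂.trans_le (by exact_mod_cast hN2)
      rw [div_lt_iff₀ (by positivity)] at h1
      have h2 : 2 ≤ √(Real.pi * d * α * N) := Real.le_sqrt_of_sq_le (by nlinarith)
      have h3 : 2 ≤ N * hstepSE α d N := by
        rw [← hX] at h2
        have : 0 ≤ N * hstepSE α d N := by positivity
        nlinarith
      have h4 := Real.add_one_le_exp (N * hstepSE α d N)
      exact one_div_le_one_div_of_le (by norm_num) (by linarith)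
  refine ⟨max (max N₁ N₂) 1, lt_of_lt_of_le one_pos (le_max_right _ _), ?_, ?_⟩
  · intro N hN
    obtain ⟨hN0, hle, hp⟩ := hbig N hN
    obtain ⟨hh, -, -⟩ := hstep_facts hα hd hN0
    rw [RZ_factor hab hh]
    refine IsUnit.mul ?_ (EnRZ_isUnit hab hN0 hp)
    rw [← Matrix.mulVec_injective_iff_isUnit]
    intro v₁ v₂ h12
    rw [← sub_eq_zero]
    have h0 : Matrix.mulVec (1 - VnSE a b (hstepSE α d N) N k) (v₁ - v₂) = 0 := by
      rw [Matrix.mulVec_sub]; exact sub_eq_zero.2 h12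
    rw [Matrix.sub_mulVec, Matrix.one_mulVec, sub_eq_zero] at h0
    ext i
    have := hst _ hh hle N k hk (v₁ - v₂) 0 0 (by simp) (by rw [zero_add]; exact h0) i
    simpa using this
  set X₁ := √(Real.pi * d * α) with hX₁
  have hX₁0 : 0 < X₁ := Real.sqrt_pos.2 (by positivity)
  set Cs := 2 / (1 - Real.exp (-2 * X₁)) with hCs
  have hCs0 : 0 ≤ Cs := by
    have : Real.exp (-2 * X₁) < 1 := Real.exp_lt_one_iff.2 (by linarith)
    exact div_nonneg (by norm_num) (by linarith)
  -- constants multiplying `exp (-X)`, in the order of the estimates below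
  set C₁ := 2 * B / (Real.pi * 1) * (h₀ * (2 + Real.pi) / Real.pi) / d * Cs + 4 * B with hC₁
  set C₂ := 2 * A / (Real.pi * α) / d * Cs with hC₂
  set C₃ := 2 * A * X₁ / (α * (Real.pi * d)) with hC₃
  set C₄ := Cst * C₁ with hC₄
  have hC₁0 : 0 ≤ C₁ := by positivity
  have hC₂0 : 0 ≤ C₂ := by positivity
  have hC₄0 : 0 ≤ C₄ := by positivity
  refine ⟨(C₂ + C₃) + 4 * (C₄ + A) + (C₄ + 4 * (C₄ + A)) * √(6 * sqSum), ?_⟩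
  intro N hN c hc t ht
  obtain ⟨hN0, hle, hp⟩ := hbig N hN
  obtain ⟨hh, hpd, hX⟩ := hstep_facts hα hd hN0
  set h := hstepSE α d N with hdef
  have hN1 : (1 : ℝ) ≤ N := by exact_mod_cast hN0
  have hs1 : 1 ≤ √(N : ℝ) := Real.one_le_sqrt.2 hN1
  set X := √(Real.pi * d * α * N) with hXdef
  have hXX₁ : X = X₁ * √N := by rw [hXdef, Real.sqrt_mul (by positivity)]
  have hX₁X : X₁ ≤ X := by rw [hXX₁]; exact le_mul_of_one_le_right hX₁0.le hs1
  have hsinh := inv_sinh_le hX₁0 hX₁X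
  rw [← hCs] at hsinh
  set E := Real.exp (-X) with hE
  have hE0 : 0 < E := Real.exp_pos _
  -- The residual of `u` in the Nyström system is the truncated sinc indefinite integration error.
  have hres : ∀ i : Fin (2 * N + 1), ‖u (tSE a b h (zidx N i)) - gnSE a b h N g i
      - Matrix.mulVec (VnSE a b h N k) (fun j => u (tSE a b h (zidx N j))) i‖ ≤ C₁ * E := by
    intro i
    set x : ℝ := (zidx N i : ℝ) * h with hx
    have hmem : psiSE a b x ∈ Ioo a b := psiSE_mem hab x
    have hHx := hH _ hmem
    have e1 := hHx.norm_indef_error_le hd one_pos hh x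
    have e2 := hHx.norm_trunc_le hd one_pos hh N (fun j => Jfun j h x)
      (fun j => abs_Jfun_le j hh x)
    have hV : Matrix.mulVec (VnSE a b h N k) (fun j => u (tSE a b h (zidx N j))) i
        = ∑ j ∈ Finset.Icc (-(N : ℤ)) N, H (psiSE a b x) ((j * h : ℝ) : ℂ)
          * ((Jfun j h x : ℝ) : ℂ) := by
      rw [← sum_zidx N (fun j : ℤ => H (psiSE a b x) ((j * h : ℝ) : ℂ) * ((Jfun j h x : ℝ) : ℂ))]
      simp only [Matrix.mulVec, dotProduct, VnSE, Matrix.of_apply]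
      refine Finset.sum_congr rfl fun j _ => ?_
      rw [hHu _ hmem, hx, Jfun_node _ _ hh, tSE, tSE]
      push_cast
      ring
    have hux : u (tSE a b h (zidx N i)) = gnSE a b h N g i + ∫ s in Iic x, H (psiSE a b x) s := by
      rw [tSE, gnSE, tSE, ← hx]; exact hu x
    rw [hux, hV, add_sub_cancel_left]
    have e3 := (norm_sub_le_norm_sub_add_norm_sub _ _ _).trans (add_le_add e1 e2)
    refine e3.trans ?_
    have t1 : 2 * B / (Real.pi * 1) * (h * (2 + Real.pi) / Real.pi) / (d * Real.sinh (Real.pi * d / h))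
        ≤ 2 * B / (Real.pi * 1) * (h₀ * (2 + Real.pi) / Real.pi) / d * (Cs * E) := by
      rw [hpd]
      calc _ = 2 * B / (Real.pi * 1) * (h * (2 + Real.pi) / Real.pi) / d * (1 / Real.sinh X) := by
            rw [div_mul_eq_div_div]; ring
        _ ≤ _ := by
            have : 0 ≤ 1 / Real.sinh X :=
              one_div_nonneg.2 (Real.sinh_pos_iff.2 (hX₁0.trans_le hX₁X)).le
            gcongr
    have t2 : 2 * h * B * (2 * Real.exp (-1 * N * h) / (1 * h)) ≤ 4 * B * E := by
      have : Real.exp (-1 * N * h) ≤ E := Real.exp_le_exp.2 (by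
        rw [← hX]
        have : 0 ≤ N * h := by positivity
        nlinarith)
      calc _ = 4 * B * Real.exp (-1 * N * h) := by field_simp; ring
        _ ≤ _ := by gcongr
    calc _ ≤ 2 * B / (Real.pi * 1) * (h₀ * (2 + Real.pi) / Real.pi) / d * (Cs * E) + 4 * B * E :=
          add_le_add t1 t2
      _ = C₁ * E := by rw [hC₁]; ring
  have hv : Matrix.mulVec (EnRZ a b h N) c = gnSE a b h N g
      + Matrix.mulVec (VnSE a b h N k) (Matrix.mulVec (EnRZ a b h N) c) := by
    rw [RZ_factor hab hh, ← Matrix.mulVec_mulVec, Matrix.sub_mulVec, Matrix.one_mulVec] at hc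
    rw [← hc]; simp
  have hε := node_error (fun v r ρ => hst h hh hle N k hk v r ρ) _ _ _ hv hres
  have hη : ∀ j : ℤ, |(j : ℝ)| = N → ‖F ((j * h : ℝ) : ℂ)‖ ≤ A * E := by
    intro j hj
    refine (hF.norm_node hd hh j).trans (le_of_eq ?_)
    rw [hE, ← hX, hj]
    congr 2; ring
  have hτ : ∀ x : ℝ, ‖F x - ∑ j ∈ Finset.Icc (-(N : ℤ)) N,
      F ((j * h : ℝ) : ℂ) * (sincF j h x : ℂ)‖ ≤ (C₂ + C₃) * (√N * E) := by
    intro x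
    have e1 := hF.norm_cardinal_error_le hd hα hh x
    have e2 := hF.norm_trunc_le hd hα hh N (fun j => sincF j h x)
      (fun j => abs_sincF_le_one j hh x)
    refine ((norm_sub_le_norm_sub_add_norm_sub _ _ _).trans (add_le_add e1 e2)).trans ?_
    have t1 : 2 * A / (Real.pi * α) / (d * Real.sinh (Real.pi * d / h)) ≤ C₂ * (√N * E) := by
      rw [hpd]
      calc _ = 2 * A / (Real.pi * α) / d * (1 / Real.sinh X) := by
            rw [div_mul_eq_div_div]; ring
        _ ≤ 2 * A / (Real.pi * α) / d * (Cs * E) := by gcongr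
        _ = C₂ * (1 * E) := by rw [hC₂]; ring
        _ ≤ _ := by gcongr
    have t2 : 1 * A * (2 * Real.exp (-α * N * h) / (α * h)) = C₃ * (√N * E) := by
      have e4 : Real.exp (-α * N * h) = E := by
        rw [hE, ← hX]; congr 1; ring
      have e5 : 1 / h = X₁ * √N / (Real.pi * d) := by
        rw [← hXX₁, ← hpd]; field_simp
      calc _ = 2 * A / α * (1 / h) * E := by rw [e4]; field_simp
        _ = _ := by rw [e5, hC₃]; field_simp
    rw [t2, add_mul]
    gcongr
  have hfin := pointwise_error hab hh hN0 hp hFu c hε (hη N (by simp))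
    (hη (-(N : ℤ)) (by simp)) hτ ht
  refine hfin.trans ?_
  calc _ = (C₂ + C₃) * √N * E + 4 * (C₄ + A) * 1 * E
        + (C₄ + 4 * (C₄ + A)) * √(6 * sqSum) * √N * E := by rw [hC₄]; ring
    _ ≤ (C₂ + C₃) * √N * E + 4 * (C₄ + A) * √N * E
        + (C₄ + 4 * (C₄ + A)) * √(6 * sqSum) * √N * E := by gcongr
    _ = _ := by ring

end

section

open MeasureTheory Set Filter Topology

/-! ### Holomorphy of parametric integrals and of diagonal restrictions -/

/-- A parametric integral of holomorphic functions with a locally uniform integrable bound is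
holomorphic; the derivative is dominated through Cauchy's estimate. -/
theorem differentiableAt_integral_of_bound {T : Type*} [MeasurableSpace T] {μ : Measure T}
    {Φ : ℂ → T → ℂ} {z₀ : ℂ} {r : ℝ} (hr : 0 < r) {bound : T → ℝ}
    (hm : ∀ z ∈ Metric.ball z₀ r, AEStronglyMeasurable (Φ z) μ)
    (hdiff : ∀ᵐ t ∂μ, DifferentiableOn ℂ (fun z => Φ z t) (Metric.ball z₀ r))
    (hb : ∀ᵐ t ∂μ, ∀ z ∈ Metric.ball z₀ r, ‖Φ z t‖ ≤ bound t) (hbi : Integrable bound μ) :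
    DifferentiableAt ℂ (fun z => ∫ t, Φ z t ∂μ) z₀ := by
  have hz₀ : z₀ ∈ Metric.ball z₀ r := Metric.mem_ball_self hr
  have hda : ∀ᵐ t ∂μ, ∀ z ∈ Metric.ball z₀ r, HasDerivAt (fun z => Φ z t)
      (deriv (fun z => Φ z t) z) z := by
    filter_upwards [hdiff] with t ht z hz
    exact (ht.differentiableAt (Metric.isOpen_ball.mem_nhds hz)).hasDerivAt
  refine (hasDerivAt_integral_of_dominated_loc_of_deriv_le (F := Φ)
    (F' := fun z t => deriv (fun z => Φ z t) z) (bound := fun t => bound t / (r / 4))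
    (Metric.ball_mem_nhds z₀ (half_pos hr)) ?_ ?_ ?_ ?_ (hbi.div_const _) ?_).2.differentiableAt
  · filter_upwards [Metric.ball_mem_nhds z₀ hr] with z hz using hm z hz
  · exact Integrable.mono' hbi (hm z₀ hz₀) (by filter_upwards [hb] with t ht using ht z₀ hz₀)
  · -- the derivative is an a.e. limit of measurable difference quotients
    have hseq : ∀ n : ℕ, (r / (n + 2) : ℝ) ≠ 0 ∧ z₀ + ((r / (n + 2) : ℝ) : ℂ) ∈ Metric.ball z₀ r := by
      intro n
      have h2 : (0 : ℝ) < n + 2 := by positivity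
      refine ⟨by positivity, ?_⟩
      rw [mem_ball_iff_norm, add_sub_cancel_left, Complex.norm_real, Real.norm_eq_abs,
        abs_of_pos (by positivity), div_lt_iff₀ h2]
      nlinarith [(Nat.cast_nonneg n : (0 : ℝ) ≤ n)]
    refine aestronglyMeasurable_of_tendsto_ae atTop
      (f := fun (n : ℕ) t => ((r / (n + 2) : ℝ) : ℂ)⁻¹ • (Φ (z₀ + ((r / (n + 2) : ℝ) : ℂ)) t - Φ z₀ t))
      (fun n => ((hm _ (hseq n).2).sub (hm z₀ hz₀)).const_smul (((r / (n + 2) : ℝ) : ℂ)⁻¹)) ?_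
    filter_upwards [hda] with t ht
    have h1 := (hasDerivAt_iff_tendsto_slope_zero.1 (ht z₀ hz₀))
    refine h1.comp (tendsto_nhdsWithin_iff.2 ⟨?_, Eventually.of_forall fun n => ?_⟩)
    · have : Tendsto (fun n : ℕ => (r / (n + 2) : ℝ)) atTop (𝓝 0) :=
        tendsto_const_nhds.div_atTop
          (tendsto_atTop_add_const_right _ _ tendsto_natCast_atTop_atTop)
      exact_mod_cast (Complex.continuous_ofReal.tendsto 0).comp this
    · exact Complex.ofReal_ne_zero.2 (hseq n).1
  · filter_upwards [hdiff, hb] with t ht hbt z hz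
    have hsub : Metric.closedBall z (r / 4) ⊆ Metric.ball z₀ r := fun w hw => by
      rw [Metric.mem_closedBall] at hw
      rw [Metric.mem_ball] at hz ⊢
      linarith [dist_triangle w z z₀]
    exact Complex.norm_deriv_le_of_forall_mem_sphere_norm_le (by positivity)
      ((ht.mono hsub).diffContOnCl_ball (subset_refl _))
      (fun w hw => hbt w (hsub (Metric.sphere_subset_closedBall hw)))
  · filter_upwards [hda] with t ht z hz
    exact ht z (Metric.ball_subset_ball (by linarith) hz)

/-- A bounded separately holomorphic function restricts to a holomorphic function on the diagonal:
apply Cauchy's formula in the first variable and differentiate under the integral sign. -/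
theorem differentiableOn_diag {S : Set ℂ} (hS : IsOpen S) {f : ℂ → ℂ → ℂ} {M : ℝ}
    (h1 : ∀ w ∈ S, DifferentiableOn ℂ (fun z => f z w) S)
    (h2 : ∀ z ∈ S, DifferentiableOn ℂ (fun w => f z w) S)
    (hb : ∀ z ∈ S, ∀ w ∈ S, ‖f z w‖ ≤ M) : DifferentiableOn ℂ (fun z => f z z) S := by
  intro z₀ hz₀
  apply DifferentiableAt.differentiableWithinAt
  obtain ⟨R, hR, hRS⟩ := Metric.nhds_basis_closedBall.mem_iff.1 (hS.mem_nhds hz₀)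
  have hM : 0 ≤ M := (norm_nonneg _).trans (hb z₀ hz₀ z₀ hz₀)
  have hcm : ∀ θ : ℝ, circleMap z₀ R θ ∈ S := fun θ =>
    hRS (circleMap_mem_closedBall z₀ hR.le θ)
  have hdist : ∀ z ∈ Metric.ball z₀ (R / 2), ∀ θ, R / 2 ≤ ‖circleMap z₀ R θ - z‖ := by
    intro z hz θ
    have h3 : ‖circleMap z₀ R θ - z₀‖ = R := by simp [circleMap, abs_of_pos hR]
    rw [mem_ball_iff_norm] at hz
    have := norm_sub_norm_le (circleMap z₀ R θ - z₀) (z - z₀)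
    rw [sub_sub_sub_cancel_right] at this
    linarith
  set Φ : ℂ → ℝ → ℂ := fun z θ =>
    deriv (circleMap z₀ R) θ * ((circleMap z₀ R θ - z)⁻¹ * f (circleMap z₀ R θ) z) with hΦ
  have hform : ∀ z ∈ Metric.ball z₀ (R / 2),
      f z z = (2 * Real.pi * Complex.I)⁻¹ * ∫ θ in Ioc 0 (2 * Real.pi), Φ z θ := by
    intro z hz
    have hzR : z ∈ Metric.ball z₀ R := Metric.ball_subset_ball (by linarith) hz
    have hzS : z ∈ S := hRS (Metric.ball_subset_closedBall hzR)
    have h3 := Complex.two_pi_I_inv_smul_circleIntegral_sub_inv_smul_of_differentiable_on_off_countable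
      (f := fun ξ => f ξ z) countable_empty hzR ((h1 z hzS).continuousOn.mono hRS)
      (fun x hx => (h1 z hzS).differentiableAt
        (hS.mem_nhds (hRS (Metric.ball_subset_closedBall hx.1))))
    rw [← h3, circleIntegral, intervalIntegral.integral_of_le Real.two_pi_pos.le]
    rfl
  have hda : DifferentiableAt ℂ (fun z => ∫ θ in Ioc 0 (2 * Real.pi), Φ z θ) z₀ := by
    refine differentiableAt_integral_of_bound (half_pos hR) (bound := fun _ => R * ((R / 2)⁻¹ * M))
      ?_ ?_ ?_ ?_
    · intro z hz
      have hzS : z ∈ S := hRS (Metric.ball_subset_closedBall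
        (Metric.ball_subset_ball (by linarith) hz))
      refine Continuous.aestronglyMeasurable ?_
      have hc := continuous_circleMap z₀ R
      refine Continuous.mul ?_ (Continuous.mul (Continuous.inv₀ (hc.sub continuous_const) ?_)
        ((h1 z hzS).continuousOn.comp_continuous hc hcm))
      · rw [show deriv (circleMap z₀ R) = fun θ => circleMap 0 R θ * Complex.I from
          funext (deriv_circleMap z₀ R)]
        exact (continuous_circleMap 0 R).mul continuous_const
      · intro θ h0
        have := hdist z hz θ
        rw [h0, norm_zero] at this
        linarith
    · refine Eventually.of_forall fun θ z hz => ?_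
      have hzS : z ∈ S := hRS (Metric.ball_subset_closedBall
        (Metric.ball_subset_ball (by linarith) hz))
      have hne : circleMap z₀ R θ - z ≠ 0 := fun h0 => by
        have := hdist z hz θ
        rw [h0, norm_zero] at this
        linarith
      have h4 : DifferentiableAt ℂ (fun w => f (circleMap z₀ R θ) w) z :=
        (h2 _ (hcm θ)).differentiableAt (hS.mem_nhds hzS)
      exact ((((differentiableAt_const _).sub differentiableAt_id).inv hne).mul h4).const_mul _
        |>.differentiableWithinAt
    · refine Eventually.of_forall fun θ z hz => ?_
      have hzS : z ∈ S := hRS (Metric.ball_subset_closedBall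
        (Metric.ball_subset_ball (by linarith) hz))
      rw [hΦ]
      simp only [norm_mul, norm_inv]
      have h5 : ‖deriv (circleMap z₀ R) θ‖ = R := by
        simp [deriv_circleMap, circleMap, abs_of_pos hR]
      rw [h5]
      have := hdist z hz θ
      gcongr
      exact hb _ (hcm θ) _ hzS
    · exact integrable_const _
  refine (hda.const_mul ((2 * Real.pi * Complex.I)⁻¹)).congr_of_eventuallyEq ?_
  filter_upwards [Metric.ball_mem_nhds z₀ (half_pos hR)] with z hz using hform z hz

end

section

open MeasureTheory Set Filter Topology

/-! ### The SE transformation on the strip -/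

/-- Lower-bound factor for `|1 + e^ζ|` relative to `1 + e^{Re ζ}` on the strip of half-width `d`. -/
def kap (d : ℝ) : ℝ := √((1 + Real.cos d) / 2)

theorem kap_pos {d : ℝ} (hd : 0 < d) (hdpi : d < Real.pi) : 0 < kap d := by
  apply Real.sqrt_pos.2
  have h1 := Real.cos_lt_cos_of_nonneg_of_le_pi hd.le le_rfl hdpi
  rw [Real.cos_pi] at h1
  linarith

theorem norm_one_add_exp_ge {d : ℝ} (hdpi : d < Real.pi) {ζ : ℂ} (hζ : ζ ∈ Dstrip d) :
    kap d * (1 + Real.exp ζ.re) ≤ ‖1 + Complex.exp ζ‖ := by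
  have hE := Real.exp_pos ζ.re
  have hc : Real.cos d ≤ Real.cos ζ.im := by
    rw [← Real.cos_abs ζ.im]
    exact Real.cos_le_cos_of_nonneg_of_le_pi (abs_nonneg _) hdpi.le (le_of_lt hζ)
  have hc1 := Real.cos_le_one d
  have hc2 := Real.neg_one_le_cos d
  have hn : ‖1 + Complex.exp ζ‖ ^ 2
      = 1 + 2 * Real.exp ζ.re * Real.cos ζ.im + Real.exp ζ.re ^ 2 := by
    rw [Complex.sq_norm, Complex.normSq_apply]
    simp only [Complex.add_re, Complex.one_re, Complex.add_im, Complex.one_im, Complex.exp_re,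
      Complex.exp_im]
    nlinarith [Real.sin_sq_add_cos_sq ζ.im]
  have hk0 : 0 ≤ kap d := Real.sqrt_nonneg _
  have hk2 : kap d ^ 2 = (1 + Real.cos d) / 2 := Real.sq_sqrt (by linarith)
  refine (sq_le_sq₀ (mul_nonneg hk0 (by positivity)) (norm_nonneg _)).1 ?_
  rw [hn, mul_pow, hk2]
  nlinarith [sq_nonneg (1 - Real.exp ζ.re), mul_le_mul_of_nonneg_left hc hE.le]

theorem one_add_exp_ne {d : ℝ} (hd : 0 < d) (hdpi : d < Real.pi) {ζ : ℂ} (hζ : ζ ∈ Dstrip d) :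
    1 + Complex.exp ζ ≠ 0 := by
  rw [← norm_pos_iff]
  refine lt_of_lt_of_le ?_ (norm_one_add_exp_ge hdpi hζ)
  have := kap_pos hd hdpi
  positivity

theorem psiSEC_eq {a b : ℝ} {ζ : ℂ} (h : 1 + Complex.exp ζ ≠ 0) :
    psiSEC a b ζ = a + (b - a) * (Complex.exp ζ / (1 + Complex.exp ζ)) := by
  have h1 : Complex.exp ζ = Complex.exp (ζ / 2) * Complex.exp (ζ / 2) := by
    rw [← Complex.exp_add]; ring_nf
  have h0 := Complex.exp_ne_zero (ζ / 2)
  have h2 : 1 + Complex.exp (ζ / 2) * Complex.exp (ζ / 2) ≠ 0 := by rwa [← h1]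
  have h3 : Complex.exp (ζ / 2) + (Complex.exp (ζ / 2))⁻¹ ≠ 0 := by
    intro h4
    apply h2
    have h5 := congrArg (fun z => z * Complex.exp (ζ / 2)) h4
    simp only [add_mul, inv_mul_cancel₀ h0, zero_mul] at h5
    rw [add_comm]; exact h5
  rw [psiSEC, Complex.tanh_eq_sinh_div_cosh, Complex.sinh, Complex.cosh, Complex.exp_neg, h1]
  have h5 : (Complex.exp (ζ / 2) - (Complex.exp (ζ / 2))⁻¹) / 2
      / ((Complex.exp (ζ / 2) + (Complex.exp (ζ / 2))⁻¹) / 2)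
      = (Complex.exp (ζ / 2) * Complex.exp (ζ / 2) - 1)
        / (1 + Complex.exp (ζ / 2) * Complex.exp (ζ / 2)) := by
    rw [div_div_div_cancel_right₀ two_ne_zero, div_eq_div_iff h3 h2]
    field_simp
    ring
  rw [h5]
  generalize Complex.exp (ζ / 2) = e at h2
  have h6 : 1 + e ^ 2 ≠ 0 := by rwa [sq]
  field_simp
  ring

/-- The complex derivative of the SE transformation. -/
def dpsi (a b : ℝ) (ζ : ℂ) : ℂ := (b - a) * (Complex.exp ζ / (1 + Complex.exp ζ) ^ 2)

/-- The logistic function, `(ψ^SE - a)/(b - a)`. -/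
def sig (x : ℝ) : ℝ := Real.exp x / (1 + Real.exp x)

/-- The derivative of the logistic function. -/
def dsig (x : ℝ) : ℝ := Real.exp x / (1 + Real.exp x) ^ 2

theorem sig_nonneg (x : ℝ) : 0 ≤ sig x := by unfold sig; positivity
theorem dsig_nonneg (x : ℝ) : 0 ≤ dsig x := by unfold dsig; positivity

theorem sig_le_one (x : ℝ) : sig x ≤ 1 := by
  unfold sig
  rw [div_le_one (by positivity)]
  linarith

theorem sig_le_exp (x : ℝ) : sig x ≤ Real.exp x := by
  have := Real.exp_pos x
  unfold sig
  rw [div_le_iff₀ (by positivity)]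
  nlinarith

theorem continuous_dsig : Continuous dsig := by
  unfold dsig
  refine Real.continuous_exp.div (by fun_prop) fun x => by positivity

theorem hasDerivAt_sig (x : ℝ) : HasDerivAt sig (dsig x) x := by
  have h := (Real.hasDerivAt_exp x).div ((Real.hasDerivAt_exp x).const_add 1)
    (by positivity : 1 + Real.exp x ≠ 0)
  refine h.congr_deriv ?_
  unfold dsig
  congr 1
  ring

theorem tendsto_sig_atBot : Tendsto sig atBot (𝓝 0) :=
  squeeze_zero sig_nonneg sig_le_exp Real.tendsto_exp_atBot

theorem dsig_le (x : ℝ) : dsig x ≤ Real.exp (-|x|) := exp_div_sq_le x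

section strip
variable {a b d : ℝ}

theorem norm_sigC_le (hd : 0 < d) (hdpi : d < Real.pi) {ζ : ℂ} (hζ : ζ ∈ Dstrip d) :
    ‖Complex.exp ζ / (1 + Complex.exp ζ)‖ ≤ sig ζ.re / kap d := by
  have hk := kap_pos hd hdpi
  rw [norm_div, Complex.norm_exp, sig, div_div]
  refine div_le_div_of_nonneg_left (Real.exp_pos _).le (by positivity) ?_
  rw [mul_comm]
  exact norm_one_add_exp_ge hdpi hζ

theorem norm_inv_le (hd : 0 < d) (hdpi : d < Real.pi) {ζ : ℂ} (hζ : ζ ∈ Dstrip d) :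
    ‖1 / (1 + Complex.exp ζ)‖ ≤ sig (-ζ.re) / kap d := by
  have hk := kap_pos hd hdpi
  rw [norm_div, norm_one, sig, exp_div_one_add, div_div]
  refine div_le_div_of_nonneg_left zero_le_one (by positivity) ?_
  rw [mul_comm]
  exact norm_one_add_exp_ge hdpi hζ

theorem norm_dpsi_le (hab : a < b) (hd : 0 < d) (hdpi : d < Real.pi) {ζ : ℂ} (hζ : ζ ∈ Dstrip d) :
    ‖dpsi a b ζ‖ ≤ (b - a) / kap d ^ 2 * dsig ζ.re := by
  have hk := kap_pos hd hdpi
  have hba : 0 < b - a := sub_pos.2 hab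
  have h1 : ‖((b : ℂ) - a)‖ = b - a := by
    rw [← Complex.ofReal_sub, Complex.norm_real, Real.norm_eq_abs, abs_of_pos hba]
  rw [dpsi, norm_mul, norm_div, norm_pow, Complex.norm_exp, h1, div_mul_eq_mul_div, mul_div_assoc]
  refine mul_le_mul_of_nonneg_left ?_ hba.le
  rw [dsig, div_div]
  refine div_le_div_of_nonneg_left (Real.exp_pos _).le (by positivity) ?_
  rw [← mul_pow, mul_comm (1 + Real.exp ζ.re)]
  exact pow_le_pow_left₀ (by positivity) (norm_one_add_exp_ge hdpi hζ) 2

theorem psiSEC_sub_a (hd : 0 < d) (hdpi : d < Real.pi) {ζ : ℂ} (hζ : ζ ∈ Dstrip d) :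
    psiSEC a b ζ - a = (b - a) * (Complex.exp ζ / (1 + Complex.exp ζ)) := by
  rw [psiSEC_eq (one_add_exp_ne hd hdpi hζ)]; ring

theorem b_sub_psiSEC (hd : 0 < d) (hdpi : d < Real.pi) {ζ : ℂ} (hζ : ζ ∈ Dstrip d) :
    b - psiSEC a b ζ = (b - a) * (1 / (1 + Complex.exp ζ)) := by
  have h := one_add_exp_ne hd hdpi hζ
  rw [psiSEC_eq h]
  field_simp
  ring

theorem differentiableOn_sigC (hd : 0 < d) (hdpi : d < Real.pi) :
    DifferentiableOn ℂ (fun ζ => Complex.exp ζ / (1 + Complex.exp ζ)) (Dstrip d) := fun _ hζ =>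
  (Complex.differentiableAt_exp.div (Complex.differentiableAt_exp.const_add 1)
    (one_add_exp_ne hd hdpi hζ)).differentiableWithinAt

theorem differentiableOn_psiSEC (hd : 0 < d) (hdpi : d < Real.pi) :
    DifferentiableOn ℂ (psiSEC a b) (Dstrip d) :=
  (((differentiableOn_sigC hd hdpi).const_mul ((b : ℂ) - a)).const_add (a : ℂ)).congr
    fun _ hζ => psiSEC_eq (one_add_exp_ne hd hdpi hζ)

theorem differentiableOn_dpsi (hd : 0 < d) (hdpi : d < Real.pi) :
    DifferentiableOn ℂ (dpsi a b) (Dstrip d) := fun _ hζ =>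
  ((Complex.differentiableAt_exp.div ((Complex.differentiableAt_exp.const_add 1).pow 2)
    (pow_ne_zero 2 (one_add_exp_ne hd hdpi hζ))).const_mul _).differentiableWithinAt

theorem real_mem_Dstrip (hd : 0 < d) (x : ℝ) : (x : ℂ) ∈ Dstrip d := by simpa [Dstrip] using hd

theorem psiSEC_ofReal (x : ℝ) : psiSEC a b x = (psiSE a b x : ℂ) := by
  rw [psiSEC, psiSE]
  push_cast
  rfl

theorem dpsi_ofReal (x : ℝ) : dpsi a b x = ((deriv (psiSE a b) x : ℝ) : ℂ) := by
  rw [dpsi, deriv_psiSE]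
  push_cast
  rfl

theorem add_real_mem_Dstrip {ζ : ℂ} (hζ : ζ ∈ Dstrip d) (s : ℝ) : ζ + s ∈ Dstrip d := by
  simpa [Dstrip] using hζ

end strip

/-- Integrating the `m`-th power of the logistic function against its derivative. -/
theorem integral_sig_pow (m : ℕ) (x : ℝ) :
    IntegrableOn (fun s : ℝ => sig (x + s) ^ m * dsig (x + s)) (Iic 0) ∧
    ∫ s in Iic (0 : ℝ), sig (x + s) ^ m * dsig (x + s) = sig x ^ (m + 1) / (m + 1) := by
  have hd : ∀ s : ℝ, HasDerivAt (fun s => sig (x + s) ^ (m + 1) / (m + 1))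
      (sig (x + s) ^ m * dsig (x + s)) s := by
    intro s
    have h1 : HasDerivAt (fun s => sig (x + s)) (dsig (x + s)) s := by
      exact (hasDerivAt_sig (x + s)).comp_const_add x s
    refine ((h1.pow (m + 1)).div_const _).congr_deriv ?_
    have : ((m : ℝ) + 1) ≠ 0 := by positivity
    push_cast
    field_simp
  have ht : Tendsto (fun s => sig (x + s) ^ (m + 1) / ((m : ℝ) + 1)) atBot (𝓝 0) := by
    have h2 : Tendsto (fun s => sig (x + s)) atBot (𝓝 0) :=
      tendsto_sig_atBot.comp (tendsto_atBot_add_const_left _ _ tendsto_id)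
    simpa using (h2.pow (m + 1)).div_const ((m : ℝ) + 1)
  have hi : IntegrableOn (fun s : ℝ => sig (x + s) ^ m * dsig (x + s)) (Iic 0) :=
    (Integrable.mono' ((integrable_exp_neg_abs one_pos).comp_add_left x)
      (Continuous.aestronglyMeasurable (by
        have h1 : Continuous sig := continuous_iff_continuousAt.2
          fun y => (hasDerivAt_sig y).continuousAt
        have h2 := continuous_dsig
        fun_prop))
      (Eventually.of_forall fun s => by
        rw [Real.norm_eq_abs, abs_of_nonneg (mul_nonneg (pow_nonneg (sig_nonneg _) _)
          (dsig_nonneg _)), neg_one_mul]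
        refine le_trans ?_ (dsig_le (x + s))
        exact mul_le_of_le_one_left (dsig_nonneg _)
          (pow_le_one₀ (sig_nonneg _) (sig_le_one _)))).integrableOn
  refine ⟨hi, ?_⟩
  rw [integral_Iic_of_hasDerivAt_of_tendsto' (fun s _ => hd s) hi ht]
  simp

end

section

open MeasureTheory Set Filter Topology

/-! ### The Volterra equation on the strip -/

/-- The Volterra operator in the strip variable: integration along the horizontal ray ending at
`ζ`. -/
def volt (κ : ℂ → ℂ → ℂ) (q f : ℂ → ℂ) (ζ : ℂ) : ℂ :=
  ∫ s in Iic (0 : ℝ), κ ζ (ζ + s) * q (ζ + s) * f (ζ + s)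

/-- The properties of the transformed kernel `κ` and of the weight `q` used for the Volterra
equation on the strip. -/
structure VoltData (κ : ℂ → ℂ → ℂ) (q : ℂ → ℂ) (d K Q : ℝ) : Prop where
  diff_left : ∀ w ∈ Dstrip d, DifferentiableOn ℂ (fun z => κ z w) (Dstrip d)
  diff_right : ∀ z ∈ Dstrip d, DifferentiableOn ℂ (fun w => κ z w) (Dstrip d)
  bound : ∀ z ∈ Dstrip d, ∀ w ∈ Dstrip d, ‖κ z w‖ ≤ K
  weight_diff : DifferentiableOn ℂ q (Dstrip d)
  weight_bound : ∀ z ∈ Dstrip d, ‖q z‖ ≤ Q * dsig z.re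
  nonneg_K : 0 ≤ K
  nonneg_Q : 0 ≤ Q

section volt
variable {κ : ℂ → ℂ → ℂ} {q f : ℂ → ℂ} {d K Q M : ℝ}

theorem VoltData.norm_integrand_le (h : VoltData κ q d K Q) {ζ : ℂ} (hζ : ζ ∈ Dstrip d) (s : ℝ)
    {y : ℝ} (hf : ‖f (ζ + s)‖ ≤ y) :
    ‖κ ζ (ζ + s) * q (ζ + s) * f (ζ + s)‖ ≤ K * Q * y * dsig (ζ.re + s) := by
  have hs := add_real_mem_Dstrip hζ s
  have h1 := h.bound ζ hζ _ hs
  have h2 := h.weight_bound _ hs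
  have hre : (ζ + s).re = ζ.re + s := by simp
  rw [hre] at h2
  rw [norm_mul, norm_mul]
  calc _ ≤ K * (Q * dsig (ζ.re + s)) * y :=
        mul_le_mul (mul_le_mul h1 h2 (norm_nonneg _) h.nonneg_K) hf (norm_nonneg _)
          (mul_nonneg h.nonneg_K (mul_nonneg h.nonneg_Q (dsig_nonneg _)))
    _ = _ := by ring

theorem VoltData.norm_volt_le (h : VoltData κ q d K Q) {ζ : ℂ} (hζ : ζ ∈ Dstrip d) (m : ℕ)
    (hf : ∀ s : ℝ, ‖f (ζ + s)‖ ≤ M * sig (ζ.re + s) ^ m) :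
    ‖volt κ q f ζ‖ ≤ K * Q * M * (sig ζ.re ^ (m + 1) / (m + 1)) := by
  obtain ⟨hi, hv⟩ := integral_sig_pow m ζ.re
  rw [← hv, ← integral_const_mul, volt]
  refine norm_integral_le_of_norm_le (hi.const_mul _) (Eventually.of_forall fun s => ?_)
  refine (h.norm_integrand_le hζ s (hf s)).trans (le_of_eq (by ring))

theorem VoltData.continuous_kernel (h : VoltData κ q d K Q) {ζ : ℂ} (hζ : ζ ∈ Dstrip d) :
    Continuous fun s : ℝ => κ ζ (ζ + s) * q (ζ + s) :=
  ((h.diff_right ζ hζ).continuousOn.comp_continuous (by fun_prop)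
    fun s => add_real_mem_Dstrip hζ s).mul
  (h.weight_diff.continuousOn.comp_continuous (by fun_prop) fun s => add_real_mem_Dstrip hζ s)

theorem integrable_dsig (x : ℝ) : Integrable fun s => dsig (x + s) :=
  Integrable.mono' ((integrable_exp_neg_abs one_pos).comp_add_left x)
    (continuous_dsig.comp (continuous_const.add continuous_id)).aestronglyMeasurable
    (Eventually.of_forall fun s => by
      rw [Real.norm_eq_abs, abs_of_nonneg (dsig_nonneg _), neg_one_mul]
      exact dsig_le (x + s))

theorem VoltData.integrable (h : VoltData κ q d K Q) {ζ : ℂ} (hζ : ζ ∈ Dstrip d)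
    (hc : Continuous fun s : ℝ => f (ζ + s)) (hf : ∀ s : ℝ, ‖f (ζ + s)‖ ≤ M) :
    Integrable fun s : ℝ => κ ζ (ζ + s) * q (ζ + s) * f (ζ + s) :=
  Integrable.mono' ((integrable_dsig ζ.re).const_mul (K * Q * M))
    ((h.continuous_kernel hζ).mul hc).aestronglyMeasurable
    (Eventually.of_forall fun s => h.norm_integrand_le hζ s (hf s))

theorem VoltData.differentiableOn_volt (h : VoltData κ q d K Q)
    (hfd : DifferentiableOn ℂ f (Dstrip d)) (hf : ∀ z ∈ Dstrip d, ‖f z‖ ≤ M) :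
    DifferentiableOn ℂ (volt κ q f) (Dstrip d) := by
  intro z₀ hz₀
  apply DifferentiableAt.differentiableWithinAt
  obtain ⟨r₀, hr₀, hsub₀⟩ := Metric.isOpen_iff.1 (isOpen_Dstrip d) z₀ hz₀
  set r := min r₀ 1 with hr
  have hrpos : 0 < r := lt_min hr₀ one_pos
  have hsub : Metric.ball z₀ r ⊆ Dstrip d :=
    (Metric.ball_subset_ball (min_le_left _ _)).trans hsub₀
  have hM : 0 ≤ M := (norm_nonneg _).trans (hf z₀ hz₀)
  have hshift : ∀ s : ℝ, DifferentiableOn ℂ (fun z : ℂ => z + (s : ℂ)) (Dstrip d) :=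
    fun s => (differentiable_id.add_const _).differentiableOn
  have hmaps : ∀ s : ℝ, MapsTo (fun z : ℂ => z + (s : ℂ)) (Dstrip d) (Dstrip d) :=
    fun s z hz => add_real_mem_Dstrip hz s
  refine differentiableAt_integral_of_bound hrpos
    (bound := fun s => K * Q * M * (Real.exp 1 * Real.exp (-1 * |z₀.re + s|))) ?_ ?_ ?_ ?_
  · intro z hz
    exact ((h.continuous_kernel (hsub hz)).mul (hfd.continuousOn.comp_continuous (by fun_prop)
      fun s => add_real_mem_Dstrip (hsub hz) s)).aestronglyMeasurable
  · refine Eventually.of_forall fun s => DifferentiableOn.mono ?_ hsub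
    refine DifferentiableOn.mul (DifferentiableOn.mul ?_ (h.weight_diff.comp (hshift s) (hmaps s)))
      (hfd.comp (hshift s) (hmaps s))
    exact differentiableOn_diag (isOpen_Dstrip d) (f := fun z w => κ z (w + s))
      (fun w hw => h.diff_left _ (hmaps s hw))
      (fun z hz => (h.diff_right z hz).comp (hshift s) (hmaps s))
      (fun z hz w hw => h.bound z hz _ (hmaps s hw))
  · refine Eventually.of_forall fun s z hz => ?_
    refine (h.norm_integrand_le (hsub hz) s (hf _ (hmaps s (hsub hz)))).trans ?_
    refine mul_le_mul_of_nonneg_left ((dsig_le _).trans ?_)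
      (mul_nonneg (mul_nonneg h.nonneg_K h.nonneg_Q) hM)
    rw [← Real.exp_add]
    apply Real.exp_le_exp.2
    have h1 : |z.re - z₀.re| ≤ 1 := by
      have h2 := Complex.abs_re_le_norm (z - z₀)
      rw [mem_ball_iff_norm] at hz
      rw [Complex.sub_re] at h2
      linarith [min_le_right r₀ 1]
    have h3 := abs_sub_abs_le_abs_sub (z₀.re + s) (z.re + s)
    rw [add_sub_add_right_eq_sub, abs_sub_comm] at h3
    linarith
  · exact ((((integrable_exp_neg_abs one_pos).comp_add_left z₀.re).const_mul _).const_mul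
      _).integrableOn

/-- Picard iterates of the Volterra equation `U = G + volt U`. -/
def picard (κ : ℂ → ℂ → ℂ) (q G : ℂ → ℂ) : ℕ → ℂ → ℂ
  | 0 => G
  | m + 1 => volt κ q (picard κ q G m)

variable {G : ℂ → ℂ}

theorem VoltData.norm_picard_le (h : VoltData κ q d K Q) (hG : ∀ z ∈ Dstrip d, ‖G z‖ ≤ M) (m : ℕ) :
    ∀ z ∈ Dstrip d, ‖picard κ q G m z‖ ≤ M * ((K * Q) ^ m / m.factorial) * sig z.re ^ m := by
  induction m with
  | zero => intro z hz; simpa [picard] using hG z hz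
  | succ m ih =>
    intro z hz
    refine (h.norm_volt_le hz m (M := M * ((K * Q) ^ m / m.factorial)) fun s => ?_).trans
      (le_of_eq ?_)
    · have := ih _ (add_real_mem_Dstrip hz s)
      rwa [Complex.add_re, Complex.ofReal_re] at this
    · rw [Nat.factorial_succ]
      have h1 : ((m : ℝ) + 1) ≠ 0 := by positivity
      have h2 : (m.factorial : ℝ) ≠ 0 := by positivity
      push_cast
      field_simp
      ring

theorem VoltData.norm_picard_le' (h : VoltData κ q d K Q) (hG : ∀ z ∈ Dstrip d, ‖G z‖ ≤ M) (m : ℕ)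
    {z : ℂ} (hz : z ∈ Dstrip d) : ‖picard κ q G m z‖ ≤ M * ((K * Q) ^ m / m.factorial) := by
  have hM : 0 ≤ M := (norm_nonneg _).trans (hG z hz)
  have h1 := mul_nonneg h.nonneg_K h.nonneg_Q
  exact (h.norm_picard_le hG m z hz).trans (mul_le_of_le_one_right (by positivity)
    (pow_le_one₀ (sig_nonneg _) (sig_le_one _)))

theorem VoltData.differentiableOn_picard (h : VoltData κ q d K Q)
    (hGd : DifferentiableOn ℂ G (Dstrip d)) (hG : ∀ z ∈ Dstrip d, ‖G z‖ ≤ M) (m : ℕ) :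
    DifferentiableOn ℂ (picard κ q G m) (Dstrip d) := by
  induction m with
  | zero => exact hGd
  | succ m ih => exact h.differentiableOn_volt ih (fun z hz => h.norm_picard_le' hG m hz)

/-- The Picard series sums to a bounded holomorphic solution of the Volterra equation on the
strip. -/
theorem VoltData.exists_solution (h : VoltData κ q d K Q)
    (hGd : DifferentiableOn ℂ G (Dstrip d)) (hG : ∀ z ∈ Dstrip d, ‖G z‖ ≤ M) :
    ∃ (U : ℂ → ℂ) (B : ℝ), DifferentiableOn ℂ U (Dstrip d) ∧ (∀ z ∈ Dstrip d, ‖U z‖ ≤ B) ∧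
      ∀ z ∈ Dstrip d, U z = G z + volt κ q U z := by
  have hsum : Summable fun m : ℕ => M * ((K * Q) ^ m / m.factorial) :=
    (Real.summable_pow_div_factorial (K * Q)).mul_left M
  have hbd : ∀ (m : ℕ) (z : ℂ), z ∈ Dstrip d →
      ‖picard κ q G m z‖ ≤ M * ((K * Q) ^ m / m.factorial) := fun m z hz => h.norm_picard_le' hG m hz
  have hs : ∀ z ∈ Dstrip d, Summable fun m => picard κ q G m z := fun z hz =>
    Summable.of_norm_bounded hsum fun m => hbd m z hz
  refine ⟨fun z => ∑' m, picard κ q G m z, ∑' m : ℕ, M * ((K * Q) ^ m / m.factorial), ?_, ?_, ?_⟩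
  · exact Complex.differentiableOn_tsum_of_summable_norm hsum
      (fun m => h.differentiableOn_picard hGd hG m) (isOpen_Dstrip d) hbd
  · exact fun z hz => tsum_of_norm_bounded hsum.hasSum fun m => hbd m z hz
  · intro z hz
    have hIntg : ∀ m, Integrable (fun s : ℝ => κ z (z + s) * q (z + s) * picard κ q G m (z + s))
        (volume.restrict (Iic 0)) := fun m =>
      (h.integrable hz ((h.differentiableOn_picard hGd hG m).continuousOn.comp_continuous
        (by fun_prop) fun s => add_real_mem_Dstrip hz s)
        fun s => hbd m _ (add_real_mem_Dstrip hz s)).integrableOn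
    have hnorm : Summable fun m => ∫ s in Iic (0 : ℝ),
        ‖κ z (z + s) * q (z + s) * picard κ q G m (z + s)‖ := by
      refine Summable.of_nonneg_of_le (fun m => integral_nonneg fun s => norm_nonneg _)
        (fun m => ?_) (((hsum.mul_left (K * Q)).mul_right (∫ s in Iic (0 : ℝ), dsig (z.re + s))))
      rw [← integral_const_mul]
      exact integral_mono (hIntg m).norm ((integrable_dsig z.re).const_mul _).integrableOn
        fun s => h.norm_integrand_le hz s (hbd m _ (add_real_mem_Dstrip hz s))
    have key := hasSum_integral_of_summable_integral_norm hIntg hnorm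
    change (∑' m, picard κ q G m z) = G z + volt κ q (fun z => ∑' m, picard κ q G m z) z
    rw [(hs z hz).tsum_eq_zero_add, volt]
    congr 1
    rw [show (∑' m, picard κ q G (m + 1) z) = ∑' m, ∫ s in Iic (0 : ℝ),
      κ z (z + s) * q (z + s) * picard κ q G m (z + s) from rfl, key.tsum_eq]
    exact integral_congr_ae (Eventually.of_forall fun s => tsum_mul_left)

/-- Bounded solutions of the Volterra equation on the real line are unique: the difference is its
own image under every power of the operator, and these powers decay factorially. -/
theorem VoltData.unique_real (h : VoltData κ q d K Q) (hd : 0 < d) {f₁ f₂ : ℂ → ℂ} {B : ℝ}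
    (hc₁ : Continuous fun x : ℝ => f₁ x) (hc₂ : Continuous fun x : ℝ => f₂ x)
    (hb₁ : ∀ x : ℝ, ‖f₁ x‖ ≤ B) (hb₂ : ∀ x : ℝ, ‖f₂ x‖ ≤ B)
    (h₁ : ∀ x : ℝ, f₁ x = G x + volt κ q f₁ x) (h₂ : ∀ x : ℝ, f₂ x = G x + volt κ q f₂ x)
    (x : ℝ) : f₁ x = f₂ x := by
  have hcs : ∀ {f : ℂ → ℂ}, (Continuous fun x : ℝ => f x) → ∀ x : ℝ,
      Continuous fun s : ℝ => f ((x : ℂ) + s) := fun {f} hc x => by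
    have h1 := hc.comp (show Continuous fun s : ℝ => x + s by fun_prop)
    simpa [Function.comp_def] using h1
  have hbs : ∀ {f : ℂ → ℂ}, (∀ x : ℝ, ‖f x‖ ≤ B) → ∀ x s : ℝ, ‖f ((x : ℂ) + s)‖ ≤ B :=
    fun hb x s => by rw [← Complex.ofReal_add]; exact hb _
  have hr : ∀ x : ℝ, (f₁ - f₂) x = volt κ q (f₁ - f₂) x := by
    intro x
    have hx := real_mem_Dstrip hd x
    rw [Pi.sub_apply, h₁ x, h₂ x, add_sub_add_left_eq_sub, volt, volt, volt,
      ← integral_sub (h.integrable hx (hcs hc₁ x) (hbs hb₁ x)).integrableOn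
        (h.integrable hx (hcs hc₂ x) (hbs hb₂ x)).integrableOn]
    refine integral_congr_ae (Eventually.of_forall fun s => ?_)
    simp only [Pi.sub_apply]
    ring
  have hm : ∀ (m : ℕ) (x : ℝ),
      ‖(f₁ - f₂) x‖ ≤ 2 * B * ((K * Q) ^ m / m.factorial) * sig x ^ m := by
    intro m
    induction m with
    | zero =>
      intro x
      have := norm_sub_le (f₁ x) (f₂ x)
      simp only [Pi.sub_apply, pow_zero, Nat.factorial_zero, Nat.cast_one, div_one, mul_one]
      linarith [hb₁ x, hb₂ x]
    | succ m ih =>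
      intro x
      rw [hr x]
      refine (h.norm_volt_le (real_mem_Dstrip hd x) m (M := 2 * B * ((K * Q) ^ m / m.factorial))
        fun s => ?_).trans (le_of_eq ?_)
      · have := ih (x + s)
        rwa [Complex.ofReal_add] at this
      · rw [Nat.factorial_succ, Complex.ofReal_re]
        have h1 : ((m : ℝ) + 1) ≠ 0 := by positivity
        have h2 : (m.factorial : ℝ) ≠ 0 := by positivity
        push_cast
        field_simp
        ring
  have hB : 0 ≤ B := (norm_nonneg _).trans (hb₁ 0)
  have hR := mul_nonneg h.nonneg_K h.nonneg_Q
  have hlim : Tendsto (fun m : ℕ => 2 * B * ((K * Q) ^ m / m.factorial)) atTop (𝓝 0) := by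
    simpa using (FloorSemiring.tendsto_pow_div_factorial_atTop (K * Q)).const_mul (2 * B)
  have h0 : ‖(f₁ - f₂) x‖ ≤ 0 := ge_of_tendsto' hlim fun m => (hm m x).trans
    (mul_le_of_le_one_right (by positivity) (pow_le_one₀ (sig_nonneg _) (sig_le_one _)))
  exact sub_eq_zero.1 (norm_le_zero_iff.1 h0)

end volt

end

section

open MeasureTheory Set Filter Topology

/-! ### Change of variables, and integrals along horizontal lines -/

theorem strictMono_psiSE {a b : ℝ} (hab : a < b) : StrictMono (psiSE a b) :=
  strictMono_of_deriv_pos (deriv_psiSE_pos hab)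

theorem psiSE_image_Iic {a b : ℝ} (hab : a < b) (x : ℝ) :
    psiSE a b '' Iic x = Ioc a (psiSE a b x) := by
  ext t
  constructor
  · rintro ⟨y, hy, rfl⟩
    exact ⟨(psiSE_mem hab y).1, (strictMono_psiSE hab).monotone hy⟩
  · rintro ⟨h1, h2⟩
    have ht : t ∈ Ioo a b := ⟨h1, h2.trans_lt (psiSE_mem hab x).2⟩
    refine ⟨phiSE a b t, ?_, psiSE_phiSE ht⟩
    rw [mem_Iic, ← (strictMono_psiSE hab).le_iff_le, psiSE_phiSE ht]
    exact h2

theorem psiSE_image_univ {a b : ℝ} (hab : a < b) : psiSE a b '' univ = Ioo a b := by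
  ext t
  constructor
  · rintro ⟨y, -, rfl⟩
    exact psiSE_mem hab y
  · exact fun ht => ⟨phiSE a b t, mem_univ _, psiSE_phiSE ht⟩

theorem setIntegral_psiSE_image {a b : ℝ} (hab : a < b) (f : ℝ → ℂ) {s : Set ℝ}
    (hs : MeasurableSet s) :
    ∫ t in psiSE a b '' s, f t = ∫ x in s, f (psiSE a b x) * ((deriv (psiSE a b) x : ℝ) : ℂ) := by
  rw [integral_image_eq_integral_abs_deriv_smul hs
    (fun x _ => (hasDerivAt_psiSE a b x).differentiableAt.hasDerivAt.hasDerivWithinAt)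
    (strictMono_psiSE hab).injective.injOn]
  refine integral_congr_ae (Eventually.of_forall fun x => ?_)
  simp only [abs_of_pos (deriv_psiSE_pos hab x), Complex.real_smul]
  ring

theorem intervalIntegral_psiSE {a b : ℝ} (hab : a < b) (f : ℝ → ℂ) (x : ℝ) :
    ∫ t in a..psiSE a b x, f t
      = ∫ y in Iic x, f (psiSE a b y) * ((deriv (psiSE a b) y : ℝ) : ℂ) := by
  rw [intervalIntegral.integral_of_le (psiSE_mem hab x).1.le, ← psiSE_image_Iic hab,
    setIntegral_psiSE_image hab f measurableSet_Iic]

theorem intervalIntegral_psiSE_univ {a b : ℝ} (hab : a < b) (f : ℝ → ℂ) :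
    ∫ t in a..b, f t = ∫ y, f (psiSE a b y) * ((deriv (psiSE a b) y : ℝ) : ℂ) := by
  rw [intervalIntegral.integral_of_le hab.le, integral_Ioc_eq_integral_Ioo, ← psiSE_image_univ hab,
    setIntegral_psiSE_image hab f MeasurableSet.univ, setIntegral_univ]

theorem integral_Iic_translate (f : ℝ → ℂ) (x : ℝ) :
    ∫ s in Iic (0 : ℝ), f (x + s) = ∫ s in Iic x, f s := by
  have h := (measurePreserving_add_left volume x).setIntegral_preimage_emb
    (measurableEmbedding_addLeft x) f (Iic x)
  rw [Set.preimage_const_add_Iic, sub_self] at h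
  exact h

section line
variable {F : ℂ → ℂ} {d A : ℝ}

theorem StripDecay.norm_shift (hF : StripDecay F d A 1) {ζ : ℂ} (hζ : ζ ∈ Dstrip d) (s : ℝ) :
    ‖F (ζ + s)‖ ≤ A * Real.exp (-1 * |ζ.re + s|) := by
  simpa using hF.bound _ (add_real_mem_Dstrip hζ s)

theorem StripDecay.integrable_shift (hF : StripDecay F d A 1) {ζ : ℂ} (hζ : ζ ∈ Dstrip d) :
    Integrable fun s : ℝ => F (ζ + s) :=
  Integrable.mono' (((integrable_exp_neg_abs one_pos).comp_add_left ζ.re).const_mul A)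
    (hF.diff.continuousOn.comp_continuous (by fun_prop)
      fun s => add_real_mem_Dstrip hζ s).aestronglyMeasurable
    (Eventually.of_forall fun s => hF.norm_shift hζ s)

/-- The integral along a horizontal line does not depend on the line: as a function of the base
point it is holomorphic and invariant under real translations, so its derivative vanishes. -/
theorem StripDecay.integral_line_eq (hF : StripDecay F d A 1) (hd : 0 < d) {ζ : ℂ}
    (hζ : ζ ∈ Dstrip d) : ∫ s : ℝ, F (ζ + s) = ∫ s : ℝ, F s := by
  set T : ℂ → ℂ := fun z => ∫ s : ℝ, F (z + s) with hT
  have hA := hF.nonneg hd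
  have hdiff : ∀ z ∈ Dstrip d, DifferentiableAt ℂ T z := by
    intro z₀ hz₀
    obtain ⟨r₀, hr₀, hsub₀⟩ := Metric.isOpen_iff.1 (isOpen_Dstrip d) z₀ hz₀
    set r := min r₀ 1 with hr
    have hrpos : 0 < r := lt_min hr₀ one_pos
    have hsub : Metric.ball z₀ r ⊆ Dstrip d :=
      (Metric.ball_subset_ball (min_le_left _ _)).trans hsub₀
    refine differentiableAt_integral_of_bound hrpos
      (bound := fun s => A * (Real.exp 1 * Real.exp (-1 * |z₀.re + s|))) ?_ ?_ ?_ ?_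
    · exact fun z hz => (hF.integrable_shift (hsub hz)).aestronglyMeasurable
    · refine Eventually.of_forall fun s => ?_
      exact hF.diff.comp (differentiable_id.add_const _).differentiableOn
        fun z hz => add_real_mem_Dstrip (hsub hz) s
    · refine Eventually.of_forall fun s z hz => ?_
      refine (hF.norm_shift (hsub hz) s).trans (mul_le_mul_of_nonneg_left ?_ hA)
      rw [← Real.exp_add]
      apply Real.exp_le_exp.2
      have h1 : |z.re - z₀.re| ≤ 1 := by
        have h2 := Complex.abs_re_le_norm (z - z₀)
        rw [mem_ball_iff_norm] at hz
        rw [Complex.sub_re] at h2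
        linarith [min_le_right r₀ 1]
      have h3 := abs_sub_abs_le_abs_sub (z₀.re + s) (z.re + s)
      rw [add_sub_add_right_eq_sub, abs_sub_comm] at h3
      linarith
    · exact (((integrable_exp_neg_abs one_pos).comp_add_left z₀.re).const_mul _).const_mul _
  have hinv : ∀ (z : ℂ) (r : ℝ), T (z + r) = T z := by
    intro z r
    have := integral_add_left_eq_self (μ := volume) (fun s : ℝ => F (z + s)) r
    simp only [hT]
    rw [← this]
    push_cast
    simp only [add_assoc]
  have hderiv : ∀ z ∈ Dstrip d, deriv T z = 0 := by
    intro z hz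
    have h1 : HasDerivAt T (deriv T z) (z + ((0 : ℝ) : ℂ)) := by
      simpa using (hdiff z hz).hasDerivAt
    have h2 := (h1.comp_const_add z ((0 : ℝ) : ℂ)).comp_ofReal
    simp only [hinv] at h2
    exact h2.unique (hasDerivAt_const _ _)
  have hconn : IsPreconnected (Dstrip d) := by
    have : Convex ℝ (Dstrip d) := by
      have h1 : Dstrip d = Complex.imLm ⁻¹' (Ioo (-d) d) := by
        ext z
        simp [Dstrip, abs_lt]
      rw [h1]
      exact (convex_Ioo _ _).linear_preimage _
    exact this.isPreconnected
  have hc := (isOpen_Dstrip d).is_const_of_deriv_eq_zero hconn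
    (fun z hz => (hdiff z hz).differentiableWithinAt) (fun z hz => hderiv z hz) hζ
    (real_mem_Dstrip hd 0)
  simpa [hT] using hc

/-- Integrals along rays ending far to the right differ little from the integral over `ℝ`. -/
theorem StripDecay.norm_ray_sub_le (hF : StripDecay F d A 1) (hd : 0 < d) {ζ : ℂ}
    (hζ : ζ ∈ Dstrip d) (hx : 0 ≤ ζ.re) :
    ‖(∫ s in Iic (0 : ℝ), F (ζ + s)) - ∫ s : ℝ, F s‖ ≤ A * Real.exp (-ζ.re) := by
  have hi := hF.integrable_shift hζ
  rw [← hF.integral_line_eq hd hζ, ← integral_add_compl measurableSet_Iic hi, compl_Iic,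
    sub_add_cancel_left, norm_neg]
  have h1 : ∫ s in Ioi (0 : ℝ), A * Real.exp (-ζ.re) * Real.exp (-s) = A * Real.exp (-ζ.re) := by
    rw [integral_const_mul, integral_exp_neg_Ioi_zero, mul_one]
  have h2 : IntegrableOn (fun s : ℝ => A * Real.exp (-ζ.re) * Real.exp (-s)) (Ioi 0) :=
    (integrableOn_exp_neg_Ioi 0).const_mul _
  rw [← h1]
  refine norm_integral_le_of_norm_le h2 ?_
  filter_upwards [ae_restrict_mem measurableSet_Ioi] with s hs
  refine (hF.norm_shift hζ s).trans (le_of_eq ?_)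
  rw [abs_of_nonneg (add_nonneg hx (le_of_lt hs)), mul_assoc, ← Real.exp_add]
  congr 2
  ring

end line

end

section

open MeasureTheory Set Filter Topology

/-! ### Decay of the solution at both ends of the strip -/

theorem sig_le_exp_mul {α x : ℝ} (hα1 : α ≤ 1) (hx : x ≤ 0) : sig x ≤ Real.exp (α * x) :=
  (sig_le_exp x).trans (Real.exp_le_exp.2 (by nlinarith))

theorem rpow_le_of_le_mul_exp {α r R x : ℝ} (hα : 0 < α) (hr : 0 ≤ r) (hR : 0 ≤ R)
    (h : r ≤ R * Real.exp x) : r ^ α ≤ R ^ α * Real.exp (α * x) := by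
  have h1 := Real.rpow_le_rpow hr h hα.le
  rwa [Real.mul_rpow hR (Real.exp_pos _).le, ← Real.exp_mul, mul_comm x α] at h1

section psi
variable {a b d : ℝ}

theorem norm_sub_ofReal_of_lt (hab : a < b) : ‖((b : ℂ) - a)‖ = b - a := by
  rw [← Complex.ofReal_sub, Complex.norm_real, Real.norm_eq_abs, abs_of_pos (sub_pos.2 hab)]

theorem norm_psiSEC_sub_a_le (hab : a < b) (hd : 0 < d) (hdpi : d < Real.pi) {ζ : ℂ}
    (hζ : ζ ∈ Dstrip d) : ‖psiSEC a b ζ - a‖ ≤ (b - a) / kap d * sig ζ.re := by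
  rw [psiSEC_sub_a hd hdpi hζ, norm_mul, norm_sub_ofReal_of_lt hab, div_mul_eq_mul_div,
    mul_div_assoc]
  exact mul_le_mul_of_nonneg_left (norm_sigC_le hd hdpi hζ) (sub_pos.2 hab).le

theorem norm_b_sub_psiSEC_le (hab : a < b) (hd : 0 < d) (hdpi : d < Real.pi) {ζ : ℂ}
    (hζ : ζ ∈ Dstrip d) : ‖b - psiSEC a b ζ‖ ≤ (b - a) / kap d * sig (-ζ.re) := by
  rw [b_sub_psiSEC hd hdpi hζ, norm_mul, norm_sub_ofReal_of_lt hab, div_mul_eq_mul_div,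
    mul_div_assoc]
  exact mul_le_mul_of_nonneg_left (norm_inv_le hd hdpi hζ) (sub_pos.2 hab).le

end psi

section decay
variable {κ : ℂ → ℂ → ℂ} {q G U κb : ℂ → ℂ} {d K Q B L α : ℝ} {ga gb : ℂ}

theorem VoltData.norm_solution_sub_left (h : VoltData κ q d K Q) (hα1 : α ≤ 1)
    (hUb : ∀ z ∈ Dstrip d, ‖U z‖ ≤ B) (hU : ∀ z ∈ Dstrip d, U z = G z + volt κ q U z)
    (hG : ∀ z ∈ Dstrip d, ‖G z - ga‖ ≤ L * Real.exp (α * z.re)) {ζ : ℂ} (hζ : ζ ∈ Dstrip d)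
    (hx : ζ.re ≤ 0) : ‖U ζ - ga‖ ≤ (L + K * Q * B) * Real.exp (α * ζ.re) := by
  have hB : 0 ≤ B := (norm_nonneg _).trans (hUb ζ hζ)
  have h1 := h.norm_volt_le (f := U) (M := B) hζ 0
    fun s => by simpa using hUb _ (add_real_mem_Dstrip hζ s)
  have h2 : K * Q * B * (sig ζ.re ^ (0 + 1) / ((0 : ℕ) + 1))
      ≤ K * Q * B * Real.exp (α * ζ.re) := by
    refine mul_le_mul_of_nonneg_left ?_ (mul_nonneg (mul_nonneg h.nonneg_K h.nonneg_Q) hB)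
    simpa using sig_le_exp_mul hα1 hx
  have h3 := hG ζ hζ
  rw [hU ζ hζ, add_sub_right_comm]
  refine (norm_add_le _ _).trans ?_
  rw [add_mul]
  exact add_le_add h3 (h1.trans h2)

/-- The transformed integrand of the Volterra equation with the first kernel argument frozen. -/
theorem VoltData.stripDecay_integrand (h : VoltData κ q d K Q)
    (hκd : DifferentiableOn ℂ κb (Dstrip d)) (hκb : ∀ z ∈ Dstrip d, ‖κb z‖ ≤ K)
    (hUd : DifferentiableOn ℂ U (Dstrip d)) (hUb : ∀ z ∈ Dstrip d, ‖U z‖ ≤ B) :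
    StripDecay (fun z => κb z * U z * q z) d (K * B * Q) 1 where
  diff := (hκd.mul hUd).mul h.weight_diff
  bound ζ hζ := by
    have hB : 0 ≤ B := (norm_nonneg _).trans (hUb ζ hζ)
    rw [norm_mul, norm_mul, mul_assoc (K * B)]
    refine mul_le_mul (mul_le_mul (hκb ζ hζ) (hUb ζ hζ) (norm_nonneg _) h.nonneg_K) ?_
      (norm_nonneg _) (mul_nonneg h.nonneg_K hB)
    refine (h.weight_bound ζ hζ).trans (mul_le_mul_of_nonneg_left ?_ h.nonneg_Q)
    rw [neg_one_mul]
    exact dsig_le _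

/-- At the right end the solution tends to the value of the Volterra equation at `b`: freezing the
first kernel argument at `b` costs `O(exp (-α x))`, and completing the ray to a full horizontal line
costs `O(exp (-x))`. -/
theorem VoltData.norm_solution_sub_right (h : VoltData κ q d K Q) (hd : 0 < d)
    (hα1 : α ≤ 1) (hL : 0 ≤ L)
    (hUd : DifferentiableOn ℂ U (Dstrip d))
    (hUb : ∀ z ∈ Dstrip d, ‖U z‖ ≤ B) (hU : ∀ z ∈ Dstrip d, U z = G z + volt κ q U z)
    (hG : ∀ z ∈ Dstrip d, ‖gb - G z‖ ≤ L * Real.exp (α * -z.re))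
    (hκd : DifferentiableOn ℂ κb (Dstrip d)) (hκK : ∀ z ∈ Dstrip d, ‖κb z‖ ≤ K)
    (hκ : ∀ z ∈ Dstrip d, ∀ w ∈ Dstrip d, ‖κb w - κ z w‖ ≤ L * Real.exp (α * -z.re))
    {ζ : ℂ} (hζ : ζ ∈ Dstrip d) (hx : 0 ≤ ζ.re) :
    ‖U ζ - (gb + ∫ t : ℝ, κb t * U t * q t)‖
      ≤ (L + L * Q * B + K * B * Q) * Real.exp (α * -ζ.re) := by
  have hB : 0 ≤ B := (norm_nonneg _).trans (hUb ζ hζ)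
  have hE := Real.exp_pos (α * -ζ.re)
  have hH := h.stripDecay_integrand hκd hκK hUd hUb
  have h1 := hH.norm_ray_sub_le hd hζ hx
  have h1' : K * B * Q * Real.exp (-ζ.re) ≤ K * B * Q * Real.exp (α * -ζ.re) := by
    refine mul_le_mul_of_nonneg_left (Real.exp_le_exp.2 (by nlinarith))
      (mul_nonneg (mul_nonneg h.nonneg_K hB) h.nonneg_Q)
  have h2 : ‖volt κ q U ζ - ∫ s in Iic (0 : ℝ), κb (ζ + s) * U (ζ + s) * q (ζ + s)‖
      ≤ L * Q * B * Real.exp (α * -ζ.re) := by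
    have hi1 := h.integrable (f := U) (M := B) hζ (hUd.continuousOn.comp_continuous (by fun_prop)
      fun s => add_real_mem_Dstrip hζ s) fun s => hUb _ (add_real_mem_Dstrip hζ s)
    have hi2 := hH.integrable_shift hζ
    rw [volt, ← integral_sub hi1.integrableOn hi2.integrableOn]
    obtain ⟨hi, hv⟩ := integral_sig_pow 0 ζ.re
    have h3 : ∫ s in Iic (0 : ℝ), (L * Real.exp (α * -ζ.re) * Q * B)
        * (sig (ζ.re + s) ^ 0 * dsig (ζ.re + s)) ≤ L * Q * B * Real.exp (α * -ζ.re) := by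
      rw [integral_const_mul, hv]
      have h4 := sig_le_one ζ.re
      have h5 : 0 ≤ L * Real.exp (α * -ζ.re) * Q * B :=
        mul_nonneg (mul_nonneg (mul_nonneg hL hE.le) h.nonneg_Q) hB
      calc _ ≤ L * Real.exp (α * -ζ.re) * Q * B * 1 :=
            mul_le_mul_of_nonneg_left (by simpa using h4) h5
        _ = _ := by ring
    refine (norm_integral_le_of_norm_le (hi.const_mul _) (Eventually.of_forall fun s => ?_)).trans h3
    have hs := add_real_mem_Dstrip hζ s
    have h4 := hκ ζ hζ _ hs
    have h5 := h.weight_bound _ hs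
    have h6 := hUb _ hs
    rw [Complex.add_re, Complex.ofReal_re] at h5
    have h7 : κ ζ (ζ + s) * q (ζ + s) * U (ζ + s) - κb (ζ + s) * U (ζ + s) * q (ζ + s)
        = -((κb (ζ + s) - κ ζ (ζ + s)) * q (ζ + s) * U (ζ + s)) := by ring
    rw [h7, norm_neg, norm_mul, norm_mul, pow_zero, one_mul]
    calc _ ≤ (L * Real.exp (α * -ζ.re)) * (Q * dsig (ζ.re + s)) * B :=
          mul_le_mul (mul_le_mul h4 h5 (norm_nonneg _) (mul_nonneg hL hE.le)) h6 (norm_nonneg _)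
            (mul_nonneg (mul_nonneg hL hE.le) (mul_nonneg h.nonneg_Q (dsig_nonneg _)))
      _ = _ := by ring
  have h3 := hG ζ hζ
  rw [norm_sub_rev] at h3
  have hsplit : U ζ - (gb + ∫ t : ℝ, κb t * U t * q t) = (G ζ - gb)
      + (volt κ q U ζ - ∫ s in Iic (0 : ℝ), κb (ζ + s) * U (ζ + s) * q (ζ + s))
      + ((∫ s in Iic (0 : ℝ), κb (ζ + s) * U (ζ + s) * q (ζ + s))
        - ∫ t : ℝ, κb t * U t * q t) := by
    rw [hU ζ hζ]; ring
  rw [hsplit, add_mul, add_mul]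
  refine (norm_add_le _ _).trans (add_le_add ((norm_add_le _ _).trans (add_le_add h3 h2))
    (h1.trans h1'))

/-- Subtracting the interpolant of the limits at both ends leaves a function decaying like
`exp (-α |x|)`. -/
theorem stripDecay_remainder {ua ub : ℂ} {C : ℝ} (hd : 0 < d) (hdpi : d < Real.pi) (hα1 : α ≤ 1)
    (hUd : DifferentiableOn ℂ U (Dstrip d))
    (hl : ∀ ζ ∈ Dstrip d, ζ.re ≤ 0 → ‖U ζ - ua‖ ≤ C * Real.exp (α * ζ.re))
    (hr : ∀ ζ ∈ Dstrip d, 0 ≤ ζ.re → ‖U ζ - ub‖ ≤ C * Real.exp (α * -ζ.re)) :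
    StripDecay (fun ζ => U ζ - ua * (1 / (1 + Complex.exp ζ))
      - ub * (Complex.exp ζ / (1 + Complex.exp ζ))) d (C + ‖ua - ub‖ / kap d) α where
  diff := by
    refine (hUd.sub (DifferentiableOn.const_mul ?_ ua)).sub
      ((differentiableOn_sigC hd hdpi).const_mul ub)
    exact fun ζ hζ => ((differentiableAt_const _).div (Complex.differentiableAt_exp.const_add 1)
      (one_add_exp_ne hd hdpi hζ)).differentiableWithinAt
  bound ζ hζ := by
    have hk := kap_pos hd hdpi
    have hne := one_add_exp_ne hd hdpi hζ
    have h0 : (1 : ℂ) / (1 + Complex.exp ζ) + Complex.exp ζ / (1 + Complex.exp ζ) = 1 := by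
      rw [← add_div, div_self hne]
    have hD := norm_nonneg (ua - ub)
    rcases le_total ζ.re 0 with hx | hx
    · have h1 : U ζ - ua * (1 / (1 + Complex.exp ζ)) - ub * (Complex.exp ζ / (1 + Complex.exp ζ))
          = (U ζ - ua) + (ua - ub) * (Complex.exp ζ / (1 + Complex.exp ζ)) := by
        linear_combination (-ua) * h0
      rw [h1, abs_of_nonpos hx, show -α * -ζ.re = α * ζ.re by ring, add_mul]
      refine (norm_add_le _ _).trans (add_le_add (hl ζ hζ hx) ?_)
      rw [norm_mul, div_mul_eq_mul_div, mul_div_assoc]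
      refine mul_le_mul_of_nonneg_left ((norm_sigC_le hd hdpi hζ).trans ?_) hD
      exact div_le_div_of_nonneg_right (sig_le_exp_mul hα1 hx) hk.le
    · have h1 : U ζ - ua * (1 / (1 + Complex.exp ζ)) - ub * (Complex.exp ζ / (1 + Complex.exp ζ))
          = (U ζ - ub) + (ub - ua) * (1 / (1 + Complex.exp ζ)) := by
        linear_combination (-ub) * h0
      rw [h1, abs_of_nonneg hx, show -α * ζ.re = α * -ζ.re by ring, add_mul, norm_sub_rev ua]
      refine (norm_add_le _ _).trans (add_le_add (hr ζ hζ hx) ?_)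
      rw [norm_mul, div_mul_eq_mul_div, mul_div_assoc]
      refine mul_le_mul_of_nonneg_left ((norm_inv_le hd hdpi hζ).trans ?_) (norm_nonneg _)
      exact div_le_div_of_nonneg_right (sig_le_exp_mul hα1 (by linarith)) hk.le

end decay

end

/-- convergence of the Rashidinia–Zarebnia SE-Sinc-collocation method. -/
theorem RZ_Sinc_collocation_convergence
    (a b α d : ℝ) (hab : a < b) (hα : 0 < α) (hα1 : α ≤ 1)
    (hd : 0 < d) (hdpi : d < Real.pi)
    (k : ℂ → ℂ → ℂ) (g : ℂ → ℂ) (u : ℝ → ℂ)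
    (hg_an : DifferentiableOn ℂ g (DSE a b d))
    (hg_bd : ∃ M : ℝ, ∀ z ∈ DSE a b d, ‖g z‖ ≤ M)
    (hk_an1 : ∀ w ∈ DSE a b d ∪ ((fun x : ℝ => (x : ℂ)) '' Set.Icc a b),
      DifferentiableOn ℂ (fun z => k z w) (DSE a b d))
    (hk_bd1 : ∀ w ∈ DSE a b d ∪ ((fun x : ℝ => (x : ℂ)) '' Set.Icc a b),
      ∃ M : ℝ, ∀ z ∈ DSE a b d, ‖k z w‖ ≤ M)
    (hk_an2 : ∀ z ∈ DSE a b d ∪ ((fun x : ℝ => (x : ℂ)) '' Set.Icc a b),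
      DifferentiableOn ℂ (fun w => k z w) (DSE a b d))
    (hk_bd2 : ∀ z ∈ DSE a b d ∪ ((fun x : ℝ => (x : ℂ)) '' Set.Icc a b),
      ∃ M : ℝ, ∀ w ∈ DSE a b d, ‖k z w‖ ≤ M)
    (hg_cont : ContinuousOn (fun t : ℝ => g (t : ℂ)) (Set.Icc a b))
    (hk_cont1 : ∀ s ∈ Set.Icc a b, ContinuousOn (fun t : ℝ => k (t : ℂ) ((s : ℝ) : ℂ)) (Set.Icc a b))
    (hk_cont2 : ∀ t ∈ Set.Icc a b, ContinuousOn (fun s : ℝ => k ((t : ℝ) : ℂ) (s : ℂ)) (Set.Icc a b))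
    (hHolder : ∃ L : ℝ, ∀ z ∈ DSE a b d,
      ‖g z - g (a : ℂ)‖ ≤ L * ‖z - (a : ℂ)‖ ^ α ∧
      ‖g (b : ℂ) - g z‖ ≤ L * ‖(b : ℂ) - z‖ ^ α ∧
      ∀ w ∈ DSE a b d,
        ‖k z w - k (a : ℂ) w‖ ≤ L * ‖z - (a : ℂ)‖ ^ α ∧
        ‖k (b : ℂ) w - k z w‖ ≤ L * ‖(b : ℂ) - z‖ ^ α)
    (hu_cont : ContinuousOn u (Set.Icc a b))
    (hu_eq : ∀ t ∈ Set.Icc a b, u t = g (t : ℂ) + ∫ s in a..t, k (t : ℂ) (s : ℂ) * u s) :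
    ∃ N₀ : ℕ, 0 < N₀ ∧
      (∀ N : ℕ, N₀ ≤ N →
        IsUnit (EnRZ a b (hstepSE α d N) N
          - VnRZ a b (hstepSE α d N) N (fun t s => k (t : ℂ) (s : ℂ)))) ∧
      ∃ C : ℝ, ∀ N : ℕ, N₀ ≤ N → ∀ c : Fin (2*N+1) → ℂ,
        Matrix.mulVec (EnRZ a b (hstepSE α d N) N
            - VnRZ a b (hstepSE α d N) N (fun t s => k (t : ℂ) (s : ℂ))) c
          = gnSE a b (hstepSE α d N) N (fun t => g (t : ℂ)) →
        ∀ t ∈ Set.Icc a b,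
          ‖u t - wRZf a b (hstepSE α d N) N c t‖
            ≤ C * Real.sqrt N * Real.exp (-Real.sqrt (Real.pi * d * α * N)) := by
  obtain ⟨Mg, hMg⟩ := hg_bd
  obtain ⟨L, hL⟩ := hHolder
  have hkap := kap_pos hd hdpi
  have hba : 0 < b - a := sub_pos.2 hab
  have hamem : a ∈ Set.Icc a b := ⟨le_rfl, hab.le⟩
  have hbmem : b ∈ Set.Icc a b := ⟨hab.le, le_rfl⟩
  have hmaps : Set.MapsTo (psiSEC a b) (Dstrip d) (DSE a b d) := fun z hz => ⟨z, hz, rfl⟩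
  have hreal : ∀ t ∈ Set.Ioo a b, (t : ℂ) ∈ DSE a b d := fun t ht =>
    ⟨(phiSE a b t : ℂ), real_mem_Dstrip hd _, by rw [psiSEC_ofReal, psiSE_phiSE ht]⟩
  -- `R` bounds the distances `‖ψ ζ - a‖` and `‖b - ψ ζ‖`; `L'` is the Hölder constant in `ζ`.
  set R : ℝ := (b - a) / kap d with hR
  have hRpos : 0 < R := div_pos hba hkap
  set L' : ℝ := max L 0 * R ^ α with hL'
  have hRα : 0 < R ^ α := Real.rpow_pos_of_pos hRpos α
  have hL'0 : 0 ≤ L' := mul_nonneg (le_max_right _ _) hRα.le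
  have hholA : ∀ ζ ∈ Dstrip d, ∀ y : ℝ, y ≤ L * ‖psiSEC a b ζ - a‖ ^ α →
      y ≤ L' * Real.exp (α * ζ.re) := by
    intro ζ hζ y hy
    have h1 : ‖psiSEC a b ζ - a‖ ≤ R * Real.exp ζ.re :=
      (norm_psiSEC_sub_a_le hab hd hdpi hζ).trans
        (mul_le_mul_of_nonneg_left (sig_le_exp _) hRpos.le)
    have h2 := rpow_le_of_le_mul_exp hα (norm_nonneg _) hRpos.le h1
    calc y ≤ L * ‖psiSEC a b ζ - a‖ ^ α := hy
      _ ≤ max L 0 * ‖psiSEC a b ζ - a‖ ^ α :=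
        mul_le_mul_of_nonneg_right (le_max_left _ _) (Real.rpow_nonneg (norm_nonneg _) _)
      _ ≤ max L 0 * (R ^ α * Real.exp (α * ζ.re)) :=
        mul_le_mul_of_nonneg_left h2 (le_max_right _ _)
      _ = _ := by rw [hL', mul_assoc]
  have hholB : ∀ ζ ∈ Dstrip d, ∀ y : ℝ, y ≤ L * ‖b - psiSEC a b ζ‖ ^ α →
      y ≤ L' * Real.exp (α * -ζ.re) := by
    intro ζ hζ y hy
    have h1 : ‖b - psiSEC a b ζ‖ ≤ R * Real.exp (-ζ.re) :=
      (norm_b_sub_psiSEC_le hab hd hdpi hζ).trans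
        (mul_le_mul_of_nonneg_left (sig_le_exp _) hRpos.le)
    have h2 := rpow_le_of_le_mul_exp hα (norm_nonneg _) hRpos.le h1
    calc y ≤ L * ‖b - psiSEC a b ζ‖ ^ α := hy
      _ ≤ max L 0 * ‖b - psiSEC a b ζ‖ ^ α :=
        mul_le_mul_of_nonneg_right (le_max_left _ _) (Real.rpow_nonneg (norm_nonneg _) _)
      _ ≤ max L 0 * (R ^ α * Real.exp (α * -ζ.re)) :=
        mul_le_mul_of_nonneg_left h2 (le_max_right _ _)
      _ = _ := by rw [hL', mul_assoc]
  -- A joint bound for the kernel: it is bounded for the first argument `a`, and the Hölder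
  -- condition is uniform in the second argument.
  obtain ⟨Ma, hMa⟩ := hk_bd2 (a : ℂ) (Or.inr ⟨a, hamem, rfl⟩)
  obtain ⟨Mb, hMb⟩ := hk_bd2 (b : ℂ) (Or.inr ⟨b, hbmem, rfl⟩)
  set K : ℝ := max (max Ma Mb) 0 + L' with hK
  have hK0 : 0 ≤ K := add_nonneg (le_max_right _ _) hL'0
  have hKa : Ma + L' ≤ K := add_le_add ((le_max_left _ _).trans (le_max_left _ _)) le_rfl
  have hKb : Mb ≤ K := by
    have : Mb ≤ max (max Ma Mb) 0 := (le_max_right _ _).trans (le_max_left _ _)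
    linarith
  have hkK : ∀ z ∈ DSE a b d, ∀ w ∈ DSE a b d, ‖k z w‖ ≤ K := by
    rintro _ ⟨ζ, hζ, rfl⟩ w hw
    have h1 := ((hL _ (hmaps hζ)).2.2 w hw).1
    have h2 : ‖psiSEC a b ζ - a‖ ≤ R * Real.exp 0 := by
      refine (norm_psiSEC_sub_a_le hab hd hdpi hζ).trans ?_
      rw [Real.exp_zero]
      exact mul_le_mul_of_nonneg_left (sig_le_one _) hRpos.le
    have h3 := rpow_le_of_le_mul_exp hα (norm_nonneg _) hRpos.le h2
    rw [mul_zero, Real.exp_zero, mul_one] at h3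
    have h4 : L * ‖psiSEC a b ζ - a‖ ^ α ≤ L' :=
      (mul_le_mul_of_nonneg_right (le_max_left L 0) (Real.rpow_nonneg (norm_nonneg _) _)).trans
        (mul_le_mul_of_nonneg_left h3 (le_max_right _ _))
    have h5 := norm_le_norm_add_norm_sub' (k (psiSEC a b ζ) w) (k a w)
    linarith [hMa w hw]
  have hΨd := differentiableOn_psiSEC (a := a) (b := b) hd hdpi
  have hV : VoltData (fun z w => k (psiSEC a b z) (psiSEC a b w)) (dpsi a b) d K
      ((b - a) / kap d ^ 2) :=
    { diff_left := fun w hw => (hk_an1 _ (Or.inl (hmaps hw))).comp hΨd hmaps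
      diff_right := fun z hz => (hk_an2 _ (Or.inl (hmaps hz))).comp hΨd hmaps
      bound := fun z hz w hw => hkK _ (hmaps hz) _ (hmaps hw)
      weight_diff := differentiableOn_dpsi hd hdpi
      weight_bound := fun z hz => norm_dpsi_le hab hd hdpi hz
      nonneg_K := hK0
      nonneg_Q := by positivity }
  obtain ⟨U, B, hUd, hUb, hU⟩ := hV.exists_solution (G := fun z => g (psiSEC a b z))
    (hg_an.comp hΨd hmaps) fun z hz => hMg _ (hmaps hz)
  -- The given solution, transported to the real line, solves the same equation.
  have hu_line : ∀ x : ℝ, u (psiSE a b x) = g (psiSE a b x)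
      + ∫ y in Set.Iic x, k (psiSE a b x) (psiSE a b y) * u (psiSE a b y)
        * ((deriv (psiSE a b) y : ℝ) : ℂ) := by
    intro x
    rw [hu_eq _ (Set.Ioo_subset_Icc_self (psiSE_mem hab x)), intervalIntegral_psiSE hab]
  obtain ⟨Bu, hBu⟩ := isCompact_Icc.exists_bound_of_continuousOn hu_cont
  have hψc : Continuous (psiSE a b) :=
    continuous_iff_continuousAt.2 fun x => (hasDerivAt_psiSE a b x).continuousAt
  have hUu : ∀ x : ℝ, U x = u (psiSE a b x) := by
    have := hV.unique_real hd (f₁ := U) (f₂ := fun z => u (psiSE a b z.re))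
      (G := fun z => g (psiSEC a b z)) (B := max B Bu)
      (hUd.continuousOn.comp_continuous (by fun_prop) fun x => real_mem_Dstrip hd x)
      (by
        simp only [Complex.ofReal_re]
        exact hu_cont.comp_continuous hψc
          fun x => Set.Ioo_subset_Icc_self (psiSE_mem hab x))
      (fun x => (hUb _ (real_mem_Dstrip hd x)).trans (le_max_left _ _))
      (fun x => (hBu _ (Set.Ioo_subset_Icc_self (psiSE_mem hab _))).trans (le_max_right _ _))
      (fun x => hU _ (real_mem_Dstrip hd x)) ?_
    · intro x
      simpa using this x
    · intro x
      simp only [Complex.ofReal_re, psiSEC_ofReal, volt]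
      rw [hu_line x, ← integral_Iic_translate]
      congr 1
      refine MeasureTheory.integral_congr_ae (Filter.Eventually.of_forall fun s => ?_)
      simp only [← Complex.ofReal_add, psiSEC_ofReal, dpsi_ofReal, Complex.ofReal_re]
      ring
  have hκbd : DifferentiableOn ℂ (fun w => k b (psiSEC a b w)) (Dstrip d) :=
    (hk_an2 _ (Or.inr ⟨b, hbmem, rfl⟩)).comp hΨd hmaps
  have hua : u a = g a := by
    rw [hu_eq a hamem, intervalIntegral.integral_same, add_zero]
  have hub : u b = g b + ∫ t : ℝ, k b (psiSEC a b t) * U t * dpsi a b t := by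
    rw [hu_eq b hbmem, intervalIntegral_psiSE_univ hab]
    simp only [psiSEC_ofReal, dpsi_ofReal, hUu]
  have hB0 : 0 ≤ B := (norm_nonneg _).trans (hUb _ (real_mem_Dstrip hd 0))
  have hQ0 := hV.nonneg_Q
  have hF := stripDecay_remainder (U := U) (ua := u a) (ub := u b) (α := α)
    (C := L' + L' * ((b - a) / kap d ^ 2) * B + K * B * ((b - a) / kap d ^ 2)) hd hdpi hα1 hUd
    (fun ζ hζ hx => by
      rw [hua]
      refine (hV.norm_solution_sub_left hα1 hUb hU
        (fun z hz => hholA z hz _ (hL _ (hmaps hz)).1) hζ hx).trans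
        (mul_le_mul_of_nonneg_right ?_ (Real.exp_pos _).le)
      have : 0 ≤ L' * ((b - a) / kap d ^ 2) * B := mul_nonneg (mul_nonneg hL'0 hQ0) hB0
      linarith)
    (fun ζ hζ hx => by
      rw [hub]
      exact hV.norm_solution_sub_right hd hα1 hL'0 hUd hUb hU
        (fun z hz => hholB z hz _ (hL _ (hmaps hz)).2.1) hκbd
        (fun z hz => (hMb _ (hmaps hz)).trans hKb)
        (fun z hz w hw => hholB z hz _ ((hL _ (hmaps hz)).2.2 _ (hmaps hw)).2) hζ hx)
  refine convergence_of_strip (k := fun t s => k (t : ℂ) (s : ℂ)) (g := fun t => g (t : ℂ))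
    (H := fun t ζ => k t (psiSEC a b ζ) * U ζ * dpsi a b ζ) (B := K * B * ((b - a) / kap d ^ 2)) hab hα hα1 hd hK0
    (fun t ht s hs => hkK _ (hreal t ht) _ (hreal s hs)) hF ?_ ?_ ?_ ?_
  · intro x
    rw [hUu, omA_psiSE hab, omB_psiSE hab]
    push_cast
    rfl
  · intro t ht
    exact hV.stripDecay_integrand ((hk_an2 _ (Or.inl (hreal t ht))).comp hΨd hmaps)
      (fun z hz => hkK _ (hreal t ht) _ (hmaps hz)) hUd hUb
  · intro t _ x
    simp only [psiSEC_ofReal, dpsi_ofReal, hUu]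
  · intro x
    simp only [psiSEC_ofReal, dpsi_ofReal, hUu]
    exact hu_line x

end

end SincVolterra
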